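/- arXiv:1404.4786 — 4 statements merged into one kernel-verified Lean document; each statement's English description precedes it below -/
import Mathlib

section
/- For every pair of nontrivial words w₁ ∈ F_{d₁} and w₂ ∈ F_{d₂}, there exists a natural number N such that for every integer n ≥ N, every element of the real special orthogonal group SO(n) is a product g₁g₂ with g₁ ∈ w₁(SO(n)) and g₂ ∈ w₂(SO(n)); that is, SO(n) = w₁(SO(n))·w₂(SO(n)). -/
/-- The set of `w`-values in the subgroup of `G` given by the set `S`:
elements obtained by evaluating the word `w` at a `d`-tuple of elements of `S`. -/
def wordValuesIn {d : ℕ} {G : Type*} [Group G] (w : FreeGroup (Fin d)) (S : Set G) : Set G :=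
  {x | ∃ g : Fin d → G, (∀ i, g i ∈ S) ∧ FreeGroup.lift g w = x}

/-- `SO(n)`, the real special orthogonal group, as the subset of the orthogonal group
consisting of matrices of determinant 1. -/
def SO (n : ℕ) : Set (Matrix.orthogonalGroup (Fin n) ℝ) :=
  {M | (M : Matrix (Fin n) (Fin n) ℝ).det = 1}

set_option linter.all false

section PartA
open Matrix Polynomial

/-- direction vectors -/
noncomputable def vv (a : ℝ) (b : Bool) : Fin 2 → ℂ :=
  cond b ![(Real.cos a : ℂ), (Real.sin a : ℂ)] ![(-Real.sin a : ℂ), (Real.cos a : ℂ)]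

noncomputable def PP (a : ℝ) (b : Bool) : Matrix (Fin 2) (Fin 2) ℂ := vecMulVec (vv a b) (vv a b)

noncomputable def BB (a : ℝ) (t : ℝ) (b : Bool) : Matrix (Fin 2) (Fin 2) ℂ :=
  Complex.exp (t * Complex.I) • PP a b + Complex.exp (-t * Complex.I) • PP a (!b)

def IsSU (A : Matrix (Fin 2) (Fin 2) ℂ) : Prop := A * Aᴴ = 1 ∧ A.det = 1

lemma cs (a : ℝ) : (Real.cos a : ℂ) * Real.cos a + (Real.sin a : ℂ) * Real.sin a = 1 := by
  have := Real.cos_sq_add_sin_sq a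
  rw [sq, sq] at this
  exact_mod_cast this

lemma PP_add (a : ℝ) (b : Bool) : PP a b + PP a (!b) = 1 := by
  have := cs a
  ext i j
  cases b <;> fin_cases i <;> fin_cases j <;>
    simp [PP, vv, vecMulVec_apply, Matrix.add_apply, -Complex.ofReal_cos, -Complex.ofReal_sin] <;>
    first | linear_combination this | ring

lemma PP_mul (a : ℝ) (b : Bool) : PP a b * PP a (!b) = 0 := by
  ext i j
  cases b <;> fin_cases i <;> fin_cases j <;>
    simp [PP, vv, vecMulVec_apply, Matrix.mul_apply, -Complex.ofReal_cos, -Complex.ofReal_sin] <;> ring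

lemma PP_mul_self (a : ℝ) (b : Bool) : PP a b * PP a b = PP a b := by
  have h : PP a b * (PP a b + PP a (!b)) = PP a b := by rw [PP_add, mul_one]
  rwa [mul_add, PP_mul, add_zero] at h

lemma PP_mul' (a : ℝ) (b : Bool) : PP a (!b) * PP a b = 0 := by
  simpa using PP_mul a (!b)

lemma PP_star (a : ℝ) (b : Bool) : (PP a b)ᴴ = PP a b := by
  ext i j
  cases b <;> fin_cases i <;> fin_cases j <;>
    simp [PP, vv, vecMulVec_apply, ← Complex.ofReal_cos, ← Complex.ofReal_sin, -Complex.ofReal_cos, -Complex.ofReal_sin] <;> ring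

lemma BB_mul (a t t' : ℝ) (b : Bool) : BB a t b * BB a t' b = BB a (t + t') b := by
  simp only [BB, mul_add, add_mul, smul_mul_smul_comm, PP_mul, PP_mul', PP_mul_self, smul_zero,
    ← Complex.exp_add, add_zero, zero_add]
  push_cast
  congr 3 <;> ring

lemma BB_zero (a : ℝ) (b : Bool) : BB a 0 b = 1 := by
  simp [BB, PP_add]

lemma BB_star (a t : ℝ) (b : Bool) : (BB a t b)ᴴ = BB a t (!b) := by
  simp only [BB, conjTranspose_add, conjTranspose_smul, PP_star, Bool.not_not, Complex.star_def,
    ← Complex.exp_conj, map_mul, Complex.conj_ofReal, Complex.conj_I, map_neg]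
  rw [add_comm]
  congr 3 <;> ring_nf

lemma BB_neg (a t : ℝ) (b : Bool) : BB a t (!b) = BB a (-t) b := by
  simp only [BB, Bool.not_not]
  rw [add_comm]; push_cast; simp

lemma BB_det (a t : ℝ) (b : Bool) : (BB a t b).det = 1 := by
  have h := cs a
  have h2 : Complex.exp (t * Complex.I) * Complex.exp (-t * Complex.I) = 1 := by
    rw [← Complex.exp_add]; simp
  rw [det_fin_two]
  unfold BB
  generalize Complex.exp (t * Complex.I) = x at *
  generalize Complex.exp (-t * Complex.I) = y at *
  unfold PP vv
  generalize (Real.cos a : ℂ) = p at *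
  generalize (Real.sin a : ℂ) = q at *
  have h3 : (p*p+q*q)^2 * (x * y) = 1 := by rw [h, h2]; ring
  rw [← h3]
  cases b <;> simp <;> ring

lemma BB_SU (a t : ℝ) (b : Bool) : IsSU (BB a t b) := by
  refine ⟨?_, BB_det _ _ _⟩
  rw [BB_star, BB_neg, BB_mul]; simp [BB_zero]

lemma IsSU.mul {A B} (hA : IsSU A) (hB : IsSU B) : IsSU (A * B) := by
  refine ⟨?_, by rw [det_mul, hA.2, hB.2, one_mul]⟩
  rw [conjTranspose_mul, Matrix.mul_assoc, ← Matrix.mul_assoc B, hB.1, Matrix.one_mul, hA.1]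

lemma IsSU.one : IsSU 1 := by simp [IsSU]

lemma IsSU.star {A} (hA : IsSU A) : IsSU Aᴴ := by
  refine ⟨?_, by rw [det_conjTranspose, hA.2, star_one]⟩
  rw [conjTranspose_conjTranspose]; exact mul_eq_one_comm.mp hA.1

lemma IsSU.list {l : List (Matrix (Fin 2) (Fin 2) ℂ)} (h : ∀ A ∈ l, IsSU A) : IsSU l.prod := by
  induction l with
  | nil => exact IsSU.one
  | cons a l ih =>
    rw [List.prod_cons]
    exact (h a (by simp)).mul (ih fun A hA => h A (by simp [hA]))

/-- explicit form -/
lemma IsSU.form {A} (hA : IsSU A) : A 1 1 = starRingEnd ℂ (A 0 0) ∧ A 0 1 = - starRingEnd ℂ (A 1 0) := by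
  have h1 : Aᴴ = A.adjugate := by
    have : A * A.adjugate = 1 := by rw [mul_adjugate, hA.2, one_smul]
    calc Aᴴ = Aᴴ * (A * A.adjugate) := by rw [this, mul_one]
      _ = A.adjugate := by rw [← Matrix.mul_assoc, mul_eq_one_comm.mp hA.1, Matrix.one_mul]
  rw [adjugate_fin_two] at h1
  have h00 := congrFun (congrFun h1 0) 0
  have h01 := congrFun (congrFun h1 0) 1
  simp [conjTranspose_apply] at h00 h01
  exact ⟨h00.symm, by rw [h01]; simp⟩

lemma IsSU.norm {A} (hA : IsSU A) : Complex.normSq (A 0 0) + Complex.normSq (A 1 0) = 1 := by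
  have h := hA.2
  obtain ⟨h1, h2⟩ := hA.form
  rw [det_fin_two, h1, h2] at h
  have : ((Complex.normSq (A 0 0) + Complex.normSq (A 1 0) : ℝ) : ℂ) = 1 := by
    push_cast [Complex.normSq_eq_conj_mul_self]
    linear_combination h
  exact_mod_cast this

lemma IsSU.trace {A} (hA : IsSU A) : A.trace.re = 2 * (A 0 0).re := by
  rw [trace_fin_two, hA.form.1]; simp; ring

lemma IsSU.eq_one {A} (hA : IsSU A) (h : 2 ≤ A.trace.re) : A = 1 := by
  rw [hA.trace] at h
  have hn := hA.norm
  rw [Complex.normSq_apply, Complex.normSq_apply] at hn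
  obtain ⟨f1, f2⟩ := hA.form
  have hr : (A 0 0).re = 1 := by nlinarith [mul_self_nonneg (A 0 0).im, mul_self_nonneg (A 1 0).im, mul_self_nonneg (A 1 0).re]
  have hi : (A 0 0).im = 0 := by nlinarith [mul_self_nonneg (A 0 0).im, mul_self_nonneg (A 1 0).im, mul_self_nonneg (A 1 0).re]
  have hbr : (A 1 0).re = 0 := by nlinarith [mul_self_nonneg (A 0 0).im, mul_self_nonneg (A 1 0).im, mul_self_nonneg (A 1 0).re]
  have hbi : (A 1 0).im = 0 := by nlinarith [mul_self_nonneg (A 0 0).im, mul_self_nonneg (A 1 0).im, mul_self_nonneg (A 1 0).re]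
  have e0 : A 0 0 = 1 := Complex.ext hr hi
  have e1 : A 1 0 = 0 := Complex.ext hbr hbi
  ext i j
  fin_cases i <;> fin_cases j <;> simp [f1, f2, e0, e1]

section word
variable {d : ℕ}

noncomputable def ang (i : Fin d) : ℝ := (i : ℝ) / (d + 1)

lemma dot_ne (x y : Fin d × Bool) (h : x.1 = y.1 → x.2 = y.2) :
    vv (ang x.1) x.2 ⬝ᵥ vv (ang y.1) y.2 ≠ 0 := by
  obtain ⟨i, b⟩ := x
  obtain ⟨j, c⟩ := y
  simp only at h ⊢
  have hd : (0 : ℝ) < d + 1 := by positivity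
  have hi : 0 ≤ ang i ∧ ang i < 1 := by
    refine ⟨by unfold ang; positivity, ?_⟩
    unfold ang; rw [div_lt_one hd]
    have : (i : ℝ) < d := by exact_mod_cast i.2
    linarith
  have hj : 0 ≤ ang j ∧ ang j < 1 := by
    refine ⟨by unfold ang; positivity, ?_⟩
    unfold ang; rw [div_lt_one hd]
    have : (j : ℝ) < d := by exact_mod_cast j.2
    linarith
  have hpi := Real.pi_gt_three
  have hcos : Real.cos (ang i - ang j) ≠ 0 := by
    apply ne_of_gt
    apply Real.cos_pos_of_mem_Ioo
    constructor <;> linarith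
  have hsin : i ≠ j → Real.sin (ang i - ang j) ≠ 0 := by
    intro hij h0
    rw [Real.sin_eq_zero_iff_of_lt_of_lt (by linarith) (by linarith)] at h0
    apply hij
    have : (i : ℝ) / (d+1) = (j : ℝ) / (d+1) := by unfold ang at h0; linarith
    rw [div_left_inj' hd.ne'] at this
    exact Fin.ext (by exact_mod_cast this)
  rw [Real.cos_sub] at hcos
  rw [Real.sin_sub] at hsin
  intro h0
  rcases eq_or_ne i j with rfl | hij
  · obtain rfl := h rfl
    apply hcos
    cases b <;> simp [vv, dotProduct, -Complex.ofReal_cos, -Complex.ofReal_sin] at h0 <;> norm_cast at h0 <;> linarith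
  · have hsin := hsin hij
    cases b <;> cases c <;> simp [vv, dotProduct, -Complex.ofReal_cos, -Complex.ofReal_sin] at h0 <;> norm_cast at h0
    · apply hcos; linarith
    · apply hsin; push_cast at h0; linarith
    · apply hsin; push_cast at h0; linarith

lemma vv_ne (a b) : vv a b ≠ 0 := by
  intro h
  have := PP_mul_self a b
  have h1 := cs a
  have e0 := congrFun h 0
  have e1 := congrFun h 1
  cases b <;> simp [vv, -Complex.ofReal_cos, -Complex.ofReal_sin] at e0 e1 <;> simp [e0, e1] at h1

lemma PP_prod (x : Fin d × Bool) (L : List (Fin d × Bool)) (h : FreeGroup.IsReduced (x :: L)) :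
    ∃ y : Fin 2 → ℂ, y ≠ 0 ∧
      ((x :: L).map fun x => PP (ang x.1) x.2).prod = vecMulVec (vv (ang x.1) x.2) y := by
  induction L generalizing x with
  | nil => exact ⟨vv (ang x.1) x.2, vv_ne _ _, by simp [PP]⟩
  | cons x' L ih =>
    rw [FreeGroup.isReduced_cons_cons] at h
    obtain ⟨y, hy, e⟩ := ih x' h.2
    refine ⟨(vv (ang x.1) x.2 ⬝ᵥ vv (ang x'.1) x'.2) • y, smul_ne_zero (dot_ne _ _ h.1) hy, ?_⟩
    rw [List.map_cons, List.prod_cons, e, PP, vecMulVec_mul_vecMulVec]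

lemma PP_prod_ne (L : List (Fin d × Bool)) (h : FreeGroup.IsReduced L) (hL : L ≠ []) :
    (L.map fun x => PP (ang x.1) x.2).prod ≠ 0 := by
  cases L with
  | nil => exact absurd rfl hL
  | cons x L =>
    obtain ⟨y, hy, e⟩ := PP_prod x L h
    rw [e]
    intro h0
    rw [vecMulVec_eq_zero] at h0
    exact h0.elim (vv_ne _ _) hy

lemma poly_ex (L : List (Fin d × Bool)) : ∃ q : Matrix (Fin 2) (Fin 2) ℂ[X],
    (∀ i j, (q i j).natDegree ≤ 2 * L.length ∧
      (q i j).coeff (2 * L.length) = (L.map fun x => PP (ang x.1) x.2).prod i j) ∧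
    ∀ (t : ℝ) i j, Complex.exp (t * Complex.I) ^ L.length *
      (L.map fun x => BB (ang x.1) t x.2).prod i j = (q i j).eval (Complex.exp (t * Complex.I)) := by
  induction L with
  | nil =>
    refine ⟨1, ?_, ?_⟩
    · intro i j; fin_cases i <;> fin_cases j <;> simp
    · intro t i j; fin_cases i <;> fin_cases j <;> simp
  | cons x L ih =>
    obtain ⟨q, h1, h2⟩ := ih
    let r : Matrix (Fin 2) (Fin 2) ℂ[X] := fun i j =>
      C (PP (ang x.1) x.2 i j) * X ^ 2 + C (PP (ang x.1) (!x.2) i j)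
    have hr : ∀ i j, (r i j).natDegree ≤ 2 := by
      intro i j; simp only [r]; compute_degree
    have hr2 : ∀ i j, (r i j).coeff 2 = PP (ang x.1) x.2 i j := by
      intro i j; simp [r, coeff_C]
    have hr3 : ∀ (t : ℝ) i j, (r i j).eval (Complex.exp (t * Complex.I)) =
        Complex.exp (t * Complex.I) * BB (ang x.1) t x.2 i j := by
      intro t i j
      have h2 : Complex.exp (t * Complex.I) * Complex.exp (-t * Complex.I) = 1 := by
        rw [← Complex.exp_add]; simp
      simp only [r, BB, eval_add, eval_mul, eval_C, eval_pow, eval_X, Matrix.add_apply, Matrix.smul_apply, smul_eq_mul]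
      linear_combination (- PP (ang x.1) (!x.2) i j) * h2
    refine ⟨r * q, ?_, ?_⟩
    · intro i j
      rw [List.length_cons, show 2 * (L.length + 1) = 2 + 2 * L.length by ring, List.map_cons, List.prod_cons,
        Matrix.mul_apply, Matrix.mul_apply]
      constructor
      · apply natDegree_sum_le_of_forall_le
        intro k _
        exact natDegree_mul_le_of_le (hr _ _) (h1 _ _).1
      · rw [finsetSum_coeff]
        refine Finset.sum_congr rfl fun k _ => ?_
        rw [coeff_mul_add_eq_of_natDegree_le (hr _ _) (h1 _ _).1, hr2, (h1 _ _).2]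
    · intro t i j
      rw [List.length_cons, List.map_cons, List.prod_cons, Matrix.mul_apply, Matrix.mul_apply, eval_finsetSum,
        Finset.mul_sum]
      refine Finset.sum_congr rfl fun k _ => ?_
      rw [eval_mul, hr3, ← h2]; ring

lemma exists_ne_one (L : List (Fin d × Bool)) (h : FreeGroup.IsReduced L) (hL : L ≠ []) :
    ∃ t : ℝ, (L.map fun x => BB (ang x.1) t x.2).prod ≠ 1 := by
  by_contra! hc
  obtain ⟨q, h1, h2⟩ := poly_ex L
  apply PP_prod_ne L h hL
  have hlen : 0 < L.length := List.length_pos_iff.mpr hL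
  have hinf : (Set.range fun t : ℝ => Complex.exp (t * Complex.I)).Infinite := by
    have : ((fun t : ℝ => Complex.exp (t * Complex.I)) '' Set.Ioo 0 1).Infinite := by
      apply Set.Infinite.image
      · intro s hs t ht hst
        have := congrArg Complex.re hst
        simp only [Complex.exp_ofReal_mul_I_re] at this
        have hpi := Real.pi_gt_three
        exact Real.injOn_cos ⟨hs.1.le, by linarith [hs.2]⟩ ⟨ht.1.le, by linarith [ht.2]⟩ this
      · exact Set.Ioo_infinite (by norm_num)
    exact this.mono (Set.image_subset_range _ _)
  ext i j
  have : q i j = X ^ L.length * C ((1 : Matrix (Fin 2) (Fin 2) ℂ) i j) := by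
    apply eq_of_infinite_eval_eq
    apply hinf.mono
    rintro _ ⟨t, rfl⟩
    have := h2 t i j
    rw [hc t] at this
    simp only [Set.mem_ofPred_eq]
    rw [← this, eval_mul, eval_pow, eval_X, eval_C]
  rw [← (h1 i j).2, this, coeff_mul_C, coeff_X_pow, if_neg (by omega)]
  simp

lemma word_trace (L : List (Fin d × Bool)) (h : FreeGroup.IsReduced L) (hL : L ≠ []) :
    ∃ φ₀ : ℝ, 0 < φ₀ ∧ ∀ φ, 0 ≤ φ → φ ≤ φ₀ → ∃ t : ℝ,
      (L.map fun x => BB (ang x.1) t x.2).prod.trace.re = 2 * Real.cos φ := by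
  obtain ⟨t₀, ht⟩ := exists_ne_one L h hL
  have hsu : ∀ t, IsSU (L.map fun x => BB (ang x.1) t x.2).prod := by
    intro t
    apply IsSU.list
    intro A hA
    rw [List.mem_map] at hA
    obtain ⟨x, _, rfl⟩ := hA
    exact BB_SU _ _ _
  set F : ℝ → ℝ := fun t => (L.map fun x => BB (ang x.1) t x.2).prod.trace.re with hF
  have hcont : Continuous F := by
    have : Continuous fun t : ℝ => (L.map fun x => BB (ang x.1) t x.2).prod := by
      apply continuous_list_prod
      intro x _
      unfold BB
      fun_prop
    exact Complex.continuous_re.comp this.matrix_trace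
  have hlt : F t₀ < 2 := by
    by_contra! hge
    exact ht ((hsu t₀).eq_one hge)
  have h0 : F 0 = 2 := by
    simp [hF, BB_zero]
  refine ⟨Real.arccos (F t₀ / 2), ?_, ?_⟩
  · rw [Real.arccos_pos]; linarith
  · intro φ hφ hle
    have hm : -1 ≤ F t₀ / 2 := by
      have := (hsu t₀).trace
      have hn := (hsu t₀).norm
      rw [Complex.normSq_apply, Complex.normSq_apply] at hn
      change _ ≤ (Matrix.trace (_ : Matrix (Fin 2) (Fin 2) ℂ)).re / 2
      rw [this]
      nlinarith [mul_self_nonneg ((L.map fun x => BB (ang x.1) t₀ x.2).prod 0 0).im, mul_self_nonneg ((L.map fun x => BB (ang x.1) t₀ x.2).prod 1 0).im, mul_self_nonneg ((L.map fun x => BB (ang x.1) t₀ x.2).prod 1 0).re]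
    have hcos : F t₀ ≤ 2 * Real.cos φ := by
      have := Real.cos_le_cos_of_nonneg_of_le_pi hφ (Real.arccos_le_pi _) hle
      rw [Real.cos_arccos hm (by linarith)] at this
      linarith
    have h2 : 2 * Real.cos φ ≤ F 0 := by rw [h0]; linarith [Real.cos_le_one φ]
    have := mem_range_of_exists_le_of_exists_ge hcont ⟨t₀, hcos⟩ ⟨0, h2⟩
    exact this
end word
end PartA

section PartB
open Matrix Polynomial

noncomputable def DD (φ : ℝ) : Matrix (Fin 2) (Fin 2) ℂ :=
  !![Complex.exp (φ * Complex.I), 0; 0, Complex.exp (-φ * Complex.I)]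

def sform (p q : ℂ) : Matrix (Fin 2) (Fin 2) ℂ := !![p, - starRingEnd ℂ q; q, starRingEnd ℂ p]

lemma sform_SU (p q : ℂ) (h : Complex.normSq p + Complex.normSq q = 1) : IsSU (sform p q) := by
  have h' : p * starRingEnd ℂ p + q * starRingEnd ℂ q = 1 := by
    rw [Complex.mul_conj, Complex.mul_conj]; exact_mod_cast h
  constructor
  · ext i j
    fin_cases i <;> fin_cases j <;> simp [sform, Matrix.mul_apply, conjTranspose_apply] <;>
      first | linear_combination h' | ring
  · simp [sform, det_fin_two]; linear_combination h'

lemma IsSU.eq_sform {A} (hA : IsSU A) : A = sform (A 0 0) (A 1 0) := by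
  obtain ⟨f1, f2⟩ := hA.form
  ext i j
  fin_cases i <;> fin_cases j <;> simp [sform, f1, f2]

lemma DD_eq (φ : ℝ) : DD φ = sform (Complex.exp (φ * Complex.I)) 0 := by
  simp [DD, sform, ← Complex.exp_conj]

lemma DD_SU (φ : ℝ) : IsSU (DD φ) := by
  rw [DD_eq]
  apply sform_SU
  rw [Complex.normSq_eq_norm_sq, Complex.norm_exp_ofReal_mul_I]; simp

lemma SU_conj {A} (hA : IsSU A) (φ : ℝ) (h : A.trace.re = 2 * Real.cos φ) :
    ∃ U, IsSU U ∧ A = U * DD φ * Uᴴ := by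
  rw [hA.trace] at h
  have hn := hA.norm
  rw [hA.eq_sform]
  generalize A 0 0 = a at *
  generalize A 1 0 = b at *
  rw [DD_eq]
  have he : Complex.normSq (Complex.exp (φ * Complex.I)) = 1 := by
    rw [Complex.normSq_eq_norm_sq, Complex.norm_exp_ofReal_mul_I]; simp
  have hre : (Complex.exp (φ * Complex.I)).re = Real.cos φ := by
    simp [Complex.exp_ofReal_mul_I_re]
  generalize Complex.exp (φ * Complex.I) = e at *
  rw [← hre] at h
  suffices ∃ U, IsSU U ∧ sform a b * U = U * sform e 0 by
    obtain ⟨U, hU, h⟩ := this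
    refine ⟨U, hU, ?_⟩
    rw [← h, Matrix.mul_assoc, hU.1, mul_one]
  by_cases hv : Complex.normSq b + Complex.normSq (a - e) = 0
  · have hb : b = 0 := by
      rw [← Complex.normSq_eq_zero]
      linarith [Complex.normSq_nonneg b, Complex.normSq_nonneg (a-e)]
    have ha : a - e = 0 := by
      rw [← Complex.normSq_eq_zero]
      linarith [Complex.normSq_nonneg b, Complex.normSq_nonneg (a-e)]
    refine ⟨1, IsSU.one, ?_⟩
    rw [sub_eq_zero.mp ha, hb]; simp
  · have hpos : 0 < Complex.normSq b + Complex.normSq (a - e) :=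
      lt_of_le_of_ne (add_nonneg (Complex.normSq_nonneg _) (Complex.normSq_nonneg _)) (Ne.symm hv)
    set N := Complex.normSq b + Complex.normSq (a - e)
    let c : ℝ := (Real.sqrt N)⁻¹
    have hc : c * c * N = 1 := by
      have := Real.mul_self_sqrt hpos.le
      have h0 : Real.sqrt N ≠ 0 := (Real.sqrt_pos.mpr hpos).ne'
      simp only [c]; field_simp; linarith
    refine ⟨sform (c * starRingEnd ℂ b) (c * (a - e)), sform_SU _ _ ?_, ?_⟩
    · rw [Complex.normSq_mul, Complex.normSq_mul, Complex.normSq_conj, Complex.normSq_ofReal, ← mul_add]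
      exact hc
    · have hn' : a * starRingEnd ℂ a + b * starRingEnd ℂ b = 1 := by
        rw [Complex.mul_conj, Complex.mul_conj]; exact_mod_cast hn
      have he' : e * starRingEnd ℂ e = 1 := by
        rw [Complex.mul_conj]; exact_mod_cast he
      have ht : a + starRingEnd ℂ a = e + starRingEnd ℂ e := by
        rw [Complex.add_conj, Complex.add_conj]; exact_mod_cast h
      ext i j
      fin_cases i <;> fin_cases j <;> simp [sform, Matrix.mul_apply] <;>
        first | ring1 | linear_combination c * hn' - c * e * ht - c * he' | linear_combination -c * hn' + c * starRingEnd ℂ e * ht + c * he'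

def JJ : Matrix (Fin 2) (Fin 2) ℂ := !![0, -1; 1, 0]

lemma JJ_SU : IsSU JJ := by
  have : JJ = sform 0 1 := by simp [JJ, sform]
  rw [this]; apply sform_SU; simp

lemma DD_star (φ : ℝ) : (DD φ)ᴴ = JJ * DD φ * JJᴴ := by
  rw [DD_eq]
  ext i j
  fin_cases i <;> fin_cases j <;> simp [sform, Matrix.mul_apply, JJ, conjTranspose_apply]

/-- conj A = J A J⁻¹ -/
lemma IsSU.conj {A} (hA : IsSU A) : A.map (starRingEnd ℂ) = JJ * A * JJᴴ := by
  rw [hA.eq_sform]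
  ext i j
  fin_cases i <;> fin_cases j <;> simp [sform, Matrix.mul_apply, JJ, conjTranspose_apply]
end PartB

section PartC
open Matrix

section rep
variable {N : ℕ}

def KK (N : ℕ) (A : Matrix (Fin 2) (Fin 2) ℂ) : Matrix (Fin N → Fin 2) (Fin N → Fin 2) ℂ :=
  Matrix.of fun s t => ∏ i, A (s i) (t i)

lemma KK_mul (A B) : KK N (A * B) = KK N A * KK N B := by
  ext s t
  simp only [KK, Matrix.mul_apply, Matrix.of_apply]
  rw [Finset.prod_univ_sum]
  simp [Fintype.piFinset_univ, Finset.prod_mul_distrib]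

lemma KK_one : KK N 1 = 1 := by
  ext s t
  simp only [KK, Matrix.of_apply, Matrix.one_apply]
  rw [Fintype.prod_ite_zero]
  simp [funext_iff]

lemma KK_star (A) : KK N Aᴴ = (KK N A)ᴴ := by
  ext s t
  simp [KK, conjTranspose_apply]

lemma KK_conj (A : Matrix (Fin 2) (Fin 2) ℂ) : KK N (A.map (starRingEnd ℂ)) = (KK N A).map (starRingEnd ℂ) := by
  ext s t
  simp [KK]

lemma KK_perm (A) (σ : Equiv.Perm (Fin N)) (s t : Fin N → Fin 2) :
    KK N A (s ∘ σ) (t ∘ σ) = KK N A s t := by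
  simp only [KK, Matrix.of_apply, Function.comp]
  exact Equiv.prod_comp σ (fun i => A (s i) (t i))

def cnt (s : Fin N → Fin 2) : ℕ := ∑ i, (s i : ℕ)

lemma cnt_comp (σ : Equiv.Perm (Fin N)) (s : Fin N → Fin 2) : cnt (s ∘ σ) = cnt s :=
  Equiv.sum_comp σ (fun i => (s i : ℕ))

lemma cnt_le (s : Fin N → Fin 2) : cnt s ≤ N := by
  calc cnt s ≤ ∑ i : Fin N, 1 := Finset.sum_le_sum fun i _ => by omega
    _ = N := by simp

lemma card_one (s : Fin N → Fin 2) : Fintype.card {i // s i = 1} = cnt s := by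
  rw [Fintype.card_subtype, Finset.card_filter, cnt]
  refine Finset.sum_congr rfl fun i _ => ?_
  generalize s i = x
  fin_cases x <;> simp

lemma card_zero (s : Fin N → Fin 2) : Fintype.card {i // s i = 0} + cnt s = N := by
  rw [Fintype.card_subtype, Finset.card_filter, cnt, ← Finset.sum_add_distrib]
  trans ∑ i : Fin N, 1
  · refine Finset.sum_congr rfl fun i _ => ?_
    generalize s i = x
    fin_cases x <;> simp
  · simp

lemma exists_perm (s t : Fin N → Fin 2) (h : cnt s = cnt t) : ∃ σ : Equiv.Perm (Fin N), s = t ∘ σ := by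
  have : ∀ c : Fin 2, Nonempty ({a // s a = c} ≃ {b // t b = c}) := by
    intro c
    rw [← Fintype.card_eq]
    fin_cases c
    · have := card_zero s; have := card_zero t; simp at *; omega
    · have := card_one s; have := card_one t; simp at *; omega
  have e := fun c => (this c).some
  refine ⟨Equiv.ofFiberEquiv e, ?_⟩
  ext a
  rw [Function.comp_apply]
  exact congrArg _ (Equiv.ofFiberEquiv_map (f := s) (g := t) e a).symm

def flp (s : Fin N → Fin 2) : Fin N → Fin 2 := fun i => 1 - s i

lemma flp_flp (s : Fin N → Fin 2) : flp (flp s) = s := by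
  ext i; simp [flp]

lemma cnt_flp (s : Fin N → Fin 2) : cnt (flp s) + cnt s = N := by
  rw [cnt, cnt, ← Finset.sum_add_distrib]
  trans ∑ i : Fin N, 1
  · refine Finset.sum_congr rfl fun i _ => ?_
    simp only [flp]
    generalize s i = x
    fin_cases x <;> simp
  · simp

def num (N k : ℕ) : ℕ := (Finset.univ.filter fun s : Fin N → Fin 2 => cnt s = k).card

lemma num_symm (k : ℕ) (hk : k ≤ N) : num N (N - k) = num N k := by
  unfold num
  apply Finset.card_bij' (fun s _ => flp s) (fun s _ => flp s)
  · intro s hs; simp at hs ⊢; have := cnt_flp s; omega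
  · intro s hs; simp at hs ⊢; have := cnt_flp s; omega
  · intro s _; exact flp_flp s
  · intro s _; exact flp_flp s

lemma num_pos (k : ℕ) (hk : k ≤ N) : 0 < num N k := by
  rw [num, Finset.card_pos]
  refine ⟨fun i => if (i : ℕ) < k then 1 else 0, ?_⟩
  rw [Finset.mem_filter]
  refine ⟨Finset.mem_univ _, ?_⟩
  unfold cnt
  have : ∀ i : Fin N, (((if (i : ℕ) < k then 1 else 0 : Fin 2)) : ℕ) = if (i:ℕ) < k then 1 else 0 := by
    intro i; split_ifs <;> simp
  simp only [this]
  rw [Fin.sum_univ_eq_sum_range (fun i => if i < k then 1 else 0) N, ← Finset.card_filter]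
  have : (Finset.range N).filter (· < k) = Finset.range k := by ext; simp; omega
  rw [this, Finset.card_range]

lemma KK_JJ (s : Fin N → Fin 2) {X : Type*} (F : Matrix (Fin N → Fin 2) X ℂ) (x : X) :
    (KK N JJ * F) s x = (-1) ^ (cnt (flp s)) * F (flp s) x := by
  rw [Matrix.mul_apply, Finset.sum_eq_single (flp s)]
  · congr 1
    simp only [KK, Matrix.of_apply, cnt, ← Finset.prod_pow_eq_pow_sum]
    refine Finset.prod_congr rfl fun i _ => ?_
    simp only [flp]
    generalize s i = x
    fin_cases x <;> simp [JJ]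
  · intro t _ ht
    have : ∃ i, t i ≠ flp s i := by
      by_contra! hc
      exact ht (funext hc)
    obtain ⟨i, hi⟩ := this
    have : KK N JJ s t = 0 := by
      simp only [KK, Matrix.of_apply]
      apply Finset.prod_eq_zero (Finset.mem_univ i)
      simp only [flp] at hi
      generalize s i = x at *
      generalize t i = y at *
      fin_cases x <;> fin_cases y <;> simp [JJ] at *
    rw [this, zero_mul]
  · simp

end rep

section main
variable (m : ℕ)

abbrev JT (m : ℕ) := (Fin 2 × Fin m) ⊕ Fin 1

noncomputable def ze (m : ℕ) : ℂ := Complex.exp (2 * Real.pi * Complex.I / ((2 * m : ℕ) : ℂ))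

lemma ze_prim (hm : 0 < m) : IsPrimitiveRoot (ze m) (2 * m) :=
  Complex.isPrimitiveRoot_exp _ (by omega)

lemma ze_conj : starRingEnd ℂ (ze m) = (ze m)⁻¹ := by
  rw [ze, ← Complex.exp_conj, ← Complex.exp_neg]
  congr 1
  simp [neg_div, Complex.conj_ofNat]

noncomputable def cc (m k : ℕ) : ℝ := Real.sqrt (if k = 0 ∨ k = 2 * m then 1 / (4 * m) else 1 / (2 * m))

noncomputable def al (m k : ℕ) : JT m → ℂ
  | Sum.inl (a, r) => cc m k * ze m ^ (((m : ℤ) - k) * ((r : ℕ) + m * (a : ℕ) : ℕ))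
  | Sum.inr _ => if k = 2 * m then Complex.I * (Real.sqrt (1/2) : ℝ) else
      if k = 0 then - Complex.I * (Real.sqrt (1/2) : ℝ) else 0

lemma sum_ze (hm : 0 < m) (k k' : ℕ) (hk : k ≤ 2 * m) (hk' : k' ≤ 2 * m) :
    ∑ x : Fin 2 × Fin m, al m k (Sum.inl x) * starRingEnd ℂ (al m k' (Sum.inl x)) =
      if (2 * m : ℤ) ∣ (k' : ℤ) - k then ((cc m k : ℂ) * (cc m k' : ℂ) * (2 * (m : ℂ))) else 0 := by
  have hp := ze_prim m hm
  have hz : ze m ≠ 0 := Complex.exp_ne_zero _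
  have h1 : ∀ x : Fin 2 × Fin m, al m k (Sum.inl x) * starRingEnd ℂ (al m k' (Sum.inl x)) =
      cc m k * cc m k' * ((ze m ^ ((k' : ℤ) - k)) ^ ((finProdFinEquiv x : Fin (2 * m)) : ℕ)) := by
    rintro ⟨a, r⟩
    simp only [al, map_mul, map_zpow₀, ze_conj, Complex.conj_ofReal, finProdFinEquiv_apply_val]
    rw [← zpow_natCast, ← _root_.zpow_mul, _root_.inv_zpow', mul_mul_mul_comm, ← zpow_add₀ hz]
    congr 2
    ring
  simp only [h1]
  rw [← Finset.mul_sum, Equiv.sum_comp finProdFinEquiv (fun n : Fin (2*m) => (ze m ^ ((k' : ℤ) - k)) ^ (n : ℕ)),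
    Fin.sum_univ_eq_sum_range (fun n => (ze m ^ ((k' : ℤ) - k)) ^ n) (2 * m)]
  split_ifs with hd
  · have : ze m ^ ((k' : ℤ) - k) = 1 := by
      rw [hp.zpow_eq_one_iff_dvd]; exact_mod_cast hd
    rw [this]; simp
  · have h2 : ze m ^ ((k' : ℤ) - k) ≠ 1 := by
      rw [Ne, hp.zpow_eq_one_iff_dvd]; exact_mod_cast hd
    rw [geom_sum_eq h2]
    have : (ze m ^ ((k' : ℤ) - k)) ^ (2 * m) = 1 := by
      rw [← zpow_natCast, ← _root_.zpow_mul, mul_comm, _root_.zpow_mul, zpow_natCast, hp.pow_eq_one, _root_.one_zpow]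
    rw [this]; simp

lemma cc_sq (k : ℕ) : (cc m k : ℂ) * cc m k = ((if k = 0 ∨ k = 2 * m then 1 / (4 * m) else 1 / (2 * m) : ℝ) : ℂ) := by
  rw [← Complex.ofReal_mul, cc, Real.mul_self_sqrt]
  split_ifs <;> positivity

lemma half_sq : ((Real.sqrt (1/2) : ℝ) : ℂ) * (Real.sqrt (1/2) : ℝ) = 1 / 2 := by
  rw [← Complex.ofReal_mul, Real.mul_self_sqrt (by norm_num)]; norm_num

lemma al_orth (hm : 0 < m) (k k' : ℕ) (hk : k ≤ 2 * m) (hk' : k' ≤ 2 * m) :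
    ∑ x, al m k x * starRingEnd ℂ (al m k' x) = if k = k' then 1 else 0 := by
  rw [Fintype.sum_sum_type, sum_ze m hm k k' hk hk']
  have hmC : (m : ℂ) ≠ 0 := by exact_mod_cast hm.ne'
  have hh := half_sq
  have hI := Complex.I_mul_I
  by_cases h1 : k = k'
  · subst h1
    rw [sub_self, if_pos (dvd_zero _), cc_sq]
    simp only [Fin.sum_univ_one, Finset.univ_unique, Finset.sum_singleton, al, if_true]
    by_cases h2 : k = 2 * m
    · rw [if_pos (Or.inr h2), if_pos h2]
      push_cast
      have : starRingEnd ℂ ((Real.sqrt (1/2) : ℝ) : ℂ) = ((Real.sqrt (1/2) : ℝ) : ℂ) := Complex.conj_ofReal _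
      simp only [map_mul, Complex.conj_I, this]
      have e : (1 : ℂ) / (4 * m) * (2 * m) = 1 / 2 := by field_simp; norm_num
      linear_combination e - (((Real.sqrt (1/2) : ℝ) : ℂ) * ((Real.sqrt (1/2) : ℝ) : ℂ)) * hI + hh
    · by_cases h3 : k = 0
      · rw [if_pos (Or.inl h3), if_neg h2, if_pos h3]
        push_cast
        have : starRingEnd ℂ ((Real.sqrt (1/2) : ℝ) : ℂ) = ((Real.sqrt (1/2) : ℝ) : ℂ) := Complex.conj_ofReal _
        simp only [map_mul, map_neg, Complex.conj_I, this]
        have e : (1 : ℂ) / (4 * m) * (2 * m) = 1 / 2 := by field_simp; norm_num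
        linear_combination e - (((Real.sqrt (1/2) : ℝ) : ℂ) * ((Real.sqrt (1/2) : ℝ) : ℂ)) * hI + hh
      · rw [if_neg (by omega), if_neg h2, if_neg h3]
        push_cast
        simp only [zero_mul, add_zero]
        field_simp
  · rw [if_neg h1]
    simp only [Fin.sum_univ_one, Finset.univ_unique, Finset.sum_singleton, al]
    have hc : ∀ k, k = 0 ∨ k = 2 * m → (cc m k) = cc m 0 := by
      intro k hk; unfold cc; rw [if_pos hk, if_pos (Or.inl rfl)]
    have hcs : (cc m 0 : ℂ) * cc m 0 * (2 * m) = 1 / 2 := by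
      rw [cc_sq, if_pos (Or.inl rfl)]; push_cast; field_simp; norm_num
    have hcj : starRingEnd ℂ ((Real.sqrt (1/2) : ℝ) : ℂ) = ((Real.sqrt (1/2) : ℝ) : ℂ) := Complex.conj_ofReal _
    by_cases hx : (k = 0 ∧ k' = 2 * m) ∨ (k = 2 * m ∧ k' = 0)
    · rw [hc k (by omega), hc k' (by omega), hcs]
      rcases hx with ⟨rfl, rfl⟩ | ⟨rfl, rfl⟩
      · rw [if_pos (by simp), if_neg (by omega), if_pos rfl, if_pos rfl]
        simp only [map_mul, Complex.conj_I, hcj]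
        linear_combination (((Real.sqrt (1/2) : ℝ) : ℂ) * ((Real.sqrt (1/2) : ℝ) : ℂ)) * hI - hh
      · rw [if_pos (by simp), if_pos rfl, if_neg (show ¬ 0 = 2 * m by omega), if_pos rfl]
        simp only [map_mul, map_neg, Complex.conj_I, hcj]
        linear_combination (((Real.sqrt (1/2) : ℝ) : ℂ) * ((Real.sqrt (1/2) : ℝ) : ℂ)) * hI - hh
    · have hd : ¬ ((2 * m : ℤ) ∣ (k' : ℤ) - k) := by
        rintro ⟨c, hc⟩
        have : c = 0 := by
          by_contra h0
          rcases lt_or_gt_of_ne h0 with h | h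
          · have h5 : c ≤ -1 := by omega
            have : (2 * m : ℤ) * c ≤ (2 * m) * (-1) := mul_le_mul_of_nonneg_left h5 (by positivity)
            omega
          · have h5 : 1 ≤ c := by omega
            have : (2 * m : ℤ) * 1 ≤ (2 * m) * c := mul_le_mul_of_nonneg_left h5 (by positivity)
            omega
        rw [this] at hc
        omega
      rw [if_neg hd, zero_add]
      by_cases a1 : k = 2 * m
      · rw [if_neg (show ¬ k' = 2 * m by omega), if_neg (show ¬ k' = 0 by omega)]; simp
      · by_cases a2 : k = 0
        · rw [if_neg (show ¬ k' = 2 * m by omega), if_neg (show ¬ k' = 0 by omega)]; simp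
        · rw [if_neg a1, if_neg a2]; simp

noncomputable def be (m k : ℕ) : ℂ := Complex.I ^ (k ^ 2) * ((Real.sqrt (num (2 * m) k) : ℝ) : ℂ)⁻¹

noncomputable def QQ (m : ℕ) : Matrix (Fin (2 * m) → Fin 2) (JT m) ℂ :=
  Matrix.of fun s x => be m (cnt s) * al m (cnt s) x

noncomputable def VV (m : ℕ) : Matrix (Fin (2 * m + 1)) (JT m) ℂ :=
  Matrix.of fun k x => al m k x

lemma VV_mul (hm : 0 < m) : VV m * (VV m)ᴴ = 1 := by
  ext k k'
  rw [Matrix.mul_apply, Matrix.one_apply]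
  simp only [VV, Matrix.of_apply, conjTranspose_apply]
  have := al_orth m hm k k' (by omega) (by omega)
  simp only [Fin.ext_iff]
  exact this

lemma VV_mul' (hm : 0 < m) : (VV m)ᴴ * VV m = 1 := by
  refine (Matrix.mul_eq_one_comm_of_card_eq _ _ _ ?_).mp (VV_mul m hm)
  simp

lemma be_sq (k : ℕ) (hk : k ≤ 2 * m) : starRingEnd ℂ (be m k) * be m k * num (2 * m) k = 1 := by
  have h := num_pos k hk
  have h2 : ((Real.sqrt (num (2 * m) k) : ℝ) : ℂ) * (Real.sqrt (num (2 * m) k) : ℝ) = num (2 * m) k := by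
    rw [← Complex.ofReal_mul, Real.mul_self_sqrt (by positivity)]; norm_num
  have h3 : ((Real.sqrt (num (2 * m) k) : ℝ) : ℂ) ≠ 0 := by
    norm_cast; apply (Real.sqrt_pos.mpr _).ne'; exact_mod_cast h
  rw [← h2, be]
  simp only [map_mul, map_pow, Complex.conj_I, map_inv₀, Complex.conj_ofReal]
  have : (-Complex.I) ^ (k^2) * Complex.I ^ (k^2) = 1 := by
    rw [← mul_pow]; simp
  field_simp
  exact this

lemma QQ_left (hm : 0 < m) : (QQ m)ᴴ * QQ m = 1 := by
  rw [← VV_mul' m hm]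
  ext x y
  simp only [Matrix.mul_apply, conjTranspose_apply, QQ, VV, Matrix.of_apply]
  rw [Fin.sum_univ_eq_sum_range (fun k => star (al m k x) * al m k y) (2 * m + 1)]
  rw [← Finset.sum_fiberwise_of_maps_to (s := Finset.univ) (t := Finset.range (2 * m + 1)) (g := cnt)
    (fun s _ => by have := cnt_le s; simp; omega)]
  refine Finset.sum_congr rfl fun k hk => ?_
  have hk : k ≤ 2 * m := by simp at hk; omega
  trans ∑ s ∈ Finset.univ.filter (fun s : Fin (2 * m) → Fin 2 => cnt s = k), star (be m k * al m k x) * (be m k * al m k y)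
  · refine Finset.sum_congr rfl fun s hs => ?_
    simp at hs; rw [hs]
  · rw [Finset.sum_const, nsmul_eq_mul]
    have := be_sq m k hk
    rw [num] at this
    simp only [star_mul', Complex.star_def]
    linear_combination (starRingEnd ℂ (al m k x) * al m k y) * this

lemma QQ_proj (hm : 0 < m) (A) : QQ m * (QQ m)ᴴ * (KK (2 * m) A * QQ m) = KK (2 * m) A * QQ m := by
  have hsym : ∀ s t x, cnt s = cnt t → (KK (2 * m) A * QQ m) s x = (KK (2 * m) A * QQ m) t x := by
    intro s t x h
    obtain ⟨σ, rfl⟩ := exists_perm s t h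
    simp only [Matrix.mul_apply]
    rw [← Equiv.sum_comp (Equiv.arrowCongr σ.symm (Equiv.refl (Fin 2)))]
    refine Finset.sum_congr rfl fun u _ => ?_
    have e : (Equiv.arrowCongr σ.symm (Equiv.refl (Fin 2))) u = u ∘ σ := by
      ext i; simp [Equiv.arrowCongr]
    rw [e, KK_perm]
    simp [QQ, cnt_comp]
  have hQ : ∀ s t, (QQ m * (QQ m)ᴴ) s t = if cnt s = cnt t then ((num (2 * m) (cnt s) : ℂ))⁻¹ else 0 := by
    intro s t
    simp only [Matrix.mul_apply, conjTranspose_apply, QQ, Matrix.of_apply]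
    have := al_orth m hm (cnt s) (cnt t) (cnt_le s) (cnt_le t)
    trans be m (cnt s) * starRingEnd ℂ (be m (cnt t)) * (∑ x, al m (cnt s) x * starRingEnd ℂ (al m (cnt t) x))
    · rw [Finset.mul_sum]
      refine Finset.sum_congr rfl fun x _ => ?_
      simp only [star_mul', Complex.star_def]; ring
    · rw [this]
      split_ifs with h
      · rw [← h]
        have := be_sq m (cnt s) (cnt_le s)
        rw [mul_one, mul_comm]
        exact eq_inv_of_mul_eq_one_left this
      · simp
  ext s x
  rw [Matrix.mul_apply]
  simp only [hQ]
  trans ∑ t : Fin (2 * m) → Fin 2, if cnt t = cnt s then ((num (2 * m) (cnt s) : ℂ))⁻¹ * (KK (2 * m) A * QQ m) s x else 0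
  · refine Finset.sum_congr rfl fun t _ => ?_
    by_cases h : cnt s = cnt t
    · rw [if_pos h, if_pos h.symm, hsym s t x h]
    · rw [if_neg h, if_neg (Ne.symm h), zero_mul]
  · rw [← Finset.sum_filter, Finset.sum_const, nsmul_eq_mul, ← mul_assoc]
    have : ((num (2 * m) (cnt s) : ℕ) : ℂ) ≠ 0 := by
      have := num_pos (cnt s) (cnt_le s)
      exact_mod_cast this.ne'
    have h2 := mul_inv_cancel₀ this
    nth_rewrite 1 [num] at h2
    rw [h2, one_mul]

lemma al_conj (k : ℕ) (hk : k ≤ 2 * m) (hm : 0 < m) (x) : starRingEnd ℂ (al m k x) = al m (2 * m - k) x := by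
  have hc : cc m (2 * m - k) = cc m k := by
    unfold cc; congr 1
    have : (2 * m - k = 0 ∨ 2 * m - k = 2 * m) ↔ (k = 0 ∨ k = 2 * m) := by omega
    simp only [this]
  rcases x with ⟨a, r⟩ | x
  · simp only [al, map_mul, map_zpow₀, ze_conj, Complex.conj_ofReal, hc]
    rw [_root_.inv_zpow']
    congr 2
    push_cast [hk]
    ring
  · simp only [al]
    by_cases h1 : k = 2 * m
    · rw [if_pos h1, if_neg (by omega), if_pos (by omega)]; simp
    · by_cases h2 : k = 0
      · rw [if_neg h1, if_pos h2, if_pos (by omega)]; simp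
      · rw [if_neg h1, if_neg h2, if_neg (by omega), if_neg (by omega)]; simp

lemma QQ_conj (hm : 0 < m) : (QQ m).map (starRingEnd ℂ) = KK (2 * m) JJ * QQ m := by
  ext s x
  rw [KK_JJ]
  have h1 := cnt_flp s
  have h2 := cnt_le s
  have h3 : cnt (flp s) = 2 * m - cnt s := by omega
  simp only [QQ, Matrix.of_apply, Matrix.map_apply, map_mul, al_conj m _ h2 hm, h3]
  rw [← mul_assoc]
  congr 1
  simp only [be, num_symm _ h2, map_mul, map_inv₀, Complex.conj_ofReal, map_pow, Complex.conj_I]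
  rw [← mul_assoc]
  congr 1
  generalize cnt s = k at *
  have e1 : (-1 : ℂ) ^ (2 * m - k) = (-1) ^ k := by
    have : (-1 : ℂ) ^ (2 * m - k) * (-1) ^ k = 1 := by
      rw [← pow_add, Nat.sub_add_cancel h2, pow_mul]; simp
    have h4 : (-1 : ℂ) ^ k * (-1) ^ k = 1 := by rw [← mul_pow]; simp
    linear_combination ((-1 : ℂ) ^ k) * this - ((-1 : ℂ) ^ (2 * m - k)) * h4
  have e2 : (Complex.I) ^ ((2 * m - k) ^ 2) = Complex.I ^ (k ^ 2) := by
    rw [Complex.I_pow_eq_pow_mod, Complex.I_pow_eq_pow_mod (k ^ 2)]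
    congr 1
    obtain ⟨j, hj⟩ : ∃ j, 2 * m = k + j := ⟨2 * m - k, by omega⟩
    have : 2 * m - k = j := by omega
    rw [this]
    have h5 : j % 2 = k % 2 := by omega
    have h6 : ∀ a : ℕ, a ^ 2 % 4 = a % 2 := by
      intro a
      rcases Nat.even_or_odd' a with ⟨b, rfl | rfl⟩
      · have : (2 * b) ^ 2 = 4 * b ^ 2 := by ring
        omega
      · have : (2 * b + 1) ^ 2 = 4 * (b ^ 2 + b) + 1 := by ring
        omega
    rw [h6, h6, h5]
  have e3 : (-1 : ℂ) ^ (k ^ 2) = (-1) ^ k := by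
    rcases Nat.even_or_odd k with hk | hk
    · rw [hk.neg_one_pow, (hk.pow_of_ne_zero (by norm_num)).neg_one_pow]
    · rw [hk.neg_one_pow, hk.pow.neg_one_pow]
  rw [e1, e2, ← e3, ← mul_pow]; simp

/-- the cyclic shift -/
def sh (m : ℕ) (x : Fin 2 × Fin m) : Fin 2 × Fin m :=
  if h : (x.2 : ℕ) + 1 < m then (x.1, ⟨x.2 + 1, h⟩) else (1 - x.1, ⟨0, by have := x.2.2; omega⟩)

def YY (m : ℕ) : Matrix (Fin 2 × Fin m) (Fin 2 × Fin m) ℝ :=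
  Matrix.of fun x y => if x = sh m y then 1 else 0

def Cox (m : ℕ) : Matrix (JT m) (JT m) ℝ := fromBlocks (YY m) 0 0 (-1)

lemma KK_DD (hm : 0 < m) (s : Fin (2 * m) → Fin 2) (x) :
    (KK (2 * m) (DD (Real.pi / (2 * m))) * QQ m) s x = ze m ^ ((m : ℤ) - cnt s) * QQ m s x := by
  set φ : ℝ := Real.pi / (2 * m)
  have hD : ∀ i j, i ≠ j → DD φ i j = 0 := by
    intro i j h; fin_cases i <;> fin_cases j <;> simp [DD] at *
  rw [Matrix.mul_apply, Finset.sum_eq_single s]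
  · congr 1
    simp only [KK, Matrix.of_apply]
    have hmC : (m : ℂ) ≠ 0 := by exact_mod_cast hm.ne'
    have : ∀ j : Fin 2, DD φ j j = Complex.exp (φ * Complex.I) * ze m ^ (-((j : ℕ) : ℤ)) := by
      intro j
      fin_cases j
      · simp [DD]
      · simp [DD, ze, ← Complex.exp_neg, ← Complex.exp_add, φ]
        congr 1
        field_simp
        ring
    simp only [this]
    rw [Finset.prod_mul_distrib, Finset.prod_const, Finset.card_univ, Fintype.card_fin, pow_mul]
    have h1 : Complex.exp (φ * Complex.I) ^ 2 = ze m := by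
      rw [← Complex.exp_nat_mul, ze]; congr 1
      simp [φ]; field_simp
    have hz : ze m ≠ 0 := Complex.exp_ne_zero _
    rw [h1, sub_eq_add_neg, zpow_add₀ hz, zpow_natCast, cnt, _root_.zpow_neg, zpow_natCast,
      ← Finset.prod_pow_eq_pow_sum, ← Finset.prod_inv_distrib]
    congr 1
    refine Finset.prod_congr rfl fun i _ => ?_
    rw [_root_.zpow_neg, zpow_natCast]
  · intro t _ ht
    have : ∃ i, s i ≠ t i := by
      by_contra! hc
      exact ht (funext hc).symm
    obtain ⟨i, hi⟩ := this
    have : KK (2 * m) (DD φ) s t = 0 := by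
      simp only [KK, Matrix.of_apply]
      exact Finset.prod_eq_zero (Finset.mem_univ i) (hD _ _ hi)
    rw [this, zero_mul]
  · simp

lemma KK_DD_QQ (hm : 0 < m) :
    KK (2 * m) (DD (Real.pi / (2 * m))) * QQ m = QQ m * (Cox m).map Complex.ofReal := by
  have hp := ze_prim m hm
  have hz : ze m ≠ 0 := Complex.exp_ne_zero _
  ext s x
  rw [KK_DD m hm, Matrix.mul_apply]
  have hle := cnt_le s
  rcases x with x | x
  · rw [Finset.sum_eq_single (Sum.inl (sh m x))]
    · simp only [Cox, Matrix.map_apply, fromBlocks_apply₁₁, YY, Matrix.of_apply, if_true, Complex.ofReal_one, mul_one,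
        QQ]
      rw [mul_left_comm]
      congr 1
      obtain ⟨a, r⟩ := x
      unfold sh
      split_ifs with h
      · simp only [al]
        rw [mul_left_comm, ← zpow_add₀ hz]
        congr 2
        push_cast
        ring
      · have hr : (r : ℕ) + 1 = m := by have := r.2; simp at h; omega
        simp only [al]
        rw [mul_left_comm, ← zpow_add₀ hz]
        congr 1
        have : ((m : ℤ) - cnt s) + ((m : ℤ) - cnt s) * ((r : ℕ) + m * (a : ℕ) : ℕ) =
          ((m : ℤ) - cnt s) * ((m + m * (a : ℕ) : ℕ)) := by
          have hr' : ((r : ℕ) : ℤ) = m - 1 := by omega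
          push_cast; rw [hr']; ring
        rw [this]
        fin_cases a
        · simp
        · simp
          rw [mul_comm, _root_.zpow_mul, ← two_mul]
          have h3 : ze m ^ (2 * (m : ℤ)) = 1 := by
            have := hp.pow_eq_one
            rw [← zpow_natCast] at this
            exact_mod_cast this
          rw [h3]; simp
    · intro y _ hy
      rcases y with y | y
      · have : y ≠ sh m x := fun h => hy (by rw [h])
        simp [Cox, YY, this]
      · simp [Cox]
    · simp
  · rw [Finset.sum_eq_single (Sum.inr x)]
    · simp only [Cox, Matrix.map_apply, fromBlocks_apply₂₂, QQ, Matrix.of_apply]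
      rw [mul_left_comm, mul_assoc]
      congr 1
      simp only [al]
      have hhalf : ze m ^ m = -1 := by
        have hmC : (m : ℂ) ≠ 0 := by exact_mod_cast hm.ne'
        rw [ze, ← Complex.exp_nat_mul, ← Complex.exp_pi_mul_I]
        congr 1
        push_cast
        field_simp
      by_cases h1 : cnt s = 2 * m
      · rw [if_pos h1, h1]
        have : ((m : ℤ) - (2 * m : ℕ)) = -m := by push_cast; ring
        rw [this, _root_.zpow_neg, zpow_natCast, hhalf]
        norm_num
      · by_cases h2 : cnt s = 0
        · rw [if_neg h1, if_pos h2, h2]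
          simp [hhalf]
        · rw [if_neg h1, if_neg h2]; simp
    · intro y _ hy
      rcases y with y | y
      · simp [Cox]
      · exact absurd (by rw [Subsingleton.elim y x]) hy
    · simp

lemma rep_exists (hm : 0 < m) : ∃ ρ : Matrix (Fin 2) (Fin 2) ℂ → Matrix (JT m) (JT m) ℝ,
    (∀ A B, IsSU A → IsSU B → ρ (A * B) = ρ A * ρ B) ∧ ρ 1 = 1 ∧
    (∀ A, IsSU A → ρ Aᴴ = (ρ A)ᵀ) ∧ ρ (DD (Real.pi / (2 * m))) = Cox m := by
  let R : Matrix (Fin 2) (Fin 2) ℂ → Matrix (JT m) (JT m) ℂ := fun A => (QQ m)ᴴ * (KK (2 * m) A * QQ m)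
  have Rmul : ∀ A B, R (A * B) = R A * R B := by
    intro A B
    have := QQ_proj m hm B
    simp only [R, KK_mul]
    calc _ = (QQ m)ᴴ * (KK (2 * m) A * (KK (2 * m) B * QQ m)) := by simp only [Matrix.mul_assoc]
      _ = _ := by
        conv_lhs => rw [← this]
        simp only [Matrix.mul_assoc]
  have Rone : R 1 = 1 := by simp only [R, KK_one, Matrix.one_mul, QQ_left m hm]
  have Rstar : ∀ A, R Aᴴ = (R A)ᴴ := by
    intro A; simp only [R, KK_star, conjTranspose_mul, conjTranspose_conjTranspose, Matrix.mul_assoc]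
  have Rreal : ∀ A, IsSU A → (R A).map (starRingEnd ℂ) = R A := by
    intro A hA
    have h1 : (KK (2 * m) JJ)ᴴ * KK (2 * m) JJ = 1 := by
      rw [← KK_star, ← KK_mul, mul_eq_one_comm.mp JJ_SU.1, KK_one]
    have h2 : ((QQ m)ᴴ).map (starRingEnd ℂ) = ((QQ m).map (starRingEnd ℂ))ᴴ := by
      ext; simp
    simp only [R, Matrix.map_mul, h2, QQ_conj m hm, ← KK_conj, hA.conj, KK_mul, KK_star, conjTranspose_mul]
    have h3 : ∀ {X : Type} (F : Matrix (Fin (2 * m) → Fin 2) X ℂ), (KK (2 * m) JJ)ᴴ * (KK (2 * m) JJ * F) = F := by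
      intro X F; rw [← Matrix.mul_assoc, h1, Matrix.one_mul]
    simp only [Matrix.mul_assoc, h3]
  have Rre : ∀ A, IsSU A → ((R A).map Complex.re).map Complex.ofReal = R A := by
    intro A hA
    ext i j
    have := congrFun (congrFun (Rreal A hA) i) j
    simp only [Matrix.map_apply] at this ⊢
    exact Complex.conj_eq_iff_re.mp this
  have inj : Function.Injective fun M : Matrix (JT m) (JT m) ℝ => M.map Complex.ofReal :=
    Matrix.map_injective Complex.ofReal_injective
  refine ⟨fun A => (R A).map Complex.re, ?_, ?_, ?_, ?_⟩
  · intro A B hA hB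
    apply inj
    have := Matrix.map_mul (f := Complex.ofRealHom) (L := (R A).map Complex.re) (M := (R B).map Complex.re)
    simp only
    rw [Rre _ (hA.mul hB), Rmul]
    refine Eq.trans ?_ this.symm
    congr 1
    · exact (Rre A hA).symm
    · exact (Rre B hB).symm
  · simp only [Rone]
    ext i j; simp [Matrix.one_apply]; split_ifs <;> simp
  · intro A hA
    simp only [Rstar]
    ext i j; simp
  · have : R (DD (Real.pi / (2 * m))) = (Cox m).map Complex.ofReal := by
      simp only [R]
      rw [KK_DD_QQ m hm, ← Matrix.mul_assoc, QQ_left m hm, Matrix.one_mul]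
    simp only [this]
    ext i j; simp
end main
end PartC

section PartD
open Matrix

section claim

noncomputable def RR (θ : ℝ) : Matrix (Fin 2) (Fin 2) ℝ :=
  !![Real.cos θ, - Real.sin θ; Real.sin θ, Real.cos θ]

lemma RR_mul (a b : ℝ) : RR a * RR b = RR (a + b) := by
  ext i j
  fin_cases i <;> fin_cases j <;> simp [RR, Matrix.mul_apply, Real.cos_add, Real.sin_add] <;> ring

lemma RR_tr (a : ℝ) : (RR a)ᵀ = RR (-a) := by
  ext i j
  fin_cases i <;> fin_cases j <;> simp [RR]

lemma RR_zero : RR 0 = 1 := by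
  ext i j
  fin_cases i <;> fin_cases j <;> simp [RR]

lemma RR_orth (a : ℝ) : (RR a)ᵀ * RR a = 1 := by rw [RR_tr, RR_mul, neg_add_cancel, RR_zero]

lemma RR_det (a : ℝ) : (RR a).det = 1 := by
  simp [RR, det_fin_two]; nlinarith [Real.cos_sq_add_sin_sq a]

noncomputable def GG {m : ℕ} (θ : Fin m → ℝ) : Matrix (Fin 2 × Fin m) (Fin 2 × Fin m) ℝ :=
  blockDiagonal fun k => RR (θ k)

lemma GG_orth {m : ℕ} (θ : Fin m → ℝ) : (GG θ)ᵀ * GG θ = 1 := by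
  rw [GG, blockDiagonal_transpose, ← blockDiagonal_mul]
  simp only [RR_orth]
  exact blockDiagonal_one

lemma GG_det {m : ℕ} (θ : Fin m → ℝ) : (GG θ).det = 1 := by
  rw [GG, det_blockDiagonal]; simp [RR_det]

lemma sh_inj (m : ℕ) : Function.Injective (sh m) := by
  rintro ⟨a, k⟩ ⟨b, l⟩ h
  have hk := k.2
  have hl := l.2
  unfold sh at h
  split_ifs at h with h1 h2 h2
  · simp [Fin.ext_iff] at h ⊢; omega
  · simp [Fin.ext_iff] at h
  · simp [Fin.ext_iff] at h
  · simp only [Prod.mk.injEq, and_true] at h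
    simp only at h1 h2
    have : a = b := by
      revert h; revert a b; decide
    rw [this]; congr 1; ext; omega

lemma YY_orth (m : ℕ) : (YY m)ᵀ * YY m = 1 := by
  ext x y
  rw [Matrix.mul_apply, Finset.sum_eq_single (sh m y)]
  · simp [YY, Matrix.one_apply, (sh_inj m).eq_iff, eq_comm]
  · intro z _ hz; simp [YY, hz]
  · simp

lemma mul_YY (m : ℕ) {X : Type} (A : Matrix X (Fin 2 × Fin m) ℝ) (x y) : (A * YY m) x y = A x (sh m y) := by
  rw [Matrix.mul_apply, Finset.sum_eq_single (sh m y)]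
  · simp [YY]
  · intro z _ hz; simp [YY, hz]
  · simp

lemma claim {m : ℕ} (θ : Fin m → ℝ) : ∃ β : Fin m → ℝ, GG β * YY m = GG θ * YY m * GG β := by
  let θ' : ℕ → ℝ := fun j => if h : j < m then θ ⟨j, h⟩ else 0
  let T : ℕ → ℝ := fun k => ∑ j ∈ Finset.range k, θ' j
  have hθ : ∀ k : Fin m, θ k = θ' k := fun k => by simp [θ']
  refine ⟨fun k => T (k + 1) - T m / 2, ?_⟩
  ext ⟨i, l⟩ ⟨b, k⟩
  rw [mul_YY, Matrix.mul_apply, Fintype.sum_prod_type]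
  simp only [mul_YY]
  simp only [GG, blockDiagonal_apply]
  have hk := k.2
  by_cases h : (k : ℕ) + 1 < m
  · have hs : ∀ a, sh m (a, k) = (a, ⟨k + 1, h⟩) := by intro a; simp [sh, h]
    simp only [Finset.sum_ite_eq', mul_ite, mul_zero, Finset.mem_univ, if_true, hs]
    split_ifs with hl
    · rw [← Matrix.mul_apply, RR_mul]
      congr 1
      subst hl
      simp only [hθ, T]
      rw [Finset.sum_range_succ]
      congr 1; ring
    · simp
  · have hs : ∀ a, sh m (a, k) = (1 - a, ⟨0, by omega⟩) := by intro a; simp [sh, h]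
    simp only [Finset.sum_ite_eq', mul_ite, mul_zero, Finset.mem_univ, if_true, hs]
    have hkm : (k : ℕ) + 1 = m := by omega
    split_ifs with hl
    · subst hl
      have e : T (0 + 1) - T m / 2 = θ' 0 - T m / 2 := by simp [T]
      have e2 : T (k + 1) - T m / 2 = T m / 2 := by rw [hkm]; ring
      simp only [hθ, e, e2, Fin.sum_univ_two]
      generalize T m / 2 = u
      fin_cases i <;> fin_cases b <;> simp [RR, Real.cos_sub, Real.sin_sub] <;> ring
    · simp
end claim

lemma plane {n : ℕ} (hn : 3 ≤ n) (g : Matrix (Fin n) (Fin n) ℝ) (hg : gᵀ * g = 1) :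
    ∃ (p q : Fin n → ℝ) (θ : ℝ), p ⬝ᵥ p = 1 ∧ q ⬝ᵥ q = 1 ∧ p ⬝ᵥ q = 0 ∧
      g *ᵥ p = Real.cos θ • p + Real.sin θ • q ∧ g *ᵥ q = (-Real.sin θ) • p + Real.cos θ • q := by
  have hg' : g * gᵀ = 1 := mul_eq_one_comm.mp hg
  have hA : (g + gᵀ).IsHermitian := by
    rw [IsHermitian, conjTranspose_eq_transpose_of_trivial]; simp [add_comm]
  let v : Fin n → Fin n → ℝ := fun i => (hA.eigenvectorBasis i : EuclideanSpace ℝ (Fin n)).ofLp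
  have hv : ∀ i j, v i ⬝ᵥ v j = if i = j then 1 else 0 := by
    intro i j
    have := (orthonormal_iff_ite.mp hA.eigenvectorBasis.orthonormal) j i
    rw [EuclideanSpace.inner_eq_star_dotProduct] at this
    simp only [eq_comm (a := i)]
    simpa [v] using this
  have he : ∀ i, g *ᵥ v i + gᵀ *ᵥ v i = hA.eigenvalues i • v i := by
    intro i
    have := hA.mulVec_eigenvectorBasis i
    rw [add_mulVec] at this
    exact this
  have hadj : ∀ x y, (g *ᵥ x) ⬝ᵥ (g *ᵥ y) = x ⬝ᵥ y := by
    intro x y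
    rw [dotProduct_mulVec, vecMul_mulVec, hg, vecMul_one]
  have hadj2 : ∀ x y, (gᵀ *ᵥ x) ⬝ᵥ y = x ⬝ᵥ (g *ᵥ y) := by
    intro x y
    rw [mulVec_transpose, dotProduct_mulVec]
  let c : Fin n → ℝ := fun i => v i ⬝ᵥ (g *ᵥ v i)
  have hlam : ∀ i, hA.eigenvalues i = 2 * c i := by
    intro i
    have := congrArg (fun x => x ⬝ᵥ v i) (he i)
    simp only [add_dotProduct, hadj2, smul_dotProduct, hv] at this
    rw [dotProduct_comm (g *ᵥ v i)] at this
    simp at this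
    simp only [c]; linarith
  have hgg : ∀ i, g *ᵥ (g *ᵥ v i) = (2 * c i) • (g *ᵥ v i) - v i := by
    intro i
    have := congrArg (fun x => g *ᵥ x) (he i)
    simp only [mulVec_add, mulVec_mulVec, hg', one_mulVec, mulVec_smul, hlam] at this
    rw [mulVec_mulVec, ← this]; simp
  have hsq : ∀ i, (g *ᵥ v i - c i • v i) ⬝ᵥ (g *ᵥ v i - c i • v i) = 1 - c i ^ 2 := by
    intro i
    simp only [sub_dotProduct, dotProduct_sub, smul_dotProduct, dotProduct_smul, hadj, hv, if_true,
      dotProduct_comm (g *ᵥ v i) (v i)]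
    change 1 - c i • c i - c i • (c i - c i • 1) = _
    simp; ring
  by_cases h : ∃ i, c i ^ 2 ≠ 1
  · obtain ⟨i, hi⟩ := h
    have h0 : 0 ≤ 1 - c i ^ 2 := by
      rw [← hsq i]
      exact Finset.sum_nonneg fun j _ => mul_self_nonneg _
    have hpos : 0 < 1 - c i ^ 2 := lt_of_le_of_ne h0 (by intro h; apply hi; linarith)
    have hcos : Real.cos (Real.arccos (c i)) = c i := Real.cos_arccos (by nlinarith) (by nlinarith)
    have hsin : Real.sin (Real.arccos (c i)) = Real.sqrt (1 - c i ^ 2) := Real.sin_arccos _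
    have hs2 : Real.sqrt (1 - c i ^ 2) * Real.sqrt (1 - c i ^ 2) = 1 - c i ^ 2 := Real.mul_self_sqrt h0
    have hs0 : Real.sqrt (1 - c i ^ 2) ≠ 0 := (Real.sqrt_pos.mpr hpos).ne'
    refine ⟨v i, (Real.sqrt (1 - c i ^ 2))⁻¹ • (g *ᵥ v i - c i • v i), Real.arccos (c i), ?_, ?_, ?_, ?_, ?_⟩
    · simp [hv]
    · rw [smul_dotProduct, dotProduct_smul, hsq]
      simp only [smul_eq_mul]
      generalize Real.sqrt (1 - c i ^ 2) = s at *
      rw [← hs2]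
      field_simp
    · rw [dotProduct_smul, dotProduct_sub, dotProduct_smul, hv, if_pos rfl]
      change _ • (c i - c i • 1) = _
      simp
    · rw [hcos, hsin, smul_smul, mul_inv_cancel₀ hs0, one_smul]; simp
    · rw [hcos, hsin, mulVec_smul, mulVec_sub, mulVec_smul, hgg]
      generalize Real.sqrt (1 - c i ^ 2) = s at *
      ext j
      simp only [Pi.smul_apply, Pi.sub_apply, Pi.add_apply, smul_eq_mul]
      field_simp
      linear_combination v i j * hs2
  · push Not at h
    have hgv : ∀ i, g *ᵥ v i = c i • v i := by
      intro i
      have := hsq i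
      rw [h i, sub_self, dotProduct_self_eq_zero, sub_eq_zero] at this
      exact this
    have hij : ∃ i j : Fin n, i ≠ j ∧ c i = c j := by
      have h1 : ∀ i, c i = 1 ∨ c i = -1 := fun i => by
        apply mul_self_eq_one_iff.mp; rw [← sq]; exact h i
      let a : Fin n := ⟨0, by omega⟩
      let b : Fin n := ⟨1, by omega⟩
      let d : Fin n := ⟨2, by omega⟩
      have hab : a ≠ b := by simp [a, b]
      have had : a ≠ d := by simp [a, d]
      have hbd : b ≠ d := by simp [b, d]
      rcases h1 a with ha | ha <;> rcases h1 b with hb | hb <;> rcases h1 d with hd | hd <;>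
      first
        | exact ⟨a, b, hab, ha.trans hb.symm⟩
        | exact ⟨a, d, had, ha.trans hd.symm⟩
        | exact ⟨b, d, hbd, hb.trans hd.symm⟩
    obtain ⟨i, j, hne, hc⟩ := hij
    have hcos : Real.cos (Real.arccos (c i)) = c i := Real.cos_arccos (by nlinarith [h i]) (by nlinarith [h i])
    have hsin : Real.sin (Real.arccos (c i)) = 0 := by rw [Real.sin_arccos, h i]; simp
    refine ⟨v i, v j, Real.arccos (c i), by simp [hv], by simp [hv], by simp [hv, hne], ?_, ?_⟩
    · rw [hcos, hsin, hgv]; simp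
    · rw [hcos, hsin, hgv, hc]; simp
end PartD

section PartE
open Matrix

lemma step {k : ℕ} (hk : 1 ≤ k) (g : Matrix (Fin (2 + k)) (Fin (2 + k)) ℝ) (hg : gᵀ * g = 1) :
    ∃ (θ : ℝ) (g' : Matrix (Fin k) (Fin k) ℝ) (M : Matrix (Fin (2 + k)) (Fin 2 ⊕ Fin k) ℝ),
      Mᵀ * M = 1 ∧ g'ᵀ * g' = 1 ∧ g * M = M * fromBlocks (RR θ) 0 0 g' := by
  obtain ⟨p, q, θ, hp, hq, hpq, h1, h2⟩ := plane (by omega) g hg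
  let v : Fin 2 ⊕ Fin k → EuclideanSpace ℝ (Fin (2 + k)) :=
    Sum.elim ![WithLp.toLp 2 p, WithLp.toLp 2 q] 0
  have hv : Orthonormal ℝ ((Set.range (Sum.inl : Fin 2 → Fin 2 ⊕ Fin k)).domRestrict v) := by
    rw [orthonormal_iff_ite]
    rintro ⟨_, i, rfl⟩ ⟨_, j, rfl⟩
    rw [EuclideanSpace.inner_eq_star_dotProduct]
    have hqp : q ⬝ᵥ p = 0 := by rw [dotProduct_comm]; exact hpq
    fin_cases i <;> fin_cases j <;> simp [v, hp, hq, hpq, hqp]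
  obtain ⟨b, hb⟩ := hv.exists_orthonormalBasis_extension_of_card_eq (by simp)
  let M : Matrix (Fin (2 + k)) (Fin 2 ⊕ Fin k) ℝ := Matrix.of fun i j => (b j).ofLp i
  have hM : Mᵀ * M = 1 := by
    ext i j
    have := (orthonormal_iff_ite.mp b.orthonormal) j i
    rw [EuclideanSpace.inner_eq_star_dotProduct] at this
    rw [Matrix.one_apply]
    simp only [eq_comm (a := i)]
    rw [← this]
    simp [Matrix.mul_apply, M, dotProduct]
  have hM' : M * Mᵀ = 1 := (Matrix.mul_eq_one_comm_of_card_eq _ _ _ (by simp)).mp hM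
  have hcol : ∀ j, M.col j = (b j).ofLp := fun j => rfl
  have hb0 : (b (Sum.inl 0)).ofLp = p := by rw [hb _ ⟨0, rfl⟩]; simp [v]
  have hb1 : (b (Sum.inl 1)).ofLp = q := by rw [hb _ ⟨1, rfl⟩]; simp [v]
  let B := Mᵀ * g * M
  have hgM : g * M = M * B := by
    simp only [B, ← Matrix.mul_assoc, hM', Matrix.one_mul]
  have hBB : Bᵀ * B = 1 := by
    simp only [B, transpose_mul, transpose_transpose]
    calc _ = Mᵀ * (gᵀ * ((M * Mᵀ) * g)) * M := by simp only [Matrix.mul_assoc]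
      _ = 1 := by rw [hM', Matrix.one_mul, hg, Matrix.mul_one, hM]
  -- the first two columns
  have hB0 : ∀ i, B i (Sum.inl 0) = Real.cos θ * (Mᵀ * M) i (Sum.inl 0) + Real.sin θ * (Mᵀ * M) i (Sum.inl 1) := by
    intro i
    have e : ∀ x, (g * M) x (Sum.inl 0) = Real.cos θ * M x (Sum.inl 0) + Real.sin θ * M x (Sum.inl 1) := by
      intro x
      have := congrFun h1 x
      rw [← hb0, ← hb1] at this
      simpa [Matrix.mul_apply, M, mulVec, dotProduct] using this
    simp only [B, Matrix.mul_assoc]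
    rw [Matrix.mul_apply]
    simp only [e]
    simp only [Matrix.mul_apply, Finset.mul_sum, ← Finset.sum_add_distrib]
    refine Finset.sum_congr rfl fun x _ => by ring
  have hB1 : ∀ i, B i (Sum.inl 1) = -Real.sin θ * (Mᵀ * M) i (Sum.inl 0) + Real.cos θ * (Mᵀ * M) i (Sum.inl 1) := by
    intro i
    have e : ∀ x, (g * M) x (Sum.inl 1) = -Real.sin θ * M x (Sum.inl 0) + Real.cos θ * M x (Sum.inl 1) := by
      intro x
      have := congrFun h2 x
      rw [← hb0, ← hb1] at this
      simpa [Matrix.mul_apply, M, mulVec, dotProduct] using this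
    simp only [B, Matrix.mul_assoc]
    rw [Matrix.mul_apply]
    simp only [e]
    simp only [Matrix.mul_apply, Finset.mul_sum, ← Finset.sum_add_distrib]
    refine Finset.sum_congr rfl fun x _ => by ring
  rw [hM] at hB0 hB1
  have h11 : B.toBlocks₁₁ = RR θ := by
    ext i j
    fin_cases i <;> fin_cases j <;> simp [toBlocks₁₁, hB0, hB1, RR, Matrix.one_apply]
  have h21 : B.toBlocks₂₁ = 0 := by
    ext i j
    fin_cases j <;> simp [toBlocks₂₁, hB0, hB1, Matrix.one_apply]
  have hBf : B = fromBlocks (RR θ) B.toBlocks₁₂ 0 B.toBlocks₂₂ := by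
    rw [← h11, ← h21, fromBlocks_toBlocks]
  have hBB2 := hBB
  rw [hBf, fromBlocks_transpose, fromBlocks_multiply, ← fromBlocks_one, fromBlocks_inj] at hBB2
  obtain ⟨-, k12, -, k22⟩ := hBB2
  have h12 : B.toBlocks₁₂ = 0 := by
    have : (RR θ) * ((RR θ)ᵀ * B.toBlocks₁₂) = 0 := by
      simp at k12; rw [k12, Matrix.mul_zero]
    rwa [← Matrix.mul_assoc, mul_eq_one_comm.mp (RR_orth θ), Matrix.one_mul] at this
  rw [h12] at k22 hBf
  refine ⟨θ, B.toBlocks₂₂, M, hM, by simpa using k22, ?_⟩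
  rw [← hBf, hgM]

def ff (m r : ℕ) : Fin 2 ⊕ ((Fin 2 × Fin m) ⊕ Fin r) → (Fin 2 × Fin (m + 1)) ⊕ Fin r
  | Sum.inl a => Sum.inl (a, 0)
  | Sum.inr (Sum.inl (a, k)) => Sum.inl (a, k.succ)
  | Sum.inr (Sum.inr i) => Sum.inr i

lemma ff_bij (m r : ℕ) : Function.Bijective (ff m r) := by
  rw [Fintype.bijective_iff_surjective_and_card]
  refine ⟨?_, by simp; ring⟩
  rintro (⟨a, k⟩ | i)
  · refine Fin.cases ?_ (fun k => ?_) k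
    · exact ⟨Sum.inl a, rfl⟩
    · exact ⟨Sum.inr (Sum.inl (a, k)), rfl⟩
  · exact ⟨Sum.inr (Sum.inr i), rfl⟩

lemma normal_form (r : ℕ) (hr : 1 ≤ r) (m : ℕ) : ∀ n, n = 2 * m + r → 
    ∀ (g : Matrix (Fin n) (Fin n) ℝ) (hg : gᵀ * g = 1),
    ∃ (θ : Fin m → ℝ) (g' : Matrix (Fin r) (Fin r) ℝ) (M : Matrix (Fin n) ((Fin 2 × Fin m) ⊕ Fin r) ℝ),
      Mᵀ * M = 1 ∧ g'ᵀ * g' = 1 ∧ g * M = M * fromBlocks (GG θ) 0 0 g' := by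
  induction m with
  | zero =>
    intro n hn g hg
    have hn : n = r := by omega
    subst hn
    let e : Fin n → (Fin 2 × Fin 0) ⊕ Fin n := Sum.inr
    let e' : (Fin 2 × Fin 0) ⊕ Fin n ≃ Fin n := Equiv.emptySum _ _
    have key : ∀ g : Matrix (Fin n) (Fin n) ℝ, fromBlocks (GG (fun i : Fin 0 => 0)) 0 0 g = g.submatrix e' e' := by
      intro g
      ext (⟨_, a⟩ | i) (⟨_, b⟩ | j)
      · exact a.elim0
      · exact a.elim0
      · exact b.elim0
      · rfl
    refine ⟨fun _ => 0, g, (1 : Matrix (Fin n) (Fin n) ℝ).submatrix id e', ?_, hg, ?_⟩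
    · rw [transpose_submatrix, transpose_one, ← submatrix_mul _ _ _ _ _ Function.bijective_id, Matrix.one_mul,
        submatrix_one_equiv]
    · rw [key, ← submatrix_mul _ _ _ _ _ e'.bijective, Matrix.one_mul]
      nth_rewrite 1 [← submatrix_id_id g]
      rw [← submatrix_mul _ _ _ _ _ Function.bijective_id, Matrix.mul_one]
  | succ m ih =>
    intro n hn g hg
    obtain ⟨k, hk⟩ : ∃ k, k = 2 * m + r := ⟨_, rfl⟩
    have : n = 2 + k := by omega
    subst this
    obtain ⟨θ₀, g₁, M₁, hM₁, hg₁, hc₁⟩ := step (by omega) g hg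
    obtain ⟨θ, g', M', hM', hg', hc'⟩ := ih k hk g₁ hg₁
    let e := Equiv.ofBijective _ (ff_bij m r)
    let P : Matrix (Fin (2 + k)) (Fin 2 ⊕ ((Fin 2 × Fin m) ⊕ Fin r)) ℝ := M₁ * (fromBlocks 1 0 0 M' : Matrix (Fin 2 ⊕ Fin k) (Fin 2 ⊕ ((Fin 2 × Fin m) ⊕ Fin r)) ℝ)
    let Θ : Fin (m + 1) → ℝ := Fin.cons θ₀ θ
    have hP : Pᵀ * P = 1 := by
      simp only [P, transpose_mul]
      rw [Matrix.mul_assoc, ← Matrix.mul_assoc M₁ᵀ, hM₁, Matrix.one_mul, fromBlocks_transpose, fromBlocks_multiply]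
      simp [hM']
    have key : (fromBlocks (GG Θ) 0 0 g').submatrix e e = fromBlocks (RR θ₀) 0 0 (fromBlocks (GG θ) 0 0 g') := by
      ext (a | ⟨a, k⟩ | i) (b | ⟨b, l⟩ | j) <;>
        simp [e, ff, GG, Θ, blockDiagonal_apply, Fin.succ_ne_zero, (Fin.succ_ne_zero _).symm]
    have key2 : fromBlocks (GG Θ) 0 0 g' = (fromBlocks (RR θ₀) 0 0 (fromBlocks (GG θ) 0 0 g')).submatrix e.symm e.symm := by
      rw [← key]; simp
    refine ⟨Θ, g', P.submatrix id e.symm, ?_, hg', ?_⟩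
    · rw [transpose_submatrix, ← submatrix_mul _ _ _ _ _ Function.bijective_id, hP, submatrix_one_equiv]
    · rw [key2, ← submatrix_mul _ _ _ _ _ e.symm.bijective]
      nth_rewrite 1 [← submatrix_id_id g]
      rw [← submatrix_mul _ _ _ _ _ Function.bijective_id]
      congr 1
      simp only [P]
      rw [← Matrix.mul_assoc, hc₁, Matrix.mul_assoc, Matrix.mul_assoc, fromBlocks_multiply, fromBlocks_multiply]
      simp [hc']
end PartE

section PartF
open Matrix

section WVs
variable {I J : Type} [Fintype I] [DecidableEq I] [Fintype J] [DecidableEq J] {d : ℕ}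

def WV (w : FreeGroup (Fin d)) (X : Matrix J J ℝ) : Prop :=
  ∃ g : Fin d → Matrix J J ℝ, (∀ i, (g i)ᵀ * g i = 1 ∧ (g i).det = 1) ∧
    (w.toWord.map fun x => cond x.2 (g x.1) (g x.1)ᵀ).prod = X

lemma WV.conj {w : FreeGroup (Fin d)} {X : Matrix J J ℝ} (h : WV w X) (M : Matrix I J ℝ)
    (h1 : Mᵀ * M = 1) (h2 : M * Mᵀ = 1) : WV w (M * X * Mᵀ) := by
  obtain ⟨g, hg, rfl⟩ := h
  refine ⟨fun i => M * g i * Mᵀ, fun i => ⟨?_, ?_⟩, ?_⟩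
  · simp only [transpose_mul, transpose_transpose]
    calc _ = M * ((g i)ᵀ * ((Mᵀ * M) * g i)) * Mᵀ := by simp only [Matrix.mul_assoc]
      _ = 1 := by rw [h1, Matrix.one_mul, (hg i).1, Matrix.mul_one, h2]
  · rw [det_conj_of_mul_eq_one h2 h1, (hg i).2]
  · generalize w.toWord = L
    induction L with
    | nil => simp [h2]
    | cons x L ih =>
      simp only [List.map_cons, List.prod_cons] at ih ⊢
      rw [ih]
      have : cond x.2 (M * g x.1 * Mᵀ) (M * g x.1 * Mᵀ)ᵀ = M * cond x.2 (g x.1) (g x.1)ᵀ * Mᵀ := by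
        cases x.2 <;> simp [Matrix.mul_assoc]
      rw [this]
      generalize (List.map (fun x => cond x.2 (g x.1) (g x.1)ᵀ) L).prod = Q
      generalize cond x.2 (g x.1) (g x.1)ᵀ = P
      calc _ = M * (P * ((Mᵀ * M) * Q)) * Mᵀ := by simp only [Matrix.mul_assoc]
        _ = _ := by rw [h1, Matrix.one_mul]

lemma WV.val {n : ℕ} {w : FreeGroup (Fin d)} {X : Matrix (Fin n) (Fin n) ℝ} (h : WV w X) :
    ∃ y ∈ wordValuesIn w (SO n), (y : Matrix (Fin n) (Fin n) ℝ) = X := by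
  obtain ⟨g, hg, rfl⟩ := h
  let G : Fin d → Matrix.orthogonalGroup (Fin n) ℝ := fun i => ⟨g i, by
    rw [mem_orthogonalGroup_iff']; exact (hg i).1⟩
  refine ⟨FreeGroup.lift G w, ⟨G, fun i => (hg i).2, rfl⟩, ?_⟩
  conv_lhs => rw [← FreeGroup.mk_toWord (x := w), FreeGroup.lift_mk]
  generalize w.toWord = L
  induction L with
  | nil => simp
  | cons x L ih =>
    simp only [List.map_cons, List.prod_cons] at ih ⊢
    rw [← ih]
    obtain ⟨a, b⟩ := x
    cases b <;> simp [G] <;> rfl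

structure SURep (ρ : Matrix (Fin 2) (Fin 2) ℂ → Matrix J J ℝ) : Prop where
  mul : ∀ A B, IsSU A → IsSU B → ρ (A * B) = ρ A * ρ B
  one : ρ 1 = 1
  tr : ∀ A, IsSU A → ρ Aᴴ = (ρ A)ᵀ

lemma SURep.orth {ρ : Matrix (Fin 2) (Fin 2) ℂ → Matrix J J ℝ} (h : SURep ρ) {A} (hA : IsSU A) :
    (ρ A)ᵀ * ρ A = 1 := by
  rw [← h.tr A hA, ← h.mul _ _ hA.star hA, mul_eq_one_comm.mp hA.1, h.one]

lemma wv_of_rep (w : FreeGroup (Fin d)) (hw : w ≠ 1) : ∃ M₀ : ℕ, ∀ m : ℕ, M₀ ≤ m →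
    ∀ (J : Type) [Fintype J] [DecidableEq J] (ρ : Matrix (Fin 2) (Fin 2) ℂ → Matrix J J ℝ), SURep ρ →
      WV w (ρ (DD (Real.pi / (2 * m)))) ∧ WV w (ρ (DD (Real.pi / (2 * m))))ᵀ := by
  obtain ⟨φ₀, hφ₀, htr⟩ := word_trace w.toWord FreeGroup.isReduced_toWord
    (by rwa [Ne, FreeGroup.toWord_eq_nil_iff])
  obtain ⟨M₀, hM₀⟩ := exists_nat_gt (Real.pi / φ₀)
  refine ⟨M₀, fun m hm J _ _ ρ hρ => ?_⟩
  have hmR : (M₀ : ℝ) ≤ m := by exact_mod_cast hm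
  have hpos : 0 < Real.pi / φ₀ := div_pos Real.pi_pos hφ₀
  have hm0 : (0 : ℝ) < m := by linarith
  have hle : Real.pi / (2 * m) ≤ φ₀ := by
    rw [div_le_iff₀ (by positivity)]
    have : Real.pi < m * φ₀ := by rw [← div_lt_iff₀ hφ₀]; linarith
    nlinarith
  obtain ⟨t, ht⟩ := htr (Real.pi / (2 * m)) (by positivity) hle
  generalize Real.pi / (2 * m) = φ at *
  have hsu : ∀ L : List (Fin d × Bool), IsSU (L.map fun x => BB (ang x.1) t x.2).prod := by
    intro L
    induction L with
    | nil => simpa using IsSU.one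
    | cons x L ih => simpa using (BB_SU _ _ _).mul ih
  obtain ⟨U, hU, hW⟩ := SU_conj (hsu w.toWord) φ ht
  have hW2 : WV w (ρ (w.toWord.map fun x => BB (ang x.1) t x.2).prod) := by
    refine ⟨fun i => ρ (BB (ang i) t true), fun i => ⟨hρ.orth (BB_SU _ _ _), ?_⟩, ?_⟩
    · have e : BB (ang i) t true = BB (ang i) (t/2) true * BB (ang i) (t/2) true := by
        rw [BB_mul]; congr 1; ring
      beta_reduce
      rw [e, hρ.mul _ _ (BB_SU _ _ _) (BB_SU _ _ _)]
      have := congrArg Matrix.det (hρ.orth (BB_SU (ang i) (t/2) true))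
      rw [det_mul, det_transpose, det_one] at this
      rw [det_mul, this]
    · generalize w.toWord = L
      induction L with
      | nil => simp [hρ.one]
      | cons x L ih =>
        simp only [List.map_cons, List.prod_cons] at ih ⊢
        rw [ih, hρ.mul _ _ (BB_SU _ _ _) (hsu L)]
        congr 1
        cases x.2
        · have := BB_star (ang x.1) t true
          simp only [Bool.not_true] at this
          rw [← this, hρ.tr _ (BB_SU _ _ _)]; rfl
        · rfl
  rw [hW, hρ.mul _ _ (hU.mul (DD_SU φ)) hU.star, hρ.mul _ _ hU (DD_SU φ), hρ.tr _ hU] at hW2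
  have hUo := hρ.orth hU
  have h1 : WV w (ρ (DD φ)) := by
    have := hW2.conj (ρ U)ᵀ (by rw [transpose_transpose]; exact mul_eq_one_comm.mp hUo)
      (by rw [transpose_transpose]; exact hUo)
    convert this using 1
    rw [transpose_transpose]
    symm
    calc _ = ((ρ U)ᵀ * ρ U) * ρ (DD φ) * ((ρ U)ᵀ * ρ U) := by simp only [Matrix.mul_assoc]
      _ = _ := by rw [hUo, Matrix.one_mul, Matrix.mul_one]
  refine ⟨h1, ?_⟩
  rw [← hρ.tr _ (DD_SU φ), DD_star, hρ.mul _ _ (JJ_SU.mul (DD_SU φ)) JJ_SU.star, hρ.mul _ _ JJ_SU (DD_SU φ), hρ.tr _ JJ_SU]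
  have hJo := hρ.orth JJ_SU
  exact h1.conj _ hJo (mul_eq_one_comm.mp hJo)
end WVs

def cr (r : ℕ) : Matrix (Fin r) (Fin r) ℝ := diagonal fun i => if (i : ℕ) = 0 then -1 else 1

lemma cr_orth (r : ℕ) : (cr r)ᵀ * cr r = 1 := by
  rw [cr, diagonal_transpose, diagonal_mul_diagonal, ← diagonal_one]
  congr 1; ext i; split_ifs <;> norm_num

def Cr (m r : ℕ) : Matrix ((Fin 2 × Fin m) ⊕ Fin r) ((Fin 2 × Fin m) ⊕ Fin r) ℝ := fromBlocks (YY m) 0 0 (cr r)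

lemma Cr_orth (m r : ℕ) : (Cr m r)ᵀ * Cr m r = 1 := by
  rw [Cr, fromBlocks_transpose, fromBlocks_multiply]
  simp [YY_orth, cr_orth]

lemma rep_Cr (m r : ℕ) (hm : 0 < m) (hr : r = 1 ∨ r = 2) :
    ∃ ρ : Matrix (Fin 2) (Fin 2) ℂ → Matrix ((Fin 2 × Fin m) ⊕ Fin r) ((Fin 2 × Fin m) ⊕ Fin r) ℝ,
      SURep ρ ∧ ρ (DD (Real.pi / (2 * m))) = Cr m r := by
  obtain ⟨ρ, h1, h2, h3, h4⟩ := rep_exists m hm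
  rcases hr with rfl | rfl
  · refine ⟨ρ, ⟨h1, h2, h3⟩, h4.trans ?_⟩
    rw [Cox, Cr]
    congr 1
    ext i j
    fin_cases i; fin_cases j; simp [cr]
  · let e : (Fin 2 × Fin m) ⊕ Fin 2 ≃ ((Fin 2 × Fin m) ⊕ Fin 1) ⊕ Fin 1 :=
      ((Equiv.sumAssoc _ _ _).trans (Equiv.sumCongr (Equiv.refl _) (finSumFinEquiv (m := 1) (n := 1)))).symm
    refine ⟨fun A => (fromBlocks (ρ A) 0 0 (1 : Matrix (Fin 1) (Fin 1) ℝ)).submatrix e e, ⟨?_, ?_, ?_⟩, ?_⟩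
    · intro A B hA hB
      rw [← submatrix_mul _ _ _ _ _ e.bijective, fromBlocks_multiply, h1 A B hA hB]
      simp
    · simp [h2]
    · intro A hA
      rw [transpose_submatrix, fromBlocks_transpose, h3 A hA]; simp
    · beta_reduce
      rw [h4, Cox, Cr]
      have e1 : e (Sum.inr 0) = Sum.inl (Sum.inr 0) := rfl
      have e2 : e (Sum.inr 1) = Sum.inr 0 := rfl
      have e3 : ∀ x, e (Sum.inl x) = Sum.inl (Sum.inl x) := fun _ => rfl
      ext (x | i) (y | j)
      · simp [e3]
      · fin_cases j <;> simp [e1, e2, e3]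
      · fin_cases i <;> simp [e1, e2, e3]
      · fin_cases i <;> fin_cases j <;> simp [e1, e2, e3, cr]

lemma remainder (r : ℕ) (hr : r = 1 ∨ r = 2) (g : Matrix (Fin r) (Fin r) ℝ) (hg : gᵀ * g = 1) (hd : g.det = 1) :
    ∃ s : Matrix (Fin r) (Fin r) ℝ, sᵀ * s = 1 ∧ s * cr r = g * cr r * s := by
  rcases hr with rfl | rfl
  · refine ⟨1, by simp, ?_⟩
    have : g = 1 := by
      rw [det_fin_one] at hd
      ext i j; fin_cases i; fin_cases j; simpa using hd
    rw [this]; simp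
  · obtain ⟨φ, hφ⟩ : ∃ φ, g = RR φ := by
      have k00 := congrFun (congrFun hg 0) 0
      have k01 := congrFun (congrFun hg 0) 1
      have k11 := congrFun (congrFun hg 1) 1
      simp [Matrix.mul_apply, Fin.sum_univ_two] at k00 k01 k11
      rw [det_fin_two] at hd
      have a1 : g 1 1 = g 0 0 := by linear_combination g 0 0 * hd - g 1 1 * k00 + g 1 0 * k01
      have a2 : g 0 1 = - g 1 0 := by linear_combination (-g 1 0) * hd - g 0 1 * k00 + g 0 0 * k01
      have hn : ‖(⟨g 0 0, g 1 0⟩ : ℂ)‖ = 1 := by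
        rw [← sq_eq_sq₀ (norm_nonneg _) zero_le_one, ← Complex.normSq_eq_norm_sq, Complex.normSq_mk]; linarith
      refine ⟨Complex.arg ⟨g 0 0, g 1 0⟩, ?_⟩
      have hz : (⟨g 0 0, g 1 0⟩ : ℂ) ≠ 0 := by intro h; rw [h] at hn; simp at hn
      ext i j
      fin_cases i <;> fin_cases j <;> simp [RR, Complex.cos_arg hz, Complex.sin_arg, hn, a1, a2]
    refine ⟨RR (φ / 2), RR_orth _, ?_⟩
    have e : φ = φ / 2 + φ / 2 := by ring
    rw [hφ]
    nth_rewrite 2 [e]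
    rw [← RR_mul, Matrix.mul_assoc, Matrix.mul_assoc]
    congr 1
    have k := Real.cos_sq_add_sin_sq (φ / 2)
    ext i j
    fin_cases i <;> fin_cases j <;> simp [RR, cr, Matrix.mul_apply, Fin.sum_univ_two, diagonal] <;> first | linarith | nlinarith

lemma combine {d₁ d₂ : ℕ} (w₁ : FreeGroup (Fin d₁)) (w₂ : FreeGroup (Fin d₂)) (m r : ℕ) (hr : r = 1 ∨ r = 2)
    (h₁ : WV w₁ (Cr m r)) (h₂ : WV w₂ (Cr m r)ᵀ) (n : ℕ) (hn : n = 2 * m + r)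
    (x : Matrix (Fin n) (Fin n) ℝ) (hx : xᵀ * x = 1) (hd : x.det = 1) :
    ∃ X₁ X₂ : Matrix (Fin n) (Fin n) ℝ, WV w₁ X₁ ∧ WV w₂ X₂ ∧ x = X₁ * X₂ := by
  obtain ⟨θ, g, M, hM, hg, hxM⟩ := normal_form r (by omega) m n hn x hx
  have hM' : M * Mᵀ = 1 := (Matrix.mul_eq_one_comm_of_card_eq _ _ _ (by simp; omega)).mp hM
  have hxe : x = M * fromBlocks (GG θ) 0 0 g * Mᵀ := by
    rw [← hxM, Matrix.mul_assoc, hM', Matrix.mul_one]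
  have hgd : g.det = 1 := by
    rw [hxe, det_conj_of_mul_eq_one hM' hM, det_fromBlocks_zero₁₂, GG_det, one_mul] at hd
    exact hd
  obtain ⟨s, hs, hsc⟩ := remainder r hr g hg hgd
  obtain ⟨β, hβ⟩ := claim θ
  let S : Matrix ((Fin 2 × Fin m) ⊕ Fin r) ((Fin 2 × Fin m) ⊕ Fin r) ℝ := fromBlocks (GG β) 0 0 s
  have hS : Sᵀ * S = 1 := by
    simp only [S]
    rw [fromBlocks_transpose, fromBlocks_multiply]
    simp [GG_orth, hs]
  have hS' : S * Sᵀ = 1 := mul_eq_one_comm.mp hS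
  have hSC : S * Cr m r = fromBlocks (GG θ) 0 0 g * Cr m r * S := by
    simp only [S, Cr, fromBlocks_multiply]
    simp [hβ, hsc]
  have hC := mul_eq_one_comm.mp (Cr_orth m r)
  refine ⟨(M * S) * Cr m r * (M * S)ᵀ, M * (Cr m r)ᵀ * Mᵀ, h₁.conj _ ?_ ?_, h₂.conj _ hM hM', ?_⟩
  · rw [transpose_mul, Matrix.mul_assoc, ← Matrix.mul_assoc Mᵀ, hM, Matrix.one_mul, hS]
  · rw [transpose_mul, Matrix.mul_assoc, ← Matrix.mul_assoc S, hS', Matrix.one_mul, hM']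
  · rw [hxe]
    generalize fromBlocks (GG θ) 0 0 g = G at *
    rw [transpose_mul]
    symm
    calc _ = M * ((S * Cr m r) * (Sᵀ * ((Mᵀ * M) * ((Cr m r)ᵀ * Mᵀ)))) := by simp only [Matrix.mul_assoc]
      _ = M * (G * (Cr m r * ((S * Sᵀ) * ((Cr m r)ᵀ * Mᵀ)))) := by
        rw [hM, Matrix.one_mul, hSC]; simp only [Matrix.mul_assoc]
      _ = M * (G * ((Cr m r * (Cr m r)ᵀ) * Mᵀ)) := by rw [hS', Matrix.one_mul]; simp only [Matrix.mul_assoc]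
      _ = _ := by rw [hC, Matrix.one_mul, Matrix.mul_assoc]
end PartF

/-- For all nontrivial words `w₁, w₂`, there is `N` such that for all `n ≥ N`,
`SO(n) = w₁(SO(n)) · w₂(SO(n))`. -/
theorem so_waring_two {d₁ d₂ : ℕ} (w₁ : FreeGroup (Fin d₁)) (w₂ : FreeGroup (Fin d₂))
    (hw₁ : w₁ ≠ 1) (hw₂ : w₂ ≠ 1) :
    ∃ N : ℕ, ∀ n : ℕ, N ≤ n → ∀ x ∈ SO n,
      ∃ g₁ ∈ wordValuesIn w₁ (SO n), ∃ g₂ ∈ wordValuesIn w₂ (SO n), x = g₁ * g₂ := by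
  obtain ⟨M₁, hM₁⟩ := wv_of_rep w₁ hw₁
  obtain ⟨M₂, hM₂⟩ := wv_of_rep w₂ hw₂
  refine ⟨2 * (M₁ + M₂ + 1) + 2, fun n hn x hx => ?_⟩
  obtain ⟨m, r, hr, hnm⟩ : ∃ m r : ℕ, (r = 1 ∨ r = 2) ∧ n = 2 * m + r := by
    rcases Nat.even_or_odd' n with ⟨k, hk | hk⟩
    · exact ⟨k - 1, 2, Or.inr rfl, by omega⟩
    · exact ⟨k, 1, Or.inl rfl, hk⟩
  obtain ⟨ρ, hρ, hC⟩ := rep_Cr m r (by omega) hr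
  have h₁ := (hM₁ m (by omega) _ ρ hρ).1
  have h₂ := (hM₂ m (by omega) _ ρ hρ).2
  rw [hC] at h₁ h₂
  have hxo : (x : Matrix (Fin n) (Fin n) ℝ).transpose * (x : Matrix (Fin n) (Fin n) ℝ) = 1 := by
    have h := x.2
    rw [Matrix.mem_orthogonalGroup_iff'] at h
    exact h
  obtain ⟨X₁, X₂, hX₁, hX₂, he⟩ := combine w₁ w₂ m r hr h₁ h₂ n hnm x hxo hx
  obtain ⟨y₁, hy₁, e₁⟩ := hX₁.val
  obtain ⟨y₂, hy₂, e₂⟩ := hX₂.val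
  refine ⟨y₁, hy₁, y₂, hy₂, Subtype.ext ?_⟩
  rw [he, ← e₁, ← e₂]
  rfl
end

section
/- Let A and B be two elements of the compact symplectic group Sp(n). If A and B have the same characteristic polynomial (as 2n×2n complex matrices), then A and B are conjugate in Sp(n), i.e., there exists U ∈ Sp(n) with UAU⁻¹ = B. -/
open scoped Matrix

/-- The standard symplectic form `J = [[0, I_n], [-I_n, 0]]`. -/
def sympJ (n : ℕ) : Matrix (Fin n ⊕ Fin n) (Fin n ⊕ Fin n) ℂ :=
  Matrix.fromBlocks 0 1 (-1) 0

/-- The compact symplectic group `Sp(n) = U(2n) ∩ Sp(2n, ℂ)`, as the subset of the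
unitary group of `2n × 2n` complex matrices `M` satisfying `Mᵀ J M = J`. -/
def CompactSp (n : ℕ) : Set (Matrix.unitaryGroup (Fin n ⊕ Fin n) ℂ) :=
  {M | (M : Matrix (Fin n ⊕ Fin n) (Fin n ⊕ Fin n) ℂ)ᵀ * sympJ n *
        (M : Matrix (Fin n ⊕ Fin n) (Fin n ⊕ Fin n) ℂ) = sympJ n}

open Matrix in
theorem unitary_diag {m : Type*} [Fintype m] [DecidableEq m] (A : Matrix m m ℂ)
    (hA : A ∈ Matrix.unitaryGroup m ℂ) :
    ∃ Q ∈ Matrix.unitaryGroup m ℂ, ∃ d : m → ℂ, A * Q = Q * Matrix.diagonal d := by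
  have h1 : A * Aᴴ = 1 := Matrix.mem_unitaryGroup_iff.mp hA
  have h2 : Aᴴ * A = 1 := Matrix.mem_unitaryGroup_iff'.mp hA
  have hH : (A + Aᴴ).IsHermitian := by
    simp [Matrix.IsHermitian, add_comm]
  have hK : (Complex.I • (A - Aᴴ)).IsHermitian := by
    simp only [Matrix.IsHermitian, conjTranspose_smul, conjTranspose_sub,
      conjTranspose_conjTranspose, Complex.star_def, Complex.conj_I, neg_smul, ← smul_neg, neg_sub]
  have hS := isSymmetric_toEuclideanLin_iff.mpr hH
  have hT := isSymmetric_toEuclideanLin_iff.mpr hK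
  have hc : Commute (A + Aᴴ) (Complex.I • (A - Aᴴ)) := by
    simp only [Commute, SemiconjBy, Matrix.mul_smul, Matrix.smul_mul]
    congr 1
    simp only [mul_sub, add_mul, sub_mul, mul_add, h1, h2]
    abel
  have hcomm : Commute (toEuclideanLin (A + Aᴴ)) (toEuclideanLin (Complex.I • (A - Aᴴ))) := by
    ext1 v
    have h3 := congrArg (fun M => WithLp.toLp 2 (M *ᵥ (WithLp.ofLp v))) hc.eq
    simp only [← mulVec_mulVec] at h3
    exact h3
  have hint := LinearMap.IsSymmetric.directSum_isInternal_of_commute hS hT hcomm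
  have hort := LinearMap.IsSymmetric.orthogonalFamily_eigenspace_inf_eigenspace hS hT
  have hfin := WellFoundedGT.finite_ne_bot_of_iSupIndep hint.submodule_iSupIndep
  have hint' := DirectSum.isInternal_ne_bot_iff.mpr hint
  have hort' := hort.comp (γ := {i : ℂ × ℂ // Module.End.eigenspace (toEuclideanLin (A + Aᴴ)) i.2 ⊓
    Module.End.eigenspace (toEuclideanLin (Complex.I • (A - Aᴴ))) i.1 ≠ ⊥}) Subtype.val_injective
  have : Fintype {i : ℂ × ℂ // Module.End.eigenspace (toEuclideanLin (A + Aᴴ)) i.2 ⊓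
    Module.End.eigenspace (toEuclideanLin (Complex.I • (A - Aᴴ))) i.1 ≠ ⊥} := hfin.fintype
  let e : Fin (Fintype.card m) ≃ m := (Fintype.equivOfCardEq (Fintype.card_fin _))
  let b := (hint'.subordinateOrthonormalBasis (finrank_euclideanSpace (𝕜 := ℂ) (ι := m)) hort').reindex e
  have hb : ∀ j, ∃ μ : ℂ, A *ᵥ (WithLp.ofLp (b j)) = μ • WithLp.ofLp (b j) := by
    intro j
    have hmem := hint'.subordinateOrthonormalBasis_subordinate
      (finrank_euclideanSpace (𝕜 := ℂ) (ι := m)) (e.symm j) hort'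
    set i := hint'.subordinateOrthonormalBasisIndex
      (finrank_euclideanSpace (𝕜 := ℂ) (ι := m)) (e.symm j) hort'
    have hbj : b j = hint'.subordinateOrthonormalBasis
      (finrank_euclideanSpace (𝕜 := ℂ) (ι := m)) hort' (e.symm j) := by simp [b]
    rw [← hbj] at hmem
    obtain ⟨g1, g2⟩ := hmem
    have g1' := congrArg WithLp.ofLp (Module.End.mem_eigenspace_iff.mp g1)
    have g2' := congrArg WithLp.ofLp (Module.End.mem_eigenspace_iff.mp g2)
    simp only [toLpLin_apply, WithLp.ofLp_smul] at g1' g2'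
    refine ⟨(1/2) * (i.1.2 - Complex.I * i.1.1), ?_⟩
    have hAA : A = (1/2 : ℂ) • ((A + Aᴴ) - Complex.I • (Complex.I • (A - Aᴴ))) := by
      rw [smul_smul, Complex.I_mul_I]
      module
    conv_lhs => rw [hAA]
    rw [smul_mulVec, sub_mulVec, smul_mulVec _ (Complex.I • (A - Aᴴ)), g1', g2']
    module
  choose d hd using hb
  refine ⟨(EuclideanSpace.basisFun m ℂ).toBasis.toMatrix b.toBasis,
    (EuclideanSpace.basisFun m ℂ).toMatrix_orthonormalBasis_mem_unitary b, d, ?_⟩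
  ext i j
  rw [mul_diagonal]
  have := congrFun (hd j) i
  simpa [mulVec, dotProduct, Matrix.mul_apply, Module.Basis.toMatrix_apply, mul_comm] using this

open Matrix in
theorem unitary_conj {m : Type*} [Fintype m] [DecidableEq m] (A B : Matrix m m ℂ)
    (hA : A ∈ Matrix.unitaryGroup m ℂ) (hB : B ∈ Matrix.unitaryGroup m ℂ)
    (h : A.charpoly = B.charpoly) :
    ∃ V ∈ Matrix.unitaryGroup m ℂ, V * A = B * V := by
  obtain ⟨P, hP, d, hd⟩ := unitary_diag A hA
  obtain ⟨Q, hQ, e, he⟩ := unitary_diag B hB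
  have key : ∀ (A P : Matrix m m ℂ) (d : m → ℂ), P ∈ Matrix.unitaryGroup m ℂ →
      A * P = P * diagonal d → A.charpoly.roots = Finset.univ.val.map d := by
    intro A P d hP hd
    have h1 : P * star P = 1 := Matrix.mem_unitaryGroup_iff.mp hP
    have h2 : star P * P = 1 := Matrix.mem_unitaryGroup_iff'.mp hP
    have : A = P * diagonal d * star P := by rw [← hd, mul_assoc, h1, mul_one]
    have h4 : (P * diagonal d * star P).charpoly = (diagonal d).charpoly := by
      rw [mul_assoc, charpoly_mul_comm, mul_assoc, h2, mul_one]
    rw [this, h4]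
    rw [charpoly_diagonal]
    rw [← Polynomial.roots_multiset_prod_X_sub_C (Finset.univ.val.map d), Multiset.map_map]
    rfl
  have hde : Finset.univ.val.map d = Finset.univ.val.map e := by
    rw [← key A P d hP hd, ← key B Q e hQ he, h]
  have hcard : ∀ c, Nonempty ({a // d a = c} ≃ {b // e b = c}) := by
    intro c
    have := congrArg (Multiset.count c) hde
    simp only [Multiset.count_map] at this
    refine ⟨Fintype.equivOfCardEq ?_⟩
    rw [Fintype.card_subtype, Fintype.card_subtype]
    simpa [Finset.card, Finset.filter, eq_comm] using this
  let f : m ≃ m := Equiv.ofFiberEquiv fun c => (hcard c).some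
  have hf : ∀ a, e (f a) = d a := fun a => Equiv.ofFiberEquiv_map _ a
  let R : Matrix m m ℂ := Q.submatrix id f
  have hQ1 : Q * star Q = 1 := Matrix.mem_unitaryGroup_iff.mp hQ
  have hP2 : star P * P = 1 := Matrix.mem_unitaryGroup_iff'.mp hP
  have hP1 : P * star P = 1 := Matrix.mem_unitaryGroup_iff.mp hP
  have hR : R ∈ Matrix.unitaryGroup m ℂ := by
    rw [Matrix.mem_unitaryGroup_iff]
    have : star R = (star Q).submatrix f id := rfl
    rw [this, Matrix.submatrix_mul_equiv, hQ1]
    simp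
  have hBR : B * R = R * diagonal d := by
    ext i j
    have := congrFun (congrFun he i) (f j)
    rw [mul_diagonal] at this ⊢
    rw [hf] at this
    exact this
  refine ⟨R * star P, mul_mem hR (Unitary.star_mem hP), ?_⟩
  have hPA : star P * A = diagonal d * star P := by
    have : A = P * diagonal d * star P := by rw [← hd, mul_assoc, hP1, mul_one]
    rw [this, ← mul_assoc, ← mul_assoc, hP2, one_mul]
  rw [mul_assoc, hPA, ← mul_assoc, ← mul_assoc, hBR]

open Matrix in
theorem unitary_sqrt {m : Type*} [Fintype m] [DecidableEq m] (W : Matrix m m ℂ)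
    (hW : W ∈ Matrix.unitaryGroup m ℂ) :
    ∃ p : Polynomial ℂ, Polynomial.aeval W p ∈ Matrix.unitaryGroup m ℂ ∧
      Polynomial.aeval W p * Polynomial.aeval W p = W := by
  obtain ⟨P, hP, d, hd⟩ := unitary_diag W hW
  have h1 : P * star P = 1 := Matrix.mem_unitaryGroup_iff.mp hP
  have h2 : star P * P = 1 := Matrix.mem_unitaryGroup_iff'.mp hP
  have hWd : W = P * diagonal d * star P := by rw [← hd, mul_assoc, h1, mul_one]
  have hdW : diagonal d = star P * W * P := by
    rw [mul_assoc, hd, ← mul_assoc, h2, one_mul]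
  have hdu : diagonal d ∈ Matrix.unitaryGroup m ℂ := by
    rw [hdW]; exact mul_mem (mul_mem (Unitary.star_mem hP) hW) hP
  have hdn : ∀ i, ‖d i‖ = 1 := by
    intro i
    have := congrFun (congrFun (Matrix.mem_unitaryGroup_iff.mp hdu) i) i
    simp only [star_eq_conjTranspose, diagonal_conjTranspose, diagonal_mul_diagonal,
      diagonal_apply_eq, Pi.star_apply, one_apply_eq, Complex.star_def, Complex.mul_conj] at this
    have h3 : Complex.normSq (d i) = 1 := by exact_mod_cast this
    rw [Complex.normSq_eq_norm_sq] at h3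
    nlinarith [norm_nonneg (d i)]
  have hs : ∀ z : ℂ, ∃ w : ℂ, w * w = z := fun z => by
    obtain ⟨w, hw⟩ := IsAlgClosed.exists_pow_nat_eq z (n := 2) (by norm_num)
    exact ⟨w, by rw [← hw, sq]⟩
  choose r hr using hs
  let p : Polynomial ℂ := Lagrange.interpolate (Finset.univ.image d) id r
  have hp : ∀ i, p.eval (d i) = r (d i) := fun i =>
    Lagrange.eval_interpolate_at_node (v := id) r (fun _ _ _ _ h => h)
      (Finset.mem_image_of_mem d (Finset.mem_univ i))
  have hpow : ∀ q : Polynomial ℂ, Polynomial.aeval W q * P = P * diagonal (fun i => q.eval (d i)) := by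
    intro q
    induction q using Polynomial.induction_on' with
    | add a b ha hb =>
      rw [map_add, add_mul, ha, hb, ← mul_add, diagonal_add]
      simp
    | monomial k a =>
      have hk : ∀ k : ℕ, W ^ k * P = P * diagonal (fun i => d i ^ k) := by
        intro k
        induction k with
        | zero => simp
        | succ k ih =>
          rw [pow_succ, mul_assoc, hd, ← mul_assoc, ih, mul_assoc, diagonal_mul_diagonal]
          simp [pow_succ]
      ext i j
      have := congrFun (congrFun (hk k) i) j
      rw [mul_diagonal] at this ⊢
      simp only [Polynomial.aeval_monomial, Algebra.algebraMap_eq_smul_one, smul_mul_assoc,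
        one_mul, Matrix.smul_apply, this, Polynomial.eval_monomial, smul_eq_mul]
      ring
  have hE : Polynomial.aeval W p = P * diagonal (fun i => r (d i)) * star P := by
    have := hpow p
    simp only [hp] at this
    rw [← this, mul_assoc, h1, mul_one]
  refine ⟨p, ?_, ?_⟩
  · rw [hE]
    refine mul_mem (mul_mem hP ?_) (Unitary.star_mem hP)
    rw [Matrix.mem_unitaryGroup_iff, star_eq_conjTranspose, diagonal_conjTranspose,
      diagonal_mul_diagonal, ← diagonal_one]
    congr 1
    ext i
    have h3 : ‖r (d i)‖ = 1 := by
      have := congrArg norm (hr (d i))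
      rw [norm_mul, hdn] at this
      nlinarith [norm_nonneg (r (d i))]
    simp [Complex.mul_conj, Complex.normSq_eq_norm_sq, h3]
  · have : P * diagonal (fun i => r (d i)) * star P * (P * diagonal (fun i => r (d i)) * star P)
        = P * (diagonal (fun i => r (d i)) * (star P * P) * diagonal (fun i => r (d i))) * star P := by
      simp only [mul_assoc]
    rw [hE, this, h2, mul_one, diagonal_mul_diagonal]
    simp only [hr]
    exact hWd.symm

theorem sympJ_sq (n : ℕ) : sympJ n * sympJ n = -1 := by
  rw [sympJ, Matrix.fromBlocks_multiply, ← Matrix.fromBlocks_one, Matrix.fromBlocks_neg]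
  simp

theorem sympJ_transpose (n : ℕ) : (sympJ n)ᵀ = -sympJ n := by
  rw [sympJ, Matrix.fromBlocks_transpose, Matrix.fromBlocks_neg]
  simp

theorem aeval_intertwine {m : Type*} [Fintype m] [DecidableEq m] (W J : Matrix m m ℂ)
    (h : Wᵀ * J = J * W) (p : Polynomial ℂ) :
    (Polynomial.aeval W p)ᵀ * J = J * Polynomial.aeval W p := by
  induction p using Polynomial.induction_on' with
  | add a b ha hb => simp only [map_add, Matrix.transpose_add, add_mul, mul_add, ha, hb]
  | monomial k a =>
    have hk : (W ^ k)ᵀ * J = J * W ^ k := by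
      induction k with
      | zero => simp
      | succ k ih =>
        rw [pow_succ', Matrix.transpose_mul, mul_assoc, h, ← mul_assoc, ih, mul_assoc,
          ← pow_succ, ← pow_succ']
    simp only [Polynomial.aeval_monomial, Algebra.algebraMap_eq_smul_one, smul_mul_assoc,
        one_mul, Matrix.transpose_smul, hk, mul_smul_comm]

/-- In `Sp(n)`, the characteristic polynomial determines the conjugacy class:
if `A, B ∈ Sp(n)` have the same characteristic polynomial, they are conjugate in `Sp(n)`. -/
theorem sp_conj_of_charpoly_eq {n : ℕ} (A B : Matrix.unitaryGroup (Fin n ⊕ Fin n) ℂ)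
    (hA : A ∈ CompactSp n) (hB : B ∈ CompactSp n)
    (h : (A : Matrix (Fin n ⊕ Fin n) (Fin n ⊕ Fin n) ℂ).charpoly =
         (B : Matrix (Fin n ⊕ Fin n) (Fin n ⊕ Fin n) ℂ).charpoly) :
    ∃ U ∈ CompactSp n, U * A * U⁻¹ = B := by
  obtain ⟨A, hAu⟩ := A
  obtain ⟨B, hBu⟩ := B
  change Aᵀ * sympJ n * A = sympJ n at hA
  change Bᵀ * sympJ n * B = sympJ n at hB
  change A.charpoly = B.charpoly at h
  obtain ⟨V, hV, hVA⟩ := unitary_conj A B hAu hBu h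
  have hJ2 := sympJ_sq n
  have hJt := sympJ_transpose n
  have hJu : sympJ n ∈ Matrix.unitaryGroup (Fin n ⊕ Fin n) ℂ := by
    rw [Matrix.mem_unitaryGroup_iff]
    have : star (sympJ n) = - sympJ n := by
      rw [Matrix.star_eq_conjTranspose, sympJ, Matrix.fromBlocks_conjTranspose,
        Matrix.fromBlocks_neg]
      simp
    rw [this, mul_neg, hJ2, neg_neg]
  have hVt : Vᵀ ∈ Matrix.unitaryGroup (Fin n ⊕ Fin n) ℂ := by
    rw [Matrix.mem_unitaryGroup_iff']
    have h1 : V * star V = 1 := Matrix.mem_unitaryGroup_iff.mp hV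
    have := congrArg Matrix.transpose h1
    rwa [Matrix.transpose_mul, Matrix.transpose_one] at this
  suffices hs : ∃ U ∈ Matrix.unitaryGroup (Fin n ⊕ Fin n) ℂ,
      Uᵀ * sympJ n * U = sympJ n ∧ U * A = B * U by
    obtain ⟨U, hU, h1, h2⟩ := hs
    refine ⟨⟨U, hU⟩, h1, ?_⟩
    rw [mul_inv_eq_iff_eq_mul]
    exact Subtype.ext h2
  generalize sympJ n = J at *
  have hJJ : -(J * J) = 1 := by rw [hJ2, neg_neg]
  -- `W = J⁻¹ Vᵀ J V`
  obtain ⟨W, hW⟩ : ∃ W, W = -(J * (Vᵀ * J * V)) := ⟨_, rfl⟩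
  have hJW : J * W = Vᵀ * J * V := by
    rw [hW, mul_neg, ← mul_assoc, hJ2]; simp
  have hWu : W ∈ Matrix.unitaryGroup (Fin n ⊕ Fin n) ℂ := by
    have h3 : -(1 : Matrix (Fin n ⊕ Fin n) (Fin n ⊕ Fin n) ℂ) ∈
        Matrix.unitaryGroup (Fin n ⊕ Fin n) ℂ := by
      rw [← hJ2]; exact mul_mem hJu hJu
    have h4 : W = -1 * (J * (Vᵀ * J * V)) := by rw [hW]; simp
    rw [h4]
    exact mul_mem h3 (mul_mem hJu (mul_mem (mul_mem hVt hJu) hV))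
  have hWJ : Wᵀ * J = J * W := by
    have := congrArg Matrix.transpose hJW
    simp only [Matrix.transpose_mul, hJt, Matrix.transpose_transpose, mul_neg, neg_mul,
      neg_inj] at this
    rw [this, hJW, mul_assoc]
  have hA' : A * star A = 1 := Matrix.mem_unitaryGroup_iff.mp hAu
  have hAt : (star A)ᵀ * Aᵀ = 1 := by rw [← Matrix.transpose_mul, hA', Matrix.transpose_one]
  have hAJ : J * A = (star A)ᵀ * J := by
    rw [← hA, ← mul_assoc, ← mul_assoc, hAt, one_mul, hA]
  have hWA : W * A = A * W := by
    have h5 : Aᵀ * (Vᵀ * J * V * A) = Vᵀ * J * V := by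
      calc Aᵀ * (Vᵀ * J * V * A) = (V * A)ᵀ * J * (V * A) := by
            simp only [Matrix.transpose_mul, mul_assoc]
        _ = Vᵀ * (Bᵀ * J * B) * V := by rw [hVA]; simp only [Matrix.transpose_mul, mul_assoc]
        _ = _ := by rw [hB]
    have h6 : J * (W * A) = J * (A * W) := by
      calc J * (W * A) = (star A)ᵀ * Aᵀ * (Vᵀ * J * V * A) := by
            rw [hAt, one_mul, ← mul_assoc, hJW]
        _ = (star A)ᵀ * J * W := by rw [mul_assoc, h5, ← hJW, mul_assoc]
        _ = _ := by rw [← hAJ, mul_assoc]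
    have h7 := congrArg (fun X => -(J * X)) h6
    simpa only [← mul_assoc, ← neg_mul, hJJ, one_mul] using h7
  obtain ⟨p, hCu, hCC⟩ := unitary_sqrt W hWu
  have hCJ := aeval_intertwine W J hWJ p
  have hCA : Commute (Polynomial.aeval W p) A := by
    have h9 := Algebra.adjoin_le_centralizer_centralizer ℂ {W} (Polynomial.aeval_mem_adjoin_singleton ℂ W (p := p))
    exact (h9 A (by rintro x rfl; exact hWA)).symm
  generalize Polynomial.aeval W p = C at *
  have hC1 : C * star C = 1 := Matrix.mem_unitaryGroup_iff.mp hCu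
  have hC2 : star C * C = 1 := Matrix.mem_unitaryGroup_iff'.mp hCu
  have hC1t : (star C)ᵀ * Cᵀ = 1 := by rw [← Matrix.transpose_mul, hC1, Matrix.transpose_one]
  have hV2 : star V * V = 1 := Matrix.mem_unitaryGroup_iff'.mp hV
  have hV1 : V * star V = 1 := Matrix.mem_unitaryGroup_iff.mp hV
  refine ⟨V * star C, mul_mem hV (Unitary.star_mem hCu), ?_, ?_⟩
  · calc (V * star C)ᵀ * J * (V * star C) = (star C)ᵀ * (Vᵀ * J * V) * star C := by
          simp only [Matrix.transpose_mul, mul_assoc]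
      _ = (star C)ᵀ * (Cᵀ * J * C) * star C := by rw [← hJW, ← hCC, hCJ, mul_assoc J]
      _ = ((star C)ᵀ * Cᵀ) * J * (C * star C) := by simp only [mul_assoc]
      _ = J := by rw [hC1t, hC1, one_mul, mul_one]
  · have h8 : star C * A = A * star C := by
      calc star C * A = star C * (A * C) * star C := by rw [mul_assoc, mul_assoc A, hC1, mul_one]
        _ = star C * (C * A) * star C := by rw [hCA.eq]
        _ = A * star C := by rw [← mul_assoc, hC2, one_mul]
    rw [mul_assoc, h8, ← mul_assoc, hVA, mul_assoc]
end

section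
/- Let w₁ ∈ F_{d₁} and w₂ ∈ F_{d₂} be words. If the diagonal matrix diag(i, −i) belongs to both w₁(SU(2)) and w₂(SU(2)), then for every integer n ≥ 2, every element of SU(n) is a product g₁g₂ with g₁ ∈ w₁(SU(n)) and g₂ ∈ w₂(SU(n)); that is, SU(n) = w₁(SU(n))·w₂(SU(n)). -/
/-- `SU(n)`, the special unitary group, as the subset of the unitary group consisting of
matrices of determinant 1. -/
def SU (n : ℕ) : Set (Matrix.unitaryGroup (Fin n) ℂ) :=
  {M | (M : Matrix (Fin n) (Fin n) ℂ).det = 1}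


open scoped Matrix

/-- Diagonal unitary matrices. -/
noncomputable def dg {n : ℕ} : (Fin n → Circle) →* Matrix.unitaryGroup (Fin n) ℂ where
  toFun t := ⟨Matrix.diagonal (fun i => (t i : ℂ)), by
    rw [Matrix.mem_unitaryGroup_iff, Matrix.star_eq_conjTranspose, Matrix.diagonal_conjTranspose,
      Matrix.diagonal_mul_diagonal, ← Matrix.diagonal_one]
    congr 1; funext i
    have := Circle.normSq_coe (t i)
    simp [Complex.mul_conj]⟩
  map_one' := by ext i j; simp [Matrix.diagonal, Matrix.one_apply]
  map_mul' s t := by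
    apply Subtype.ext
    simp [Matrix.diagonal_mul_diagonal]

lemma dg_val {n : ℕ} (t : Fin n → Circle) :
    ((dg t : Matrix.unitaryGroup (Fin n) ℂ) : Matrix (Fin n) (Fin n) ℂ)
      = Matrix.diagonal (fun i => (t i : ℂ)) := rfl

lemma diagonalize {n : ℕ} (x : Matrix.unitaryGroup (Fin n) ℂ) :
    ∃ (u : Matrix.unitaryGroup (Fin n) ℂ) (t : Fin n → Circle), x = u * dg t * u⁻¹ := by
  obtain ⟨ν, hν⟩ : ∃ ν : Circle, ¬ (x : Matrix (Fin n) (Fin n) ℂ).charpoly.IsRoot (ν : ℂ) := by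
    have hfin : {z : ℂ | (x : Matrix (Fin n) (Fin n) ℂ).charpoly.IsRoot z}.Finite :=
      Polynomial.finite_setOfPred_isRoot (Matrix.charpoly_monic _).ne_zero
    by_contra! hcon
    have : Set.Infinite (Set.range ((↑) : Circle → ℂ)) := by
      have hinf : Infinite Circle := by
        apply Infinite.of_injective (fun k : ℕ => Circle.exp ((1 : ℝ) / ((k : ℝ) + 1)))
        intro a b hab
        have hpos : ∀ k : ℕ, (1 : ℝ) / ((k : ℝ) + 1) ∈ Set.Ioc (-Real.pi) Real.pi := by
          intro k
          have h0 : (0 : ℝ) < (1 : ℝ) / ((k : ℝ) + 1) := by positivity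
          have h1 : (1 : ℝ) / ((k : ℝ) + 1) ≤ 1 := by
            rw [div_le_one (by positivity)]; linarith [(Nat.cast_nonneg k : (0 : ℝ) ≤ k)]
          have := Real.pi_gt_three
          constructor <;> linarith
        have := congrArg (fun c : Circle => Complex.arg c) hab
        simp only [Circle.arg_exp (hpos _).1 (hpos _).2] at this
        rw [one_div, one_div, inv_inj] at this
        have h3 : (a : ℝ) = b := by linarith
        exact_mod_cast h3
      exact @Set.infinite_range_of_injective _ _ hinf _ Circle.coe_injective
    apply this
    apply hfin.subset
    rintro _ ⟨c, rfl⟩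
    exact hcon c
  set X : Matrix (Fin n) (Fin n) ℂ := (x : Matrix (Fin n) (Fin n) ℂ) with hX
  have hν1 : (starRingEnd ℂ) (ν : ℂ) * ν = 1 := by
    rw [mul_comm, Complex.mul_conj]; simp
  have hXX : Xᴴ * X = 1 := by
    have := Matrix.UnitaryGroup.star_mul_self x
    simpa [Matrix.star_eq_conjTranspose] using this
  set A : Matrix (Fin n) (Fin n) ℂ := (ν : ℂ) • 1 - X with hA
  have hdet : IsUnit A.det := by
    rw [Polynomial.IsRoot, Matrix.eval_charpoly] at hν
    rw [isUnit_iff_ne_zero]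
    convert hν using 2
    rw [hA, Matrix.smul_one_eq_diagonal]; rfl
  set S : Matrix (Fin n) (Fin n) ℂ := (ν : ℂ) • 1 + X with hS
  set H : Matrix (Fin n) (Fin n) ℂ := Complex.I • (S * A⁻¹) with hH
  have hAH : Aᴴ = (starRingEnd ℂ ν) • 1 - Xᴴ := by
    simp [hA, Matrix.conjTranspose_sub, Matrix.conjTranspose_smul]
  have hSH : Sᴴ = (starRingEnd ℂ ν) • 1 + Xᴴ := by
    simp [hS, Matrix.conjTranspose_add, Matrix.conjTranspose_smul]
  have key : Sᴴ * A = - (Aᴴ * S) := by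
    rw [hAH, hSH, hA, hS]
    simp only [add_mul, mul_sub, sub_mul, mul_add, hXX, Matrix.smul_mul, Matrix.mul_smul, one_mul,
      mul_one, smul_smul, mul_comm (ν : ℂ), hν1, one_smul]
    abel
  have hAA : A * A⁻¹ = 1 := Matrix.mul_nonsing_inv _ hdet
  have hAA' : A⁻¹ * A = 1 := Matrix.nonsing_inv_mul _ hdet
  have hBA : (A⁻¹)ᴴ * Aᴴ = 1 := by rw [← Matrix.conjTranspose_mul, hAA]; simp
  have hHerm : H.IsHermitian := by
    unfold Matrix.IsHermitian
    rw [hH, Matrix.conjTranspose_smul, Matrix.conjTranspose_mul]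
    have h1 : (A⁻¹)ᴴ * Sᴴ = -(S * A⁻¹) := by
      calc (A⁻¹)ᴴ * Sᴴ = (A⁻¹)ᴴ * (Sᴴ * A) * A⁻¹ := by
            rw [Matrix.mul_assoc, Matrix.mul_assoc, hAA, Matrix.mul_one]
        _ = -(((A⁻¹)ᴴ * Aᴴ) * S * A⁻¹) := by rw [key]; simp [Matrix.mul_assoc]
        _ = _ := by rw [hBA, Matrix.one_mul]
    rw [h1]; simp
  have hHA : H * A = Complex.I • S := by
    rw [hH, Matrix.smul_mul, Matrix.mul_assoc, hAA', Matrix.mul_one]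
  -- (H + I) X = ν (H - I)
  have hrel : (H + Complex.I • 1) * X = (ν : ℂ) • (H - Complex.I • 1) := by
    rw [hA, hS, mul_sub, Matrix.mul_smul, mul_one, smul_add] at hHA
    rw [add_mul, Matrix.smul_mul (M := (1 : Matrix (Fin n) (Fin n) ℂ)), Matrix.one_mul, smul_sub]
    have h5 : (ν : ℂ) • H = H * X + (Complex.I • (ν : ℂ) • (1 : Matrix (Fin n) (Fin n) ℂ) + Complex.I • X) := by
      rw [← hHA]; abel
    have h6 : (ν : ℂ) • Complex.I • (1 : Matrix (Fin n) (Fin n) ℂ) = Complex.I • (ν : ℂ) • (1 : Matrix (Fin n) (Fin n) ℂ) :=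
      smul_comm _ _ _
    rw [h5, h6]; abel
  set u := hHerm.eigenvectorUnitary with hu
  set Λ := hHerm.eigenvalues with hΛ
  have hspec : H = (u : Matrix (Fin n) (Fin n) ℂ) * Matrix.diagonal (fun i => (Λ i : ℂ)) * star (u : Matrix (Fin n) (Fin n) ℂ) := by
    have := hHerm.spectral_theorem
    rw [Unitary.conjStarAlgAut_apply] at this
    exact this
  have huu : star (u : Matrix (Fin n) (Fin n) ℂ) * u = 1 := Matrix.UnitaryGroup.star_mul_self u
  have huu' : (u : Matrix (Fin n) (Fin n) ℂ) * star (u : Matrix (Fin n) (Fin n) ℂ) = 1 :=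
    Matrix.mem_unitaryGroup_iff.mp u.2
  set Y : Matrix (Fin n) (Fin n) ℂ := star (u : Matrix (Fin n) (Fin n) ℂ) * X * u with hY
  have hDY : Matrix.diagonal (fun i => (Λ i : ℂ) + Complex.I) * Y
      = Matrix.diagonal (fun i => (ν : ℂ) * ((Λ i : ℂ) - Complex.I)) := by
    have e1 : star (u : Matrix (Fin n) (Fin n) ℂ) * H * u = Matrix.diagonal (fun i => (Λ i : ℂ)) := by
      rw [hspec]
      calc _ = (star (u : Matrix (Fin n) (Fin n) ℂ) * u) * Matrix.diagonal (fun i => (Λ i : ℂ)) * (star (u : Matrix (Fin n) (Fin n) ℂ) * u) := by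
            simp only [Matrix.mul_assoc]
        _ = _ := by rw [huu]; simp
    have e2 : Matrix.diagonal (fun i => (Λ i : ℂ) + Complex.I) = star (u : Matrix (Fin n) (Fin n) ℂ) * (H + Complex.I • 1) * u := by
      rw [mul_add, add_mul, e1, Matrix.mul_smul, mul_one, Matrix.smul_mul, huu, Matrix.smul_one_eq_diagonal, Matrix.diagonal_add]
    have e3 : Matrix.diagonal (fun i => (ν : ℂ) * ((Λ i : ℂ) - Complex.I)) = star (u : Matrix (Fin n) (Fin n) ℂ) * ((ν : ℂ) • (H - Complex.I • 1)) * u := by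
      rw [Matrix.mul_smul, Matrix.smul_mul, mul_sub, sub_mul, e1, Matrix.mul_smul, mul_one, Matrix.smul_mul, huu, Matrix.smul_one_eq_diagonal, Matrix.diagonal_sub, ← Matrix.diagonal_smul]
      rfl
    rw [e2, e3, hY, ← hrel]
    calc _ = star (u : Matrix (Fin n) (Fin n) ℂ) * (H + Complex.I • 1) * ((u : Matrix (Fin n) (Fin n) ℂ) * star (u : Matrix (Fin n) (Fin n) ℂ)) * X * u := by
            simp only [Matrix.mul_assoc]
      _ = _ := by rw [huu']; simp only [Matrix.mul_assoc, Matrix.one_mul]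
  have hne : ∀ i, (Λ i : ℂ) + Complex.I ≠ 0 := by
    intro i h
    have := congrArg Complex.im h
    simp at this
  have hYd : ∀ i j, i ≠ j → Y i j = 0 := by
    intro i j hij
    have := congrFun (congrFun hDY i) j
    rw [Matrix.diagonal_mul, Matrix.diagonal_apply_ne _ hij] at this
    exact (mul_eq_zero.mp this).resolve_left (hne i)
  have hYu : Y ∈ Matrix.unitaryGroup (Fin n) ℂ := by
    have : Y = ((u⁻¹ * x * u : Matrix.unitaryGroup (Fin n) ℂ) : Matrix (Fin n) (Fin n) ℂ) := rfl
    rw [this]; exact Subtype.property _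
  have hYdiag : Y = Matrix.diagonal (fun i => Y i i) := by
    ext i j
    by_cases hij : i = j
    · subst hij; simp
    · rw [hYd i j hij, Matrix.diagonal_apply_ne _ hij]
  have hYn : ∀ i, ‖Y i i‖ = 1 := by
    intro i
    have h1 := Matrix.mem_unitaryGroup_iff.mp hYu
    rw [hYdiag, Matrix.star_eq_conjTranspose, Matrix.diagonal_conjTranspose,
      Matrix.diagonal_mul_diagonal] at h1
    have h2 := congrFun (congrFun h1 i) i
    have h5 : Y i i * (starRingEnd ℂ) (Y i i) = 1 := by simpa using h2
    rw [Complex.mul_conj, Complex.normSq_eq_norm_sq] at h5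
    have h4 : ‖Y i i‖ ^ 2 = 1 := Complex.ofReal_injective (by simpa using h5)
    exact (pow_eq_one_iff_of_nonneg (norm_nonneg _) two_ne_zero).mp h4
  refine ⟨u, fun i => ⟨Y i i, mem_sphere_zero_iff_norm.mpr (hYn i)⟩, ?_⟩
  have : (u⁻¹ * x * u : Matrix.unitaryGroup (Fin n) ℂ) = dg (fun i => ⟨Y i i, mem_sphere_zero_iff_norm.mpr (hYn i)⟩) := by
    apply Subtype.ext
    exact hYdiag
  rw [← this]; group

/-- Number of ones. -/
def wt {m : ℕ} (b : Fin m → Fin 2) : Fin (m + 1) :=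
  ⟨∑ j, (b j : ℕ), by
    have : ∑ j, (b j : ℕ) ≤ ∑ _j : Fin m, 1 := Finset.sum_le_sum (fun j _ => by omega)
    simp at this; omega⟩

lemma prod_wt {M : Type*} [CommMonoid M] {m : ℕ} (f : Fin 2 → M) (b : Fin m → Fin 2) :
    ∏ j, f (b j) = f 0 ^ (m - (wt b : ℕ)) * f 1 ^ (wt b : ℕ) := by
  have h1 : ∀ e : Fin 2, f e = f 0 ^ (1 - (e : ℕ)) * f 1 ^ (e : ℕ) := by
    intro e; fin_cases e <;> simp
  have h2 : ∑ j, (1 - (b j : ℕ)) = m - (wt b : ℕ) := by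
    have : ∑ j, (1 - (b j : ℕ)) + ∑ j, (b j : ℕ) = m := by
      rw [← Finset.sum_add_distrib]
      rw [Finset.sum_congr rfl (g := fun _ => 1) (fun j _ => by omega)]
      simp
    simp only [wt]; omega
  rw [Finset.prod_congr rfl (fun j _ => h1 (b j)), Finset.prod_mul_distrib,
    Finset.prod_pow_eq_pow_sum, Finset.prod_pow_eq_pow_sum, h2]
  rfl

lemma wt_surj {m : ℕ} (k : Fin (m + 1)) : ∃ b : Fin m → Fin 2, wt b = k := by
  refine ⟨fun j => if (j : ℕ) < k then 1 else 0, ?_⟩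
  apply Fin.ext
  simp only [wt]
  have : ∀ j : Fin m, (((if (j : ℕ) < k then 1 else 0 : Fin 2)) : ℕ) = if (j : ℕ) < k then 1 else 0 := by
    intro j; split_ifs <;> rfl
  simp only [this]
  rw [Fin.sum_univ_eq_sum_range (fun j => if j < (k : ℕ) then 1 else 0) m]
  rw [← Finset.sum_filter, Finset.sum_const, smul_eq_mul, mul_one]
  have : (Finset.range m).filter (fun j => j < (k : ℕ)) = Finset.range k := by
    ext j; simp; have := k.2; omega
  rw [this, Finset.card_range]

/-- Normalizing constants. -/
noncomputable def cst {m : ℕ} (k : Fin (m + 1)) : ℝ :=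
  (Real.sqrt ((Finset.univ.filter (fun b : Fin m → Fin 2 => wt b = k)).card))⁻¹

lemma card_pos' {m : ℕ} (k : Fin (m + 1)) :
    0 < ((Finset.univ.filter (fun b : Fin m → Fin 2 => wt b = k)).card : ℝ) := by
  obtain ⟨b, hb⟩ := wt_surj k
  have : 0 < (Finset.univ.filter (fun b : Fin m → Fin 2 => wt b = k)).card :=
    Finset.card_pos.mpr ⟨b, by simp [hb]⟩
  exact_mod_cast this

lemma cst_ne {m : ℕ} (k : Fin (m + 1)) : (cst k : ℂ) ≠ 0 := by
  have := Real.sqrt_pos.mpr (card_pos' k)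
  have : 0 < cst k := inv_pos.mpr this
  exact_mod_cast this.ne'

lemma cst_sq {m : ℕ} (k : Fin (m + 1)) :
    ((Finset.univ.filter (fun b : Fin m → Fin 2 => wt b = k)).card : ℂ) * ((cst k : ℂ) * cst k) = 1 := by
  have h := card_pos' k
  have : ((Finset.univ.filter (fun b : Fin m → Fin 2 => wt b = k)).card : ℝ) * (cst k * cst k) = 1 := by
    unfold cst
    rw [← mul_inv, Real.mul_self_sqrt h.le, mul_inv_cancel₀ h.ne']
  exact_mod_cast this

/-- Isometric embedding of the symmetric power into the tensor power. -/
noncomputable def V (m : ℕ) : Matrix (Fin m → Fin 2) (Fin (m + 1)) ℂ :=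
  fun b k => if wt b = k then (cst k : ℂ) else 0

/-- Tensor power of a matrix. -/
def T (m : ℕ) (g : Matrix (Fin 2) (Fin 2) ℂ) : Matrix (Fin m → Fin 2) (Fin m → Fin 2) ℂ :=
  fun a b => ∏ j, g (a j) (b j)

lemma V_iso (m : ℕ) : (V m)ᴴ * V m = 1 := by
  ext k l
  rw [Matrix.mul_apply]
  simp only [Matrix.conjTranspose_apply, V]
  by_cases h : k = l
  · subst h
    rw [Matrix.one_apply_eq, ← cst_sq k]
    have : ∀ b : Fin m → Fin 2, star (if wt b = k then (cst k : ℂ) else 0) * (if wt b = k then (cst k : ℂ) else 0)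
        = if wt b = k then (cst k : ℂ) * cst k else 0 := by
      intro b; split_ifs <;> simp
    simp only [this]
    rw [← Finset.sum_filter, Finset.sum_const, nsmul_eq_mul]
  · rw [Matrix.one_apply_ne h]
    apply Finset.sum_eq_zero
    intro b _
    by_cases h1 : wt b = k
    · have : wt b ≠ l := fun h2 => h (h1.symm.trans h2)
      simp [this]
    · simp [h1]

lemma T_one (m : ℕ) : T m 1 = 1 := by
  ext a b
  simp only [T]
  by_cases h : a = b
  · subst h; simp
  · rw [Matrix.one_apply_ne h]
    obtain ⟨j, hj⟩ := Function.ne_iff.mp h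
    exact Finset.prod_eq_zero (Finset.mem_univ j) (Matrix.one_apply_ne hj)

lemma T_mul (m : ℕ) (g h : Matrix (Fin 2) (Fin 2) ℂ) : T m (g * h) = T m g * T m h := by
  ext a b
  rw [Matrix.mul_apply]
  simp only [T, Matrix.mul_apply]
  rw [Finset.prod_univ_sum, Fintype.piFinset_univ]
  simp only [Finset.prod_mul_distrib]

lemma T_star (m : ℕ) (g : Matrix (Fin 2) (Fin 2) ℂ) : T m (gᴴ) = (T m g)ᴴ := by
  ext a b
  simp [T, Matrix.conjTranspose_apply]

open Polynomial in
lemma T_inv (m : ℕ) (g : Matrix (Fin 2) (Fin 2) ℂ) : ∃ R : Matrix (Fin (m + 1)) (Fin (m + 1)) ℂ, T m g * V m = V m * R := by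
  let p : Fin 2 → ℂ[X] := fun e => ∑ e' : Fin 2, C (g e e') * X ^ (e' : ℕ)
  refine ⟨Matrix.of fun l k => (cst l : ℂ)⁻¹ * (cst k * (p 0 ^ (m - (l : ℕ)) * p 1 ^ (l : ℕ)).coeff k), ?_⟩
  ext a k
  rw [Matrix.mul_apply, Matrix.mul_apply]
  have hR : ∑ l, V m a l * ((cst l : ℂ)⁻¹ * (cst k * (p 0 ^ (m - (l : ℕ)) * p 1 ^ (l : ℕ)).coeff k))
      = cst k * (p 0 ^ (m - (wt a : ℕ)) * p 1 ^ (wt a : ℕ)).coeff k := by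
    rw [Finset.sum_eq_single (wt a)]
    · simp only [V, if_true]
      rw [mul_inv_cancel_left₀ (cst_ne _)]
    · intro l _ hl; simp [V, hl.symm]
    · simp
  refine Eq.trans ?_ hR.symm
  rw [← prod_wt p a]
  simp only [p]
  rw [Finset.prod_univ_sum, Fintype.piFinset_univ, Polynomial.finsetSum_coeff, Finset.mul_sum]
  apply Finset.sum_congr rfl
  intro b _
  rw [Finset.prod_mul_distrib, Finset.prod_pow_eq_pow_sum, ← map_prod, Polynomial.coeff_C_mul_X_pow]
  simp only [V, T]
  have : (k : ℕ) = ∑ j, (b j : ℕ) ↔ wt b = k := by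
    rw [Fin.ext_iff]; simp only [wt]; exact eq_comm
  by_cases h : wt b = k
  · rw [if_pos h, if_pos (this.mpr h)]; ring
  · rw [if_neg h, if_neg (fun h' => h (this.mp h'))]; ring

lemma T_V (m : ℕ) (g : Matrix (Fin 2) (Fin 2) ℂ) : V m * ((V m)ᴴ * T m g * V m) = T m g * V m := by
  obtain ⟨R, hR⟩ := T_inv m g
  rw [Matrix.mul_assoc (V m)ᴴ, hR, ← Matrix.mul_assoc (V m)ᴴ, V_iso, Matrix.one_mul]

lemma rep_mul (m : ℕ) (g h : Matrix (Fin 2) (Fin 2) ℂ) :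
    (V m)ᴴ * T m (g * h) * V m = ((V m)ᴴ * T m g * V m) * ((V m)ᴴ * T m h * V m) := by
  rw [Matrix.mul_assoc _ (V m), T_V, T_mul]
  simp only [Matrix.mul_assoc]

/-- The symmetric power representation. -/
noncomputable def rep (m : ℕ) :
    Matrix.unitaryGroup (Fin 2) ℂ →* Matrix.unitaryGroup (Fin (m + 1)) ℂ where
  toFun g := ⟨(V m)ᴴ * T m g * V m, by
    rw [Matrix.mem_unitaryGroup_iff]
    have : star ((V m)ᴴ * T m g * V m) = (V m)ᴴ * T m (star (g : Matrix (Fin 2) (Fin 2) ℂ)) * V m := by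
      rw [Matrix.star_eq_conjTranspose, Matrix.star_eq_conjTranspose, T_star]
      simp [Matrix.conjTranspose_mul, Matrix.mul_assoc]
    rw [this, ← rep_mul, Matrix.mem_unitaryGroup_iff.mp g.2, T_one, Matrix.mul_one, V_iso]⟩
  map_one' := by
    apply Subtype.ext
    simp [T_one, V_iso]
  map_mul' g h := by
    apply Subtype.ext
    exact rep_mul m g h

lemma rep_dg (m : ℕ) (t : Fin 2 → Circle) :
    rep m (dg t) = dg (fun k => t 0 ^ (m - (k : ℕ)) * t 1 ^ (k : ℕ)) := by
  apply Subtype.ext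
  have h : T m (Matrix.diagonal (fun i => (t i : ℂ))) * V m
      = V m * Matrix.diagonal (fun k : Fin (m + 1) => ((t 0 ^ (m - (k : ℕ)) * t 1 ^ (k : ℕ) : Circle) : ℂ)) := by
    have h1 : T m (Matrix.diagonal (fun i => (t i : ℂ))) = Matrix.diagonal (fun b => ∏ j, (t (b j) : ℂ)) := by
      ext a b
      simp only [T]
      by_cases h : a = b
      · subst h; simp
      · rw [Matrix.diagonal_apply_ne _ h]
        obtain ⟨j, hj⟩ := Function.ne_iff.mp h
        exact Finset.prod_eq_zero (Finset.mem_univ j) (Matrix.diagonal_apply_ne _ hj)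
    rw [h1]
    ext b k
    rw [Matrix.diagonal_mul, Matrix.mul_diagonal, prod_wt (fun e => (t e : ℂ))]
    simp only [V]
    split_ifs with hk
    · subst hk; push_cast; ring
    · simp
  change (V m)ᴴ * T m (Matrix.diagonal (fun i => (t i : ℂ))) * V m = _
  rw [Matrix.mul_assoc, h, ← Matrix.mul_assoc, V_iso, Matrix.one_mul, dg_val]

lemma det_dg {n : ℕ} (t : Fin n → Circle) :
    (dg t : Matrix (Fin n) (Fin n) ℂ).det = ((∏ i, t i : Circle) : ℂ) := by
  rw [dg_val, Matrix.det_diagonal]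
  exact (map_prod Circle.coeHom t Finset.univ).symm

lemma mem_SU_conj {n : ℕ} (u x : Matrix.unitaryGroup (Fin n) ℂ) :
    u * x * u⁻¹ ∈ SU n ↔ x ∈ SU n := by
  simp only [SU, Set.mem_ofPred_eq]
  have h : (u : Matrix (Fin n) (Fin n) ℂ).det * (star (u : Matrix (Fin n) (Fin n) ℂ)).det = 1 := by
    rw [← Matrix.det_mul, Matrix.mem_unitaryGroup_iff.mp u.2, Matrix.det_one]
  rw [Matrix.UnitaryGroup.mul_val, Matrix.UnitaryGroup.mul_val, Matrix.UnitaryGroup.inv_val,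
    Matrix.det_mul, Matrix.det_mul, mul_right_comm]
  rw [h, one_mul]

lemma dg_mem_SU {n : ℕ} (t : Fin n → Circle) : dg t ∈ SU n ↔ ∏ i, t i = 1 := by
  simp only [SU, Set.mem_ofPred_eq]
  rw [det_dg]
  exact Circle.coe_eq_one

lemma rep_SU (m : ℕ) (g : Matrix.unitaryGroup (Fin 2) ℂ) (hg : g ∈ SU 2) : rep m g ∈ SU (m + 1) := by
  obtain ⟨u, t, rfl⟩ := diagonalize g
  rw [mem_SU_conj, dg_mem_SU, Fin.prod_univ_two] at hg
  rw [map_mul, map_mul, map_inv, mem_SU_conj, rep_dg, dg_mem_SU, Finset.prod_mul_distrib]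
  have : ∏ k : Fin (m + 1), t 0 ^ (m - (k : ℕ)) = ∏ k : Fin (m + 1), t 0 ^ (k : ℕ) := by
    rw [← Equiv.prod_comp Fin.revPerm]
    apply Finset.prod_congr rfl
    intro k _
    congr 1
    simp [Fin.val_rev]; omega
  rw [this, ← Finset.prod_mul_distrib]
  apply Finset.prod_eq_one
  intro k _
  rw [← mul_pow, hg, one_pow]

lemma wv_conj {d n : ℕ} (w : FreeGroup (Fin d)) (u x : Matrix.unitaryGroup (Fin n) ℂ)
    (hx : x ∈ wordValuesIn w (SU n)) : u * x * u⁻¹ ∈ wordValuesIn w (SU n) := by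
  obtain ⟨g, hg, rfl⟩ := hx
  refine ⟨fun i => u * g i * u⁻¹, fun i => (mem_SU_conj _ _).mpr (hg i), ?_⟩
  have : FreeGroup.lift (fun i => u * g i * u⁻¹) = (MulAut.conj u).toMonoidHom.comp (FreeGroup.lift g) := by
    ext i; simp
  rw [this]; simp

lemma wv_rep {d : ℕ} (m : ℕ) (w : FreeGroup (Fin d)) (x : Matrix.unitaryGroup (Fin 2) ℂ)
    (hx : x ∈ wordValuesIn w (SU 2)) : rep m x ∈ wordValuesIn w (SU (m + 1)) := by
  obtain ⟨g, hg, rfl⟩ := hx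
  refine ⟨fun i => rep m (g i), fun i => rep_SU m _ (hg i), ?_⟩
  have : FreeGroup.lift (fun i => rep m (g i)) = (rep m).comp (FreeGroup.lift g) := by
    ext1 i; simp
  rw [this]; simp

lemma continuous_word {d : ℕ} {G : Type*} [Group G] [TopologicalSpace G] [IsTopologicalGroup G]
    (w : FreeGroup (Fin d)) : Continuous (fun g : Fin d → G => FreeGroup.lift g w) := by
  induction w using FreeGroup.induction_on with
  | C1 => simpa using continuous_const
  | of i => simpa using continuous_apply i
  | inv_of i h => simp only [map_inv, FreeGroup.lift_apply_of]; exact (continuous_apply i).inv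
  | mul x y hx hy => simp only [map_mul]; exact hx.mul hy

lemma continuous_dg {n : ℕ} : Continuous (dg : (Fin n → Circle) → Matrix.unitaryGroup (Fin n) ℂ) := by
  refine Continuous.subtype_mk ?_ _
  refine Continuous.matrix_diagonal ?_
  refine continuous_pi fun i => ?_
  exact continuous_subtype_val.comp (continuous_apply i)

lemma exists_trace {d : ℕ} (w : FreeGroup (Fin d)) (u : Matrix.unitaryGroup (Fin 2) ℂ)
    (hu : u ∈ wordValuesIn w (SU 2)) (hd : (u : Matrix (Fin 2) (Fin 2) ℂ) = Matrix.diagonal ![Complex.I, -Complex.I])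
    (c : ℝ) (h0 : 0 ≤ c) (h2 : c ≤ 2) :
    ∃ x ∈ wordValuesIn w (SU 2), (x : Matrix (Fin 2) (Fin 2) ℂ).trace.re = c := by
  obtain ⟨g, hg, rfl⟩ := hu
  choose v t hvt using fun i => diagonalize (g i)
  have ht : ∀ i, t i 0 * t i 1 = 1 := by
    intro i
    have := hg i
    rw [hvt i, mem_SU_conj, dg_mem_SU, Fin.prod_univ_two] at this
    exact this
  let φ : Fin d → ℝ := fun i => Complex.arg (t i 0)
  let γ : ℝ → Fin d → Matrix.unitaryGroup (Fin 2) ℂ := fun s i =>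
    v i * dg ![Circle.exp (s * φ i), (Circle.exp (s * φ i))⁻¹] * (v i)⁻¹
  have hγSU : ∀ s i, γ s i ∈ SU 2 := by
    intro s i
    simp only [γ]
    rw [mem_SU_conj, dg_mem_SU, Fin.prod_univ_two]
    simp
  have hγ0 : γ 0 = 1 := by
    funext i
    have : (![1, 1] : Fin 2 → Circle) = 1 := by ext j; fin_cases j <;> rfl
    simp [γ, this]
  have hγ1 : γ 1 = g := by
    funext i
    rw [hvt i]
    simp only [γ, one_mul, φ, Circle.exp_arg]
    congr 3
    ext j; fin_cases j
    · rfl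
    · simp [eq_inv_of_mul_eq_one_right (ht i)]
  have hγc : Continuous γ := by
    refine continuous_pi fun i => ?_
    refine (continuous_const.mul (continuous_dg.comp ?_)).mul continuous_const
    refine continuous_pi fun j => ?_
    have hc : Continuous fun s : ℝ => Circle.exp (s * φ i) :=
      Circle.exp.continuous.comp (continuous_id.mul continuous_const)
    fin_cases j
    · exact hc
    · exact hc.inv
  let f : ℝ → ℝ := fun s => ((FreeGroup.lift (γ s) w : Matrix.unitaryGroup (Fin 2) ℂ) : Matrix (Fin 2) (Fin 2) ℂ).trace.re
  have hf : Continuous f :=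
    Complex.continuous_re.comp (Continuous.matrix_trace (continuous_subtype_val.comp ((continuous_word w).comp hγc)))
  have hf0 : f 0 = 2 := by
    have h1 : FreeGroup.lift (1 : Fin d → Matrix.unitaryGroup (Fin 2) ℂ) = 1 := by ext1 i; simp
    simp only [f, hγ0, h1]
    simp
  have hf1 : f 1 = 0 := by
    simp only [f, hγ1, hd]
    simp [Matrix.trace_fin_two]
  have := intermediate_value_Icc' (zero_le_one (α := ℝ)) hf.continuousOn
  rw [hf0, hf1] at this
  obtain ⟨s, -, hs⟩ := this ⟨h0, h2⟩
  exact ⟨_, ⟨γ s, hγSU s, rfl⟩, hs⟩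

/-- Swap matrix. -/
noncomputable def sw : Matrix.unitaryGroup (Fin 2) ℂ :=
  ⟨!![0, 1; 1, 0], by
    rw [Matrix.mem_unitaryGroup_iff]
    ext i j; fin_cases i <;> fin_cases j <;> simp [Matrix.mul_apply, Matrix.star_apply]⟩

lemma sw_dg (a b : Circle) : sw * dg ![a, b] * sw⁻¹ = dg ![b, a] := by
  rw [mul_inv_eq_iff_eq_mul]
  apply Subtype.ext
  rw [Matrix.UnitaryGroup.mul_val, Matrix.UnitaryGroup.mul_val, dg_val, dg_val]
  ext i j
  fin_cases i <;> fin_cases j <;> simp [sw, Matrix.mul_apply, Matrix.diagonal]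

lemma wv_theta {d : ℕ} (w : FreeGroup (Fin d)) (u : Matrix.unitaryGroup (Fin 2) ℂ)
    (hu : u ∈ wordValuesIn w (SU 2)) (hd : (u : Matrix (Fin 2) (Fin 2) ℂ) = Matrix.diagonal ![Complex.I, -Complex.I])
    (θ : ℝ) (h0 : 0 ≤ θ) (h2 : θ ≤ Real.pi / 2) :
    dg ![Circle.exp θ, (Circle.exp θ)⁻¹] ∈ wordValuesIn w (SU 2) := by
  obtain ⟨x, hx, htr⟩ := exists_trace w u hu hd (2 * Real.cos θ)
    (by have := Real.cos_nonneg_of_mem_Icc (x := θ) ⟨by linarith [Real.pi_pos], h2⟩; linarith)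
    (by have := Real.cos_le_one θ; linarith)
  obtain ⟨v, t, hvt⟩ := diagonalize x
  have hdet : t 0 * t 1 = 1 := by
    have : x ∈ SU 2 := by
      obtain ⟨g, hg, rfl⟩ := hx
      have key : ∀ w : FreeGroup (Fin d), FreeGroup.lift g w ∈ SU 2 := by
        intro w
        simp only [SU, Set.mem_ofPred_eq]
        induction w using FreeGroup.induction_on with
        | C1 => simp
        | of i => rw [FreeGroup.lift_apply_of]; exact hg i
        | inv_of i h =>
          have := hg i
          simp only [SU, Set.mem_ofPred_eq] at this
          simp [Matrix.star_eq_conjTranspose, Matrix.det_conjTranspose, this]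
        | mul a b ha hb => rw [map_mul, Matrix.UnitaryGroup.mul_val, Matrix.det_mul, ha, hb, one_mul]
      exact key w
    rw [hvt, mem_SU_conj, dg_mem_SU, Fin.prod_univ_two] at this
    exact this
  have ht1 : t 1 = (t 0)⁻¹ := eq_inv_of_mul_eq_one_right hdet
  have htt : t = ![t 0, (t 0)⁻¹] := by
    ext j; fin_cases j
    · rfl
    · simp [ht1]
  have hxd : dg ![t 0, (t 0)⁻¹] ∈ wordValuesIn w (SU 2) := by
    have := wv_conj w v⁻¹ x hx
    rw [hvt] at this
    rw [← htt]
    convert this using 1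
    group
  have hre : (t 0 : ℂ).re = Real.cos θ := by
    have h1 : (x : Matrix (Fin 2) (Fin 2) ℂ).trace = (t 0 : ℂ) + t 1 := by
      rw [hvt, Matrix.UnitaryGroup.mul_val, Matrix.trace_mul_comm, ← Matrix.UnitaryGroup.mul_val]
      rw [show v⁻¹ * (v * dg t) = dg t by group, dg_val, Matrix.trace_diagonal, Fin.sum_univ_two]
    rw [h1, ht1] at htr
    simp [Circle.coe_inv_eq_conj] at htr
    linarith
  have him : (t 0 : ℂ).im = Real.sin θ ∨ (t 0 : ℂ).im = - Real.sin θ := by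
    have h1 := Circle.normSq_coe (t 0)
    rw [Complex.normSq_apply, hre] at h1
    have h3 := Real.sin_sq_add_cos_sq θ
    apply sq_eq_sq_iff_eq_or_eq_neg.mp
    linarith
  rcases him with him | him
  · have : t 0 = Circle.exp θ := by
      apply Circle.ext
      rw [Circle.coe_exp, Complex.exp_mul_I]
      apply Complex.ext
      · simpa [Complex.cos_ofReal_re] using hre
      · simpa [Complex.cos_ofReal_re, Complex.sin_ofReal_re] using him
    rwa [this] at hxd
  · have : (t 0)⁻¹ = Circle.exp θ := by
      apply Circle.ext
      rw [Circle.coe_inv_eq_conj, Circle.coe_exp, Complex.exp_mul_I]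
      apply Complex.ext
      · simpa [Complex.cos_ofReal_re] using hre
      · simp [Complex.sin_ofReal_re, him]
    rw [← this, inv_inv, ← sw_dg]
    exact wv_conj w sw _ hxd

lemma root_sum {n : ℕ} {ζ : ℂ} (hζ : IsPrimitiveRoot ζ n) (z : ℤ) (hz : ¬ (n : ℤ) ∣ z) :
    ∑ l : Fin n, (ζ ^ z) ^ (l : ℕ) = 0 := by
  rw [Fin.sum_univ_eq_sum_range (fun l => (ζ ^ z) ^ l) n]
  have h1 : ζ ^ z ≠ 1 := fun h => hz ((hζ.zpow_eq_one_iff_dvd z).mp h)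
  rw [geom_sum_eq h1]
  have : (ζ ^ z) ^ n = 1 := by
    rw [← zpow_natCast, ← zpow_mul, mul_comm, zpow_mul, zpow_natCast, hζ.pow_eq_one, one_zpow]
  rw [this]; simp

lemma dft_shift {n : ℕ} (hn : 0 < n) (a c : Circle) (hζ : IsPrimitiveRoot (a : ℂ) n) :
    ∃ F : Matrix.unitaryGroup (Fin n) ℂ, ∀ j k : Fin n,
      ¬ (n : ℤ) ∣ (j : ℤ) - k - 1 →
      ((F * dg (fun l => c * (a⁻¹) ^ (l : ℕ)) * F⁻¹ : Matrix.unitaryGroup (Fin n) ℂ) : Matrix (Fin n) (Fin n) ℂ) j k = 0 := by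
  have ha : (a : ℂ) ≠ 0 := Circle.coe_ne_zero a
  have hnc : (n : ℂ) ≠ 0 := by exact_mod_cast hn.ne'
  let r : ℝ := (Real.sqrt n)⁻¹
  have hr : (n : ℂ) * ((r : ℂ) * r) = 1 := by
    have h : (0 : ℝ) < n := by exact_mod_cast hn
    have : (n : ℝ) * (r * r) = 1 := by
      simp only [r]
      rw [← mul_inv, Real.mul_self_sqrt h.le, mul_inv_cancel₀ h.ne']
    exact_mod_cast this
  let F0 : Matrix (Fin n) (Fin n) ℂ := Matrix.of fun j l => (r : ℂ) * (a : ℂ) ^ ((j : ℕ) * (l : ℕ))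
  have hstar : ∀ l k, (star F0) l k = (r : ℂ) * ((a : ℂ)⁻¹) ^ ((k : ℕ) * (l : ℕ)) := by
    intro l k
    have : (starRingEnd ℂ) (a : ℂ) = (a : ℂ)⁻¹ := by
      rw [← Circle.coe_inv_eq_conj, Circle.coe_inv]
    simp [F0, Matrix.star_apply, this]
  have hF : F0 ∈ Matrix.unitaryGroup (Fin n) ℂ := by
    rw [Matrix.mem_unitaryGroup_iff]
    ext j k
    rw [Matrix.mul_apply]
    simp only [hstar]
    have : ∀ l : Fin n, F0 j l * ((r : ℂ) * ((a : ℂ)⁻¹) ^ ((k : ℕ) * (l : ℕ)))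
        = (r : ℂ) * r * ((a : ℂ) ^ ((j : ℤ) - k)) ^ (l : ℕ) := by
      intro l
      simp only [F0, Matrix.of_apply]
      rw [zpow_sub₀ ha, zpow_natCast, zpow_natCast, div_pow, pow_mul, pow_mul, inv_pow, inv_pow]
      ring
    simp only [this, ← Finset.mul_sum]
    by_cases h : j = k
    · subst h
      rw [Matrix.one_apply_eq, mul_comm, ← hr]
      simp
    · rw [root_sum hζ, Matrix.one_apply_ne h, mul_zero]
      intro hd
      have h1 := j.2
      have h2 := k.2
      have : (j : ℤ) - k = 0 := Int.eq_zero_of_abs_lt_dvd hd (by rw [abs_lt]; constructor <;> omega)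
      apply h; apply Fin.ext; omega
  refine ⟨⟨F0, hF⟩, ?_⟩
  intro j k hjk
  change ((F0 * Matrix.diagonal (fun l : Fin n => ((c * (a⁻¹) ^ (l : ℕ) : Circle) : ℂ))) * star F0) j k = 0
  rw [Matrix.mul_apply]
  simp only [hstar, Matrix.mul_diagonal]
  have : ∀ l : Fin n, F0 j l * ((c * (a⁻¹) ^ (l : ℕ) : Circle) : ℂ) * ((r : ℂ) * ((a : ℂ)⁻¹) ^ ((k : ℕ) * (l : ℕ)))
        = (r : ℂ) * r * c * ((a : ℂ) ^ ((j : ℤ) - k - 1)) ^ (l : ℕ) := by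
      intro l
      simp only [F0, Matrix.of_apply]
      rw [zpow_sub₀ ha, zpow_sub₀ ha, zpow_natCast, zpow_natCast, zpow_one, div_pow, div_pow, pow_mul, pow_mul, inv_pow]
      push_cast
      rw [inv_pow, inv_pow]
      ring
  simp only [this, ← Finset.mul_sum]
  rw [root_sum hζ _ hjk, mul_zero]

lemma shift {n : ℕ} (t : Fin n → Circle) (ht : ∏ i, t i = 1) (N : Matrix.unitaryGroup (Fin n) ℂ)
    (hN : ∀ j k : Fin n, ¬ (n : ℤ) ∣ (j : ℤ) - k - 1 → (N : Matrix (Fin n) (Fin n) ℂ) j k = 0) :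
    ∃ s : Fin n → Circle, dg t = dg s * N * (dg s)⁻¹ * N⁻¹ := by
  let t' : ℕ → Circle := fun i => if h : i < n then t ⟨i, h⟩ else 1
  have htt : ∀ j : Fin n, t' j = t j := by intro j; simp [t']
  have hprod : ∏ i ∈ Finset.range n, t' i = 1 := by
    rw [← Fin.prod_univ_eq_prod_range, ← ht]
    exact Finset.prod_congr rfl fun j _ => htt j
  let s : Fin n → Circle := fun j => ∏ i ∈ Finset.range (j + 1), t' i
  have hs : ∀ j k : Fin n, (n : ℤ) ∣ (j : ℤ) - k - 1 → t j * s k = s j := by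
    intro j k hjk
    have hj := j.2
    have hk := k.2
    simp only [s]
    rw [Finset.prod_range_succ _ (j : ℕ), htt, mul_comm]
    congr 1
    by_cases h : (j : ℕ) = k + 1
    · rw [h]
    · have h3 : (j : ℤ) - k - 1 + n = 0 := by
        apply Int.eq_zero_of_abs_lt_dvd (m := (n : ℤ)) (by simpa using hjk)
        have : ¬ ((j : ℤ) - k - 1 = -n - 0 ∧ False) := by simp
        obtain ⟨q, hq⟩ := hjk
        have hq1 : q < 0 := by
          by_contra hq0
          push Not at hq0
          rcases hq0.eq_or_lt with h0 | h0
          · subst h0; omega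
          · nlinarith
        have : (n : ℤ) * q ≤ -n := by nlinarith
        rw [abs_lt]; constructor <;> omega
      have h4 : (j : ℕ) = 0 := by omega
      have h5 : (k : ℕ) + 1 = n := by omega
      rw [h4, h5, hprod]; simp
  refine ⟨s, ?_⟩
  rw [eq_mul_inv_iff_mul_eq, eq_mul_inv_iff_mul_eq]
  apply Subtype.ext
  rw [Matrix.UnitaryGroup.mul_val, Matrix.UnitaryGroup.mul_val, Matrix.UnitaryGroup.mul_val, dg_val, dg_val]
  ext j k
  rw [Matrix.mul_diagonal, Matrix.diagonal_mul, Matrix.diagonal_mul]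
  by_cases h : (n : ℤ) ∣ (j : ℤ) - k - 1
  · rw [← hs j k h]; push_cast; ring
  · rw [hN j k h]; ring

/-- If `diag(i, -i)` is both a `w₁`-value and a `w₂`-value in `SU(2)`,
then `SU(n) = w₁(SU(n)) · w₂(SU(n))` for all `n ≥ 2`. -/
theorem su_waring_two_of_diag_i {d₁ d₂ : ℕ} (w₁ : FreeGroup (Fin d₁)) (w₂ : FreeGroup (Fin d₂))
    (h : ∃ u : Matrix.unitaryGroup (Fin 2) ℂ,
      u ∈ wordValuesIn w₁ (SU 2) ∧ u ∈ wordValuesIn w₂ (SU 2) ∧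
      (u : Matrix (Fin 2) (Fin 2) ℂ) = Matrix.diagonal ![Complex.I, -Complex.I]) :
    ∀ n : ℕ, 2 ≤ n → ∀ x ∈ SU n,
      ∃ g₁ ∈ wordValuesIn w₁ (SU n), ∃ g₂ ∈ wordValuesIn w₂ (SU n), x = g₁ * g₂ := by
  intro n hn x hx
  obtain ⟨u, h1, h2, hd⟩ := h
  obtain ⟨m, rfl⟩ : ∃ m, n = m + 1 := ⟨n - 1, by omega⟩
  have hθ0 : 0 ≤ Real.pi / ((m + 1 : ℕ) : ℝ) := by positivity
  have hθ1 : Real.pi / ((m + 1 : ℕ) : ℝ) ≤ Real.pi / 2 := by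
    apply div_le_div_of_nonneg_left Real.pi_pos.le (by norm_num)
    exact_mod_cast hn
  generalize hθ : Real.pi / ((m + 1 : ℕ) : ℝ) = θ at hθ0 hθ1
  have k1 := wv_rep m w₁ _ (wv_theta w₁ u h1 hd θ hθ0 hθ1)
  have k2 := wv_rep m w₂ _ (wv_theta w₂ u h2 hd θ hθ0 hθ1)
  have k2' : (rep m (dg ![Circle.exp θ, (Circle.exp θ)⁻¹]))⁻¹ ∈ wordValuesIn w₂ (SU (m + 1)) := by
    have := wv_conj w₂ (rep m sw) _ k2
    rw [← map_inv (rep m) sw, ← map_mul, ← map_mul, sw_dg] at this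
    rw [← map_inv, ← map_inv]
    convert this using 3
    ext j; fin_cases j <;> simp
  have hrd : rep m (dg ![Circle.exp θ, (Circle.exp θ)⁻¹])
      = dg (fun l => (Circle.exp θ) ^ m * (((Circle.exp θ) ^ 2)⁻¹) ^ (l : ℕ)) := by
    rw [rep_dg]
    congr 1
    funext l
    simp only [Matrix.cons_val_zero, Matrix.cons_val_one]
    have : (Circle.exp θ) ^ m = (Circle.exp θ) ^ (m - (l : ℕ)) * (Circle.exp θ) ^ (l : ℕ) := by
      rw [← pow_add]; congr 1; omega
    rw [this]
    simp only [inv_pow]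
    rw [← pow_mul, two_mul, pow_add, mul_inv]
    group
  have hprim : IsPrimitiveRoot (((Circle.exp θ) ^ 2 : Circle) : ℂ) (m + 1) := by
    have := Complex.isPrimitiveRoot_exp (m + 1) (by omega)
    convert this using 1
    push_cast
    rw [← Complex.exp_nat_mul, ← hθ]
    congr 1
    push_cast
    ring
  obtain ⟨F, hF⟩ := dft_shift (Nat.succ_pos m) ((Circle.exp θ) ^ 2) ((Circle.exp θ) ^ m) hprim
  rw [← hrd] at hF
  obtain ⟨v, t, hvt⟩ := diagonalize x
  rw [hvt, mem_SU_conj, dg_mem_SU] at hx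
  obtain ⟨s, hs⟩ := shift t hx _ hF
  refine ⟨_, wv_conj w₁ (v * dg s * F) _ k1, _, wv_conj w₂ (v * F) _ k2', ?_⟩
  rw [hvt, hs]
  group
end

section
/- Let w ∈ F_d be a word such that every element of SU(2) is a product of two w-values. Then for every integer n ≥ 2, every element of SU(n) is a product of two w-values; that is, w(SU(n))·w(SU(n)) = SU(n). -/
open Matrix

lemma exists_diag {n : ℕ} (U : unitaryGroup (Fin n) ℂ) :
    ∃ u : unitaryGroup (Fin n) ℂ, ∃ t : Fin n → ℂ,
      (U : Matrix (Fin n) (Fin n) ℂ) = u.1 * diagonal t * star u.1 ∧ ∀ j, t j * star (t j) = 1 := by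
  obtain ⟨z, hz, hzr⟩ : ∃ z : ℂ, z * star z = 1 ∧ IsUnit (scalar (Fin n) z - U.1).det := by
    have hinf : (Metric.sphere (0:ℂ) 1).Infinite := by
      have := (isPreconnected_sphere (E := ℂ) (by simp) (0:ℂ) 1)
      apply this.infinite_of_nontrivial
      refine ⟨1, by simp, -1, by simp, ?_⟩
      norm_num
    obtain ⟨z, hz, hz2⟩ := hinf.exists_notMem_finset U.1.charpoly.roots.toFinset
    refine ⟨z, ?_, ?_⟩
    · have : ‖z‖ = 1 := by simpa using hz
      have h2 := Complex.mul_conj z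
      rw [Complex.normSq_eq_norm_sq, this] at h2
      simpa using h2
    · rw [isUnit_iff_ne_zero, ← Matrix.eval_charpoly]
      intro h0
      apply hz2
      rw [Multiset.mem_toFinset, Polynomial.mem_roots (Matrix.charpoly_monic _).ne_zero]
      exact h0
  set V : Matrix (Fin n) (Fin n) ℂ := U.1 with hV
  have hUU : V * star V = 1 := mem_unitaryGroup_iff.1 U.2
  have hUU' : star V * V = 1 := mem_unitaryGroup_iff'.1 U.2
  set B : Matrix (Fin n) (Fin n) ℂ := z • 1 - V with hB
  have hBs : scalar (Fin n) z - V = B := by rw [hB, smul_one_eq_diagonal]; rfl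
  rw [hBs] at hzr
  set A : Matrix (Fin n) (Fin n) ℂ := Complex.I • (z • 1 + V) with hA
  have hAB : A * B = B * A := by
    simp only [hA, hB]
    simp only [smul_add, Matrix.smul_mul, Matrix.mul_smul, sub_mul, mul_sub, mul_add, add_mul, one_mul, mul_one, smul_smul]
    rw [show z * (Complex.I * z) = Complex.I * z * z by ring]; rw [mul_comm z Complex.I]; abel
  set H := A * B⁻¹ with hH
  have h1 : H * B = A := by rw [hH, mul_assoc, nonsing_inv_mul _ hzr, mul_one]
  have h2 : B * H = A := by rw [hH, ← mul_assoc, ← hAB, mul_assoc, mul_nonsing_inv _ hzr, mul_one]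
  have hstar : star B * star H = star A := by rw [← star_mul, h1]
  have e1 : (-z) • (V * star B) = B := by
    rw [hB]
    simp only [star_sub, star_smul, star_one, mul_sub, hUU, Matrix.mul_smul, mul_one, smul_sub, smul_smul]
    rw [neg_mul, hz, neg_smul, neg_smul, one_smul]; abel
  have e2 : (-z) • (V * star A) = A := by
    rw [hA]
    simp only [star_add, star_smul, star_one, mul_add, hUU, Matrix.mul_smul, mul_one, smul_add, smul_smul]
    have : -z * star (Complex.I * z) = Complex.I := by
      rw [star_mul']
      have : star Complex.I = - Complex.I := Complex.conj_I
      rw [this]; linear_combination Complex.I * hz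
    rw [this]
    have : star Complex.I = - Complex.I := Complex.conj_I
    rw [this, add_comm]; congr 2; ring
  have h3 : B * star H = A := by
    rw [← e1, Matrix.smul_mul, mul_assoc, hstar, e2]
  have hHerm : H.IsHermitian := by
    have : B⁻¹ * (B * star H) = B⁻¹ * (B * H) := by rw [h3, h2]
    rw [← mul_assoc, ← mul_assoc, nonsing_inv_mul _ hzr, one_mul, one_mul] at this
    exact this
  have hsp := hHerm.spectral_theorem
  set u := hHerm.eigenvectorUnitary with hu
  have huu : u.1 * star u.1 = 1 := mem_unitaryGroup_iff.1 u.2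
  have huu' : star u.1 * u.1 = 1 := mem_unitaryGroup_iff'.1 u.2
  set D : Matrix (Fin n) (Fin n) ℂ := diagonal (fun j => (hHerm.eigenvalues j : ℂ)) with hD
  have hsp' : H = u.1 * D * star u.1 := by
    rw [hsp]; simp [Unitary.conjStarAlgAut_apply, hD]; rfl
  set W := star u.1 * V * u.1 with hW
  have hVW : V = u.1 * W * star u.1 := by
    rw [hW]; simp only [mul_assoc]; rw [huu, mul_one, ← mul_assoc, huu, one_mul]
  have h4 : D * (z • 1 - W) = Complex.I • (z • 1 + W) := by
    have : star u.1 * (H * B) * u.1 = star u.1 * A * u.1 := by rw [h1]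
    rw [hsp', hB, hA] at this
    have l : star u.1 * (u.1 * D * star u.1 * (z • 1 - V)) * u.1 = D * (z • 1 - W) := by
      rw [show star u.1 * (u.1 * D * star u.1 * (z • 1 - V)) * u.1 = (star u.1 * u.1) * D * (star u.1 * (z • 1 - V) * u.1) by simp only [mul_assoc]]
      rw [huu', one_mul, mul_sub, sub_mul, hW, Matrix.mul_smul, mul_one, Matrix.smul_mul, huu']
    rw [l] at this
    rw [this, Matrix.mul_smul, Matrix.smul_mul, mul_add, add_mul, hW, Matrix.mul_smul, mul_one, Matrix.smul_mul, huu']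
  have hWd : ∃ t, W = diagonal t := by
    refine ⟨fun j => W j j, ?_⟩
    ext j k
    by_cases hjk : j = k
    · subst hjk; simp
    · rw [diagonal_apply_ne _ hjk]
      have := congrFun (congrFun h4 j) k
      simp [hD, hjk] at this
      have h5 : ((hHerm.eigenvalues j : ℂ) + Complex.I) * W j k = 0 := by linear_combination -this
      rcases mul_eq_zero.1 h5 with h6 | h6
      · exfalso
        have := congrArg Complex.im h6
        simp at this
      · exact h6
  obtain ⟨t, ht⟩ := hWd
  refine ⟨u, t, by rw [← ht]; exact hVW, fun j => ?_⟩
  have h7 : W * star W = 1 := by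
    have : W * star W = star u.1 * (V * (u.1 * star u.1) * star V) * u.1 := by
      rw [hW]; simp only [star_mul, star_star, mul_assoc]
    rw [this, huu, mul_one, hUU, mul_one, huu']
  rw [ht, star_eq_conjTranspose, diagonal_conjTranspose, diagonal_mul_diagonal] at h7
  have := congrFun (congrFun h7 j) j
  simpa using this

noncomputable def symVec (m : ℕ) (v : Fin 2 → ℂ) : Fin (m+1) → ℂ :=
  fun k => (Real.sqrt (m.choose k) : ℂ) * (v 0 ^ (k:ℕ) * v 1 ^ (m - (k:ℕ)))

lemma symVec_inner (m : ℕ) (u v : Fin 2 → ℂ) :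
    star (symVec m u) ⬝ᵥ symVec m v = (star u ⬝ᵥ v) ^ m := by
  simp only [dotProduct, Fin.sum_univ_two]
  rw [add_pow, Finset.sum_range]
  refine Finset.sum_congr rfl fun k _ => ?_
  have h : ((Real.sqrt (m.choose k) : ℝ) : ℂ) * (Real.sqrt (m.choose k) : ℝ) = (m.choose k : ℂ) := by
    rw [← Complex.ofReal_mul, Real.mul_self_sqrt (by positivity)]; simp
  simp only [symVec, Pi.star_apply, star_mul', star_pow, Complex.star_def, Complex.conj_ofReal, mul_pow]
  rw [← h]; ring

noncomputable def symPt (i : ℕ) : Fin 2 → ℂ := ![(i : ℂ), 1]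

noncomputable def symA (m : ℕ) (g : Matrix (Fin 2) (Fin 2) ℂ) : Matrix (Fin (m+1)) (Fin (m+1)) ℂ :=
  Matrix.of fun k i => symVec m (g *ᵥ symPt i) k

lemma symA_gram (m : ℕ) (g h : Matrix (Fin 2) (Fin 2) ℂ) (i j) :
    (star (symA m g) * symA m h) i j = (star (g *ᵥ symPt i) ⬝ᵥ (h *ᵥ symPt j)) ^ m := by
  rw [← symVec_inner]; rfl

lemma symA_gram_mul (m : ℕ) (g : unitaryGroup (Fin 2) ℂ) (h k : Matrix (Fin 2) (Fin 2) ℂ) :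
    star (symA m (g.1 * h)) * symA m (g.1 * k) = star (symA m h) * symA m k := by
  ext i j
  rw [symA_gram, symA_gram]
  congr 1
  rw [star_mulVec, star_mulVec, conjTranspose_mul, dotProduct_mulVec, vecMul_vecMul,
    dotProduct_mulVec, vecMul_vecMul]
  congr 2
  have : g.1ᴴ * g.1 = 1 := mem_unitaryGroup_iff'.1 g.2
  rw [mul_assoc, ← mul_assoc g.1ᴴ, this, one_mul]

lemma symA_one (m : ℕ) : IsUnit (symA m 1).det := by
  have : symA m 1 = diagonal (fun k : Fin (m+1) => (Real.sqrt (m.choose k) : ℂ)) *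
      (vandermonde (fun i : Fin (m+1) => ((i : ℕ) : ℂ)))ᵀ := by
    ext k i
    simp [symA, symVec, symPt, vandermonde_apply]
  rw [this, det_mul, det_diagonal, det_transpose, isUnit_iff_ne_zero]
  refine mul_ne_zero (Finset.prod_ne_zero_iff.2 fun k _ => ?_) ?_
  · have : 0 < m.choose k := Nat.choose_pos (by omega)
    have : 0 < Real.sqrt (m.choose k) := Real.sqrt_pos.2 (by exact_mod_cast this)
    exact_mod_cast this.ne'
  · rw [det_vandermonde_ne_zero_iff]
    intro i j h
    exact Fin.ext (by simpa using h)

noncomputable def symM (m : ℕ) (g : Matrix (Fin 2) (Fin 2) ℂ) := symA m g * (symA m 1)⁻¹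

lemma symM_one (m : ℕ) : symM m 1 = 1 := mul_nonsing_inv _ (symA_one m)

lemma symM_star (m : ℕ) (g : unitaryGroup (Fin 2) ℂ) : star (symM m g.1) * symM m g.1 = 1 := by
  have h := symA_gram_mul m g 1 1
  rw [mul_one] at h
  have h1 := mul_nonsing_inv _ (symA_one m)
  rw [symM, star_mul, mul_assoc, ← mul_assoc (star (symA m g.1)), h, mul_assoc, h1, mul_one, ← star_mul, h1,
    star_one]

lemma symM_A (m : ℕ) (g : unitaryGroup (Fin 2) ℂ) (h : Matrix (Fin 2) (Fin 2) ℂ) :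
    symM m g.1 * symA m h = symA m (g.1 * h) := by
  have h0 := symA_gram_mul m g 1 h
  rw [mul_one] at h0
  have hA : symA m g.1 = symM m g.1 * symA m 1 := by
    rw [symM, mul_assoc, nonsing_inv_mul _ (symA_one m), mul_one]
  have hs := symM_star m g
  have hs' := mul_eq_one_comm.1 hs
  have hu : IsUnit (star (symA m 1)).det := by
    rw [star_eq_conjTranspose, det_conjTranspose]; exact (symA_one m).star
  have h2 : star (symA m 1) * (star (symM m g.1) * symA m (g.1 * h)) = star (symA m 1) * symA m h := by
    rw [← mul_assoc, ← star_mul, ← hA, h0]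
  have h3 := congrArg ((star (symA m 1))⁻¹ * ·) h2
  simp only [← mul_assoc, nonsing_inv_mul _ hu, one_mul] at h3
  rw [← h3, ← mul_assoc, hs', one_mul]

lemma symM_mul (m : ℕ) (g h : unitaryGroup (Fin 2) ℂ) :
    symM m (g.1 * h.1) = symM m g.1 * symM m h.1 := by
  rw [symM, symM.eq_def m h.1, ← mul_assoc, symM_A]

noncomputable def symRep (m : ℕ) : unitaryGroup (Fin 2) ℂ →* unitaryGroup (Fin (m+1)) ℂ where
  toFun g := ⟨symM m g.1, mem_unitaryGroup_iff'.2 (symM_star m g)⟩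
  map_one' := Subtype.ext (symM_one m)
  map_mul' g h := Subtype.ext (symM_mul m g h)

lemma symRep_diag (m : ℕ) (g : unitaryGroup (Fin 2) ℂ) (a b : ℂ) (hg : g.1 = diagonal ![a, b]) :
    (symRep m g).1 = diagonal (fun k : Fin (m+1) => a ^ (k:ℕ) * b ^ (m - (k:ℕ))) := by
  change symM m g.1 = _
  have : symA m g.1 = diagonal (fun k : Fin (m+1) => a ^ (k:ℕ) * b ^ (m - (k:ℕ))) * symA m 1 := by
    ext k i
    rw [diagonal_mul]
    simp [symA, symVec, hg, mulVec_diagonal, mul_pow]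
    ring
  rw [symM, this, mul_assoc, mul_nonsing_inv _ (symA_one m), mul_one]

lemma symRep_diag_det (m : ℕ) (a b : ℂ) (hab : a * b = 1) :
    (diagonal (fun k : Fin (m+1) => a ^ (k:ℕ) * b ^ (m - (k:ℕ)))).det = 1 := by
  rw [det_diagonal, Finset.prod_mul_distrib]
  have : ∏ k : Fin (m+1), b ^ (m - (k:ℕ)) = ∏ k : Fin (m+1), b ^ (k:ℕ) := by
    rw [← Equiv.prod_comp Fin.revPerm]
    refine Finset.prod_congr rfl fun k _ => ?_
    congr 1
    simp [Fin.val_rev]; omega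
  rw [this, ← Finset.prod_mul_distrib]
  simp [← mul_pow, hab]

lemma wordValuesIn_map {d : ℕ} {G H : Type*} [Group G] [Group H] (w : FreeGroup (Fin d))
    {S : Set G} {S' : Set H} (φ : G →* H) (hφ : ∀ g ∈ S, φ g ∈ S') {x : G}
    (hx : x ∈ wordValuesIn w S) : φ x ∈ wordValuesIn w S' := by
  obtain ⟨g, hg, rfl⟩ := hx
  refine ⟨fun i => φ (g i), fun i => hφ _ (hg i), ?_⟩
  have : FreeGroup.lift (fun i => φ (g i)) = φ.comp (FreeGroup.lift g) := by
    ext i; simp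
  rw [this]; rfl

lemma SU_conj_s6 {n : ℕ} (u : unitaryGroup (Fin n) ℂ) {g : unitaryGroup (Fin n) ℂ} (hg : g ∈ SU n) :
    MulAut.conj u g ∈ SU n := by
  change det _ = 1
  change det g.1 = 1 at hg
  rw [MulAut.conj_apply, UnitaryGroup.mul_val, UnitaryGroup.mul_val, det_mul, det_mul, hg, mul_one,
    ← det_mul, ← UnitaryGroup.mul_val, mul_inv_cancel]
  simp

lemma wordValuesIn_conj {d n : ℕ} (w : FreeGroup (Fin d)) (u : unitaryGroup (Fin n) ℂ)
    {x : unitaryGroup (Fin n) ℂ} (hx : x ∈ wordValuesIn w (SU n)) :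
    u * x * u⁻¹ ∈ wordValuesIn w (SU n) :=
  wordValuesIn_map w (MulAut.conj u).toMonoidHom (fun _ hg => SU_conj_s6 u hg) hx

def suGroup (n : ℕ) : Subgroup (unitaryGroup (Fin n) ℂ) where
  carrier := SU n
  one_mem' := by change det _ = 1; simp
  mul_mem' {a b} ha hb := by
    change det _ = 1
    change det a.1 = 1 at ha
    change det b.1 = 1 at hb
    rw [UnitaryGroup.mul_val, det_mul, ha, hb, mul_one]
  inv_mem' {a} ha := by
    change det _ = 1
    change det a.1 = 1 at ha
    rw [UnitaryGroup.inv_val]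
    simp only [star_eq_conjTranspose]
    rw [det_conjTranspose, ha, star_one]

lemma wordValuesIn_sub {d n : ℕ} (w : FreeGroup (Fin d)) {x} (hx : x ∈ wordValuesIn w (SU n)) :
    x ∈ SU n := by
  obtain ⟨g, hg, rfl⟩ := hx
  change FreeGroup.lift g w ∈ suGroup n
  have : (FreeGroup.lift g).range ≤ suGroup n := by
    apply FreeGroup.range_lift_le
    rintro _ ⟨i, rfl⟩; exact hg i
  exact this ⟨w, rfl⟩

lemma SU2_form {g : unitaryGroup (Fin 2) ℂ} (hg : g ∈ SU 2) :
    g.1 1 1 = star (g.1 0 0) ∧ g.1 0 1 = - star (g.1 1 0) := by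
  change det g.1 = 1 at hg
  have h1 : adjugate g.1 * g.1 = 1 := by rw [adjugate_mul, hg, one_smul]
  have h2 : g.1 * star g.1 = 1 := mem_unitaryGroup_iff.1 g.2
  have h3 : adjugate g.1 = star g.1 := left_inv_eq_right_inv h1 h2
  rw [adjugate_fin_two] at h3
  have a := congrFun (congrFun h3 0) 0
  have b := congrFun (congrFun h3 0) 1
  simp [star_eq_conjTranspose] at a b
  refine ⟨by simpa using a, by rw [← neg_eq_iff_eq_neg]; simpa using b⟩

abbrev S3 := Metric.sphere (0 : EuclideanSpace ℂ (Fin 2)) 1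

lemma S3_eq (v : EuclideanSpace ℂ (Fin 2)) (hv : v ∈ Metric.sphere (0 : EuclideanSpace ℂ (Fin 2)) 1) :
    v 0 * star (v 0) + v 1 * star (v 1) = 1 := by
  have h : ‖v‖ = 1 := by simpa using hv
  have h2 := EuclideanSpace.norm_sq_eq v
  rw [h, Fin.sum_univ_two] at h2
  have e := Complex.mul_conj (v 0)
  have e1 := Complex.mul_conj (v 1)
  rw [Complex.normSq_eq_norm_sq] at e e1
  rw [Complex.star_def, e, e1, ← Complex.ofReal_add, ← h2]; simp

noncomputable def qMap (v : S3) : unitaryGroup (Fin 2) ℂ :=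
  ⟨!![v.1 0, - star (v.1 1); v.1 1, star (v.1 0)], by
    have h := S3_eq v.1 v.2
    rw [Complex.star_def] at h
    rw [mem_unitaryGroup_iff]
    ext i j
    fin_cases i <;> fin_cases j <;> simp [star_eq_conjTranspose, Matrix.mul_apply, Fin.sum_univ_two]
    · linear_combination h
    · ring
    · ring
    · linear_combination h⟩

lemma qMap_mem (v : S3) : qMap v ∈ SU 2 := by
  change det !![v.1 0, - star (v.1 1); v.1 1, star (v.1 0)] = 1
  rw [det_fin_two_of]
  linear_combination S3_eq v.1 v.2

lemma qMap_cont : Continuous qMap := by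
  refine Continuous.subtype_mk ?_ _
  refine continuous_matrix fun i j => ?_
  fin_cases i <;> fin_cases j <;> simp <;> fun_prop

lemma qMap_surj {g} (hg : g ∈ SU 2) : ∃ v, qMap v = g := by
  obtain ⟨h1, h2⟩ := SU2_form hg
  have hd : det g.1 = 1 := hg
  rw [det_fin_two, h1, h2] at hd
  refine ⟨⟨WithLp.toLp 2 ![g.1 0 0, g.1 1 0], ?_⟩, ?_⟩
  · rw [mem_sphere_zero_iff_norm, EuclideanSpace.norm_eq, Fin.sum_univ_two]
    simp
    have e := Complex.mul_conj (g.1 0 0)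
    have e1 := Complex.mul_conj (g.1 1 0)
    rw [Complex.normSq_eq_norm_sq] at e e1
    rw [← Complex.ofReal_inj, Complex.ofReal_add, ← e, ← e1]
    simp at hd ⊢
    linear_combination hd
  · apply Subtype.ext
    ext i j
    fin_cases i <;> fin_cases j <;> simp [qMap]
    · simpa using h2.symm
    · simpa using h1.symm

lemma lift_cont {d : ℕ} {G X : Type*} [Group G] [TopologicalSpace G] [IsTopologicalGroup G]
    [TopologicalSpace X] (w : FreeGroup (Fin d)) (g : X → Fin d → G) (hg : ∀ i, Continuous fun x => g x i) :
    Continuous fun x => FreeGroup.lift (g x) w := by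
  induction w using FreeGroup.induction_on with
  | C1 => simpa using continuous_const
  | of i => simpa using hg i
  | inv_of i _ => simpa using Continuous.fun_inv (hg i)
  | mul a b ha hb => simpa using Continuous.fun_mul ha hb

lemma exists_re {d : ℕ} (w : FreeGroup (Fin d))
    (h : ∀ x ∈ SU 2, ∃ a ∈ wordValuesIn w (SU 2), ∃ b ∈ wordValuesIn w (SU 2), x = a * b)
    (r : ℝ) (hr : 0 ≤ r) (hr1 : r ≤ 1) : ∃ g ∈ wordValuesIn w (SU 2), (g.1 0 0).re = r := by
  have hneg : ∃ g ∈ wordValuesIn w (SU 2), (g.1 0 0).re ≤ 0 := by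
    obtain ⟨a, ha, b, hb, hab⟩ := h (-1) (by change det (-1 : Matrix (Fin 2) (Fin 2) ℂ) = 1; simp [det_fin_two])
    have e : b = - a⁻¹ := by
      rw [eq_comm, neg_eq_iff_eq_neg, inv_eq_iff_mul_eq_one]; rw [mul_neg, ← hab, neg_neg]
    have e2 : (b.1 0 0).re = - (a.1 0 0).re := by
      rw [e]; change ((-(star a.1)) 0 0).re = _; simp [star_eq_conjTranspose]
    by_cases h0 : (a.1 0 0).re ≤ 0
    · exact ⟨a, ha, h0⟩
    · exact ⟨b, hb, by rw [e2]; linarith⟩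
  have hone : ∃ v, qMap v = 1 := qMap_surj (suGroup 2).one_mem
  obtain ⟨v1, hv1⟩ := hone
  obtain ⟨g, ⟨y, hy, rfl⟩, hg2⟩ := hneg
  choose v hv using fun i => qMap_surj (hy i)
  have : PreconnectedSpace S3 := by
    apply Subtype.preconnectedSpace
    apply isPreconnected_sphere
    rw [← Module.finrank_eq_rank, ← Module.finrank_mul_finrank ℝ ℂ]
    simp
  let f : (Fin d → S3) → ℝ := fun x => ((FreeGroup.lift (fun i => qMap (x i)) w).1 0 0).re
  have hf : Continuous f := by
    have := lift_cont w (fun (x : Fin d → S3) i => qMap (x i)) (fun i => qMap_cont.comp (continuous_apply i))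
    exact Complex.continuous_re.comp ((continuous_subtype_val.comp this).matrix_elem 0 0)
  have : r ∈ Set.range f := by
    apply mem_range_of_exists_le_of_exists_ge hf
    · refine ⟨v, ?_⟩
      simp only [f, hv]
      exact hg2.trans hr
    · refine ⟨fun _ => v1, ?_⟩
      simp only [f, hv1]
      have : FreeGroup.lift (fun _ : Fin d => (1 : unitaryGroup (Fin 2) ℂ)) = 1 := by ext i; simp
      rw [this]; simpa using hr1
  obtain ⟨x, hx⟩ := this
  exact ⟨_, ⟨_, fun i => qMap_mem _, rfl⟩, hx⟩

lemma diag_mem {n : ℕ} (t : Fin n → ℂ) (ht : ∀ j, t j * star (t j) = 1) :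
    diagonal t ∈ unitaryGroup (Fin n) ℂ := by
  rw [mem_unitaryGroup_iff, star_eq_conjTranspose, diagonal_conjTranspose, diagonal_mul_diagonal,
    ← diagonal_one]
  congr 1; ext j; simpa using ht j

def swapU : unitaryGroup (Fin 2) ℂ := ⟨!![0, 1; 1, 0], by
  rw [mem_unitaryGroup_iff]
  ext i j
  fin_cases i <;> fin_cases j <;> simp [star_eq_conjTranspose, Matrix.mul_apply, Fin.sum_univ_two]⟩

lemma SU2_conj_diag {g : unitaryGroup (Fin 2) ℂ} (hg : g ∈ SU 2) (D : unitaryGroup (Fin 2) ℂ) (z : ℂ)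
    (hz : z * star z = 1) (hD : D.1 = diagonal ![z, star z]) (hre : (g.1 0 0).re = z.re) :
    ∃ u : unitaryGroup (Fin 2) ℂ, D = u * g * u⁻¹ := by
  obtain ⟨u, t, hgt, ht⟩ := exists_diag g
  have huu : u.1 * star u.1 = 1 := mem_unitaryGroup_iff.1 u.2
  have huu' : star u.1 * u.1 = 1 := mem_unitaryGroup_iff'.1 u.2
  have hdet : t 0 * t 1 = 1 := by
    have h : det g.1 = 1 := hg
    rw [hgt, det_mul, det_mul, mul_right_comm, ← det_mul, huu] at h
    simpa [Fin.prod_univ_two] using h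
  have htr : t 0 + t 1 = z + star z := by
    have h : trace g.1 = z + star z := by
      rw [trace_fin_two, (SU2_form hg).1]
      simp only [Complex.star_def, Complex.add_conj, hre]
    rw [hgt, mul_assoc, trace_mul_comm, mul_assoc, huu', mul_one] at h
    simpa [trace_fin_two] using h
  have key : (t 0 - z) * (t 0 - star z) = 0 := by
    linear_combination t 0 * htr - hdet + hz
  have hg' : star u.1 * g.1 * u.1 = diagonal t := by
    rw [hgt]; simp only [mul_assoc]; rw [huu', mul_one, ← mul_assoc, huu', one_mul]
  have hst : ∀ D' : unitaryGroup (Fin 2) ℂ, D'.1 = diagonal t → D' = u⁻¹ * g * (u⁻¹)⁻¹ := by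
    intro D' h
    apply Subtype.ext
    rw [h, inv_inv]; exact hg'.symm
  rcases mul_eq_zero.1 key with h0 | h0
  · have h1 : t 0 = z := sub_eq_zero.1 h0
    have h2 : t 1 = star z := by linear_combination htr - h1
    refine ⟨u⁻¹, hst D ?_⟩
    rw [hD]; congr 1; ext i; fin_cases i <;> simp [h1, h2]
  · have h1 : t 0 = star z := sub_eq_zero.1 h0
    have h2 : t 1 = z := by linear_combination htr - h1
    have := hst (swapU⁻¹ * D * swapU) (by
      change star swapU.1 * D.1 * swapU.1 = _
      rw [hD]
      ext i j
      fin_cases i <;> fin_cases j <;>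
        simp [swapU, star_eq_conjTranspose, Matrix.mul_apply, Fin.sum_univ_two, h1, h2])
    refine ⟨swapU * u⁻¹, ?_⟩
    have h3 : D = swapU * (swapU⁻¹ * D * swapU) * swapU⁻¹ := by group
    rw [h3, this]; group

lemma diag_word {d : ℕ} (w : FreeGroup (Fin d))
    (h : ∀ x ∈ SU 2, ∃ a ∈ wordValuesIn w (SU 2), ∃ b ∈ wordValuesIn w (SU 2), x = a * b)
    (z : ℂ) (hz : z * star z = 1) (hre : 0 ≤ z.re) (D : unitaryGroup (Fin 2) ℂ)
    (hD : D.1 = diagonal ![z, star z]) : D ∈ wordValuesIn w (SU 2) := by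
  have h1 : z.re ≤ 1 := by
    have e := Complex.mul_conj z
    rw [← Complex.star_def, hz] at e
    have e' : Complex.normSq z = 1 := by exact_mod_cast e.symm
    rw [Complex.normSq_apply] at e'
    nlinarith [mul_self_nonneg z.im]
  obtain ⟨g, hg, hgr⟩ := exists_re w h z.re hre h1
  obtain ⟨u, rfl⟩ := SU2_conj_diag (wordValuesIn_sub w hg) D z hz hD hgr
  exact wordValuesIn_conj w u hg

lemma symRep_SU (m : ℕ) {g : unitaryGroup (Fin 2) ℂ} (hg : g ∈ SU 2) : symRep m g ∈ SU (m+1) := by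
  obtain ⟨u, t, hgt, ht⟩ := exists_diag g
  have huu : u.1 * star u.1 = 1 := mem_unitaryGroup_iff.1 u.2
  let D : unitaryGroup (Fin 2) ℂ := ⟨diagonal t, diag_mem t ht⟩
  have hgD : g = u * D * u⁻¹ := Subtype.ext hgt
  have hdet : t 0 * t 1 = 1 := by
    have h : det g.1 = 1 := hg
    rw [hgt, det_mul, det_mul, mul_right_comm, ← det_mul, huu] at h
    simpa [Fin.prod_univ_two] using h
  have hD : symRep m D ∈ SU (m+1) := by
    change det _ = 1
    rw [symRep_diag m D (t 0) (t 1) (by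
      change diagonal t = _
      congr 1; ext i; fin_cases i <;> rfl)]
    exact symRep_diag_det m _ _ hdet
  rw [hgD, map_mul, map_mul, map_inv]
  exact SU_conj_s6 _ hD

noncomputable def dft (m : ℕ) (ω : ℂ) : Matrix (Fin (m+1)) (Fin (m+1)) ℂ :=
  Matrix.of fun j k => ((Real.sqrt (m+1 : ℝ))⁻¹ : ℝ) * ω ^ ((j:ℕ) * (k:ℕ))

lemma dft_mem (m : ℕ) (ω : ℂ) (hω : IsPrimitiveRoot ω (m+1)) (hω1 : ω * star ω = 1) :
    dft m ω ∈ unitaryGroup (Fin (m+1)) ℂ := by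
  rw [mem_unitaryGroup_iff]
  have hω0 : ω ≠ 0 := left_ne_zero_of_mul_eq_one hω1
  have hs : star ω = ω⁻¹ := eq_inv_of_mul_eq_one_right hω1
  have hc : (((Real.sqrt (m+1 : ℝ))⁻¹ : ℝ) : ℂ) * ((Real.sqrt (m+1 : ℝ))⁻¹ : ℝ) * (m+1 : ℂ) = 1 := by
    have hp : (0:ℝ) < m + 1 := by positivity
    have : (Real.sqrt (m+1 : ℝ))⁻¹ * (Real.sqrt (m+1 : ℝ))⁻¹ * (m+1 : ℝ) = 1 := by
      rw [← mul_inv, Real.mul_self_sqrt hp.le, inv_mul_cancel₀ hp.ne']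
    exact_mod_cast this
  ext j l
  have e : (dft m ω * star (dft m ω)) j l = (((Real.sqrt (m+1 : ℝ))⁻¹ : ℝ) : ℂ) * ((Real.sqrt (m+1 : ℝ))⁻¹ : ℝ)
      * ∑ k ∈ Finset.range (m+1), (ω ^ (j:ℕ) * (ω⁻¹) ^ (l:ℕ)) ^ k := by
    rw [Matrix.mul_apply, Finset.sum_range, Finset.mul_sum]
    refine Finset.sum_congr rfl fun k _ => ?_
    rw [star_apply]
    simp only [dft, of_apply, star_mul', star_pow, hs, Complex.star_def, Complex.conj_ofReal]
    rw [mul_pow, ← pow_mul, ← pow_mul]; ring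
  rw [e]
  by_cases hjl : j = l
  · subst hjl
    rw [← mul_pow, mul_inv_cancel₀ hω0]
    simpa using hc
  · rw [one_apply_ne hjl]
    have hne : ω ^ (j:ℕ) * (ω⁻¹) ^ (l:ℕ) ≠ 1 := by
      intro h1
      rw [inv_pow, mul_inv_eq_one₀ (pow_ne_zero _ hω0)] at h1
      exact hjl (Fin.ext (hω.pow_inj j.2 l.2 h1))
    have hpow : (ω ^ (j:ℕ) * (ω⁻¹) ^ (l:ℕ)) ^ (m+1) = 1 := by
      rw [mul_pow, ← pow_mul, ← pow_mul, mul_comm (j:ℕ), mul_comm (l:ℕ), pow_mul, pow_mul, inv_pow, hω.pow_eq_one]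
      simp
    rw [geom_sum_eq hne, hpow]; simp

/-- the monomial cyclic matrix -/
def cyc (m : ℕ) (c : ℂ) : Matrix (Fin (m+1)) (Fin (m+1)) ℂ :=
  Matrix.of fun j l => if l = j + 1 then c else 0

lemma cyc_dft (m : ℕ) (z : ℂ) (hω : (z^2)^(m+1) = 1) (hz : z * star z = 1) :
    cyc m (star z ^ m) * dft m (z^2) =
      dft m (z^2) * diagonal (fun k : Fin (m+1) => z ^ (k:ℕ) * star z ^ (m - (k:ℕ))) := by
  ext j k
  rw [mul_diagonal, Matrix.mul_apply]
  simp only [cyc, of_apply, ite_mul, zero_mul, Finset.sum_ite_eq', Finset.sum_ite_eq, Finset.mem_univ, if_true]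
  simp only [dft, of_apply]
  have h1 : (z^2) ^ (((j+1 : Fin (m+1)) : ℕ) * (k:ℕ)) = (z^2) ^ (((j:ℕ)+1) * (k:ℕ)) := by
    rw [pow_mul, pow_mul, Fin.val_add_one]
    split_ifs with hj
    · subst hj; simp [hω]
    · rfl
  have h2 : star z ^ m * z ^ (2 * (k:ℕ)) = z ^ (k:ℕ) * star z ^ (m - (k:ℕ)) := by
    have hk : m = (m - (k:ℕ)) + k := by omega
    have : star z ^ m = star z ^ (m - (k:ℕ)) * star z ^ (k:ℕ) := by rw [← pow_add, ← hk]
    rw [this]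
    have h3 : z ^ (k:ℕ) * star z ^ (k:ℕ) = 1 := by rw [← mul_pow, hz, one_pow]
    rw [two_mul, pow_add]
    linear_combination star z ^ (m - (k:ℕ)) * z ^ (k:ℕ) * h3
  rw [h1, add_mul, one_mul, pow_add, ← h2, ← pow_mul z 2 (k:ℕ)]
  ring

lemma exists_s (m : ℕ) (t : Fin (m+1) → ℂ) (ht : ∀ j, t j * star (t j) = 1) (hp : ∏ j, t j = 1) :
    ∃ s : Fin (m+1) → ℂ, (∀ j, s j * star (s j) = 1) ∧ ∀ j, t j * s j = s (j+1) := by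
  let tt : ℕ → ℂ := fun i => if h : i < m+1 then t ⟨i, h⟩ else 1
  have htt : ∀ j : Fin (m+1), tt j = t j := fun j => dif_pos j.2
  refine ⟨fun j => ∏ i ∈ Finset.range j, tt i, fun j => ?_, fun j => ?_⟩
  · simp only [star_prod]
    rw [← Finset.prod_mul_distrib]
    refine Finset.prod_eq_one fun i hi => ?_
    have hi' : i < m + 1 := by have := Finset.mem_range.1 hi; omega
    simp only [tt, hi', dif_pos]; exact ht _
  · dsimp only
    rw [← htt, mul_comm, ← Finset.prod_range_succ, Fin.val_add_one]
    split_ifs with hj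
    · subst hj
      rw [Fin.val_last, Finset.prod_range, Finset.range_zero, Finset.prod_empty, ← hp]
      exact Finset.prod_congr rfl fun i _ => htt i
    · rfl

lemma goto_mat (m : ℕ) (c : ℂ) (t s : Fin (m+1) → ℂ) (h : ∀ j, t j * s j = s (j+1)) :
    diagonal t * diagonal s * cyc m c = cyc m c * diagonal s := by
  ext j l
  rw [diagonal_mul_diagonal, diagonal_mul, mul_diagonal, h]
  simp only [cyc, of_apply]
  split_ifs with hl
  · rw [hl, mul_comm]
  · simp

theorem su_waring_square {d : ℕ} (w : FreeGroup (Fin d))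
    (h : ∀ x ∈ SU 2, ∃ a ∈ wordValuesIn w (SU 2), ∃ b ∈ wordValuesIn w (SU 2), x = a * b) :
    ∀ n : ℕ, 2 ≤ n → ∀ x ∈ SU n,
      ∃ a ∈ wordValuesIn w (SU n), ∃ b ∈ wordValuesIn w (SU n), x = a * b := by
  intro n hn x hx
  obtain ⟨m, rfl⟩ : ∃ m, n = m + 1 := ⟨n - 1, by omega⟩
  -- the root of unity
  have hnpos : (0:ℝ) < ((m + 1 : ℕ) : ℝ) := by positivity
  set θ : ℝ := Real.pi / ((m + 1 : ℕ) : ℝ) with hθ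
  set z : ℂ := Complex.exp (θ * Complex.I) with hzdef
  have hz : z * star z = 1 := by
    rw [Complex.star_def, Complex.mul_conj, Complex.normSq_eq_norm_sq, hzdef,
      Complex.norm_exp_ofReal_mul_I]; simp
  have hre : 0 ≤ z.re := by
    rw [hzdef, Complex.exp_ofReal_mul_I_re]
    apply Real.cos_nonneg_of_neg_pi_div_two_le_of_le
    · have : 0 ≤ θ := by positivity
      linarith [Real.pi_pos]
    · rw [hθ]
      apply div_le_div_of_nonneg_left Real.pi_pos.le (by norm_num)
      exact_mod_cast hn
  have hprim : IsPrimitiveRoot (z^2) (m+1) := by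
    have := Complex.isPrimitiveRoot_exp (m+1) (by omega)
    convert this using 1
    rw [hzdef, ← Complex.exp_nat_mul]
    congr 1
    rw [hθ]; push_cast; ring
  have hω1 : z^2 * star (z^2) = 1 := by rw [star_pow, ← mul_pow, hz, one_pow]
  -- the element of SU(2) and its inverse
  let D : unitaryGroup (Fin 2) ℂ := ⟨diagonal ![z, star z], diag_mem _ (by
    intro j; fin_cases j
    · simpa using hz
    · simpa [mul_comm] using hz)⟩
  have hD : D ∈ wordValuesIn w (SU 2) := diag_word w h z hz hre D rfl
  have hDi : D⁻¹ ∈ wordValuesIn w (SU 2) := by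
    refine diag_word w h (star z) (by rw [star_star, mul_comm]; exact hz) (by simpa using hre) _ ?_
    change star (diagonal ![z, star z]) = _
    rw [star_eq_conjTranspose, diagonal_conjTranspose]
    congr 1; ext j; fin_cases j <;> simp
  have hE := wordValuesIn_map w (symRep m) (fun g hg => symRep_SU m hg) hD
  have hEi := wordValuesIn_map w (symRep m) (fun g hg => symRep_SU m hg) hDi
  have hEd := symRep_diag m D z (star z) rfl
  rw [map_inv] at hEi
  set E := symRep m D with hEdef
  let F : unitaryGroup (Fin (m+1)) ℂ := ⟨dft m (z^2), dft_mem m _ hprim hω1⟩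
  set Γ := F * E * F⁻¹ with hΓ
  have hΓw : Γ ∈ wordValuesIn w (SU (m+1)) := wordValuesIn_conj w F hE
  have hΓi : Γ⁻¹ ∈ wordValuesIn w (SU (m+1)) := by
    have := wordValuesIn_conj w F hEi
    rwa [show F * E⁻¹ * F⁻¹ = Γ⁻¹ by rw [hΓ]; group] at this
  have hΓm : Γ.1 = cyc m (star z ^ m) := by
    change dft m (z^2) * E.1 * star (dft m (z^2)) = _
    rw [hEd, ← cyc_dft m z hprim.pow_eq_one hz, mul_assoc, mem_unitaryGroup_iff.1 F.2, mul_one]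
  -- diagonalize x
  obtain ⟨u, t, hxt, ht⟩ := exists_diag x
  have huu : u.1 * star u.1 = 1 := mem_unitaryGroup_iff.1 u.2
  have hdet : ∏ j, t j = 1 := by
    have h : det x.1 = 1 := hx
    rw [hxt, det_mul, det_mul, mul_right_comm, ← det_mul, huu] at h
    simpa using h
  obtain ⟨s, hs, hts⟩ := exists_s m t ht hdet
  let T : unitaryGroup (Fin (m+1)) ℂ := ⟨diagonal t, diag_mem t ht⟩
  let S : unitaryGroup (Fin (m+1)) ℂ := ⟨diagonal s, diag_mem s hs⟩
  have hxT : x = u * T * u⁻¹ := Subtype.ext hxt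
  have hTS : T * S * Γ = Γ * S := by
    apply Subtype.ext
    change diagonal t * diagonal s * Γ.1 = Γ.1 * diagonal s
    rw [hΓm]; exact goto_mat m _ t s hts
  refine ⟨u * Γ * u⁻¹, wordValuesIn_conj w u hΓw, (u * S) * Γ⁻¹ * (u * S)⁻¹,
    wordValuesIn_conj w (u * S) hΓi, ?_⟩
  have hT : T = Γ * S * Γ⁻¹ * S⁻¹ := by rw [← hTS]; group
  rw [hxT, hT]; group
end
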